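/- For every r > 0 there exists a constant C = C(r) > 0, independent of f, x, n and d, with the following property. Let d ≥ 3 be an integer, x ∈ S^d, δ > 0, and f ∈ C(S^d) be such that ‖f‖ := ‖f‖_∞ + min_{P ∈ Π_r^d} max_{y ∈ B(x,δ)} |f(y)−P(y)|/|x−y|_{d+1}^r < ∞. Let n be an integer with nd ≥ (d+r+1)² and δ_n := √(16 r (log n)/n) ≤ δ, and let ν ∈ MZQ(d; 2(d+2)n). Then | f(x) − ∫_{B(x,δ_n)} Φ_{d;n,r}(x·y) f(y) dν(y) | ≤ C · d^{1/6} · dim(Π_{2(d+2)n}^d)^{−r/d} · ‖f‖ · |||ν|||_{d;2(d+2)n}; that is, f(x) is approximated with this accuracy using only the values of f on the spherical cap B(x, δ_n). -/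

import Mathlib

noncomputable section

open MeasureTheory Real Set
open scoped RealInnerProductSpace

/-- Value at `x` of the orthonormalized Jacobi polynomial `p_n^{(α,β)}`. -/
def jacobiP (α β : ℝ) (n : ℕ) (x : ℝ) : ℝ :=
  Real.sqrt ((2 * (n : ℝ) + α + β + 1) / 2 ^ (α + β + 1) *
      (Real.Gamma ((n : ℝ) + α + β + 1) * (n.factorial : ℝ) /
        (Real.Gamma ((n : ℝ) + α + 1) * Real.Gamma ((n : ℝ) + β + 1)))) *
    (Real.Gamma (α + n + 1) / ((n.factorial : ℝ) * Real.Gamma (α + β + n + 1))) *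
    ∑ m ∈ Finset.range (n + 1),
      (n.choose m : ℝ) * (Real.Gamma (α + β + n + m + 1) / Real.Gamma (α + m + 1)) *
        ((x - 1) / 2) ^ m

/-- The kernel `K_n^{(α,β)}(x) = Σ_{ℓ<n} p_ℓ^{(α,β)}(1) p_ℓ^{(α,β)}(x)`. -/
def jacobiK (α β : ℝ) (n : ℕ) (x : ℝ) : ℝ :=
  ∑ ℓ ∈ Finset.range n, jacobiP α β ℓ 1 * jacobiP α β ℓ x

/-- The unit sphere `S^d ⊂ ℝ^{d+1}`. -/
abbrev Sph (d : ℕ) := Metric.sphere (0 : EuclideanSpace ℝ (Fin (d + 1))) 1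

/-- The rotation invariant Riemannian volume probability measure `μ_d^*` on `S^d`. -/
def sphMeasure (d : ℕ) : Measure (Sph d) :=
  ((volume : Measure (EuclideanSpace ℝ (Fin (d + 1)))).toSphere Set.univ)⁻¹ •
    (volume : Measure (EuclideanSpace ℝ (Fin (d + 1)))).toSphere

/-- `f : S^d → ℝ` is the restriction to the sphere of an algebraic polynomial in `d+1`
variables of total degree `< n`, i.e. `f ∈ Π_n^d`. -/
def IsSphPoly (d : ℕ) (n : ℝ) (f : Sph d → ℝ) : Prop :=
  ∃ p : MvPolynomial (Fin (d + 1)) ℝ, (p.totalDegree : ℝ) < n ∧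
    ∀ y : Sph d, f y = MvPolynomial.eval (fun i => (y : EuclideanSpace ℝ (Fin (d + 1))) i) p

/-- Integral of `f` with respect to a signed measure (via the Jordan decomposition). -/
def sInt {X : Type*} [MeasurableSpace X] (ν : SignedMeasure X) (f : X → ℝ) : ℝ :=
  (∫ x, f x ∂ν.toJordanDecomposition.posPart) - ∫ x, f x ∂ν.toJordanDecomposition.negPart

/-- Integral of `f` over a set `s` with respect to a signed measure. -/
def sIntOn {X : Type*} [MeasurableSpace X] (ν : SignedMeasure X) (s : Set X) (f : X → ℝ) : ℝ :=
  (∫ x in s, f x ∂ν.toJordanDecomposition.posPart) -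
    ∫ x in s, f x ∂ν.toJordanDecomposition.negPart

/-- `ν` is a quadrature measure of order `n` on `S^d`. -/
def IsQuadrature (d : ℕ) (n : ℝ) (ν : SignedMeasure (Sph d)) : Prop :=
  ∀ f : Sph d → ℝ, IsSphPoly d n f → sInt ν f = ∫ y, f y ∂sphMeasure d

/-- `ν` satisfies the Marcinkiewicz-Zygmund inequality of order `n` with constant `c`;
`ν ∈ MZ(d;n)` means this holds for some `c`, and `|||ν|||_{d;n}` is the least such `c`. -/
def IsMZ (d : ℕ) (n : ℝ) (ν : SignedMeasure (Sph d)) (c : ℝ) : Prop :=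
  ∀ f : Sph d → ℝ, IsSphPoly d (n / 2) f →
    (∫ y, (f y) ^ 2 ∂ν.totalVariation) ≤ c * ∫ y, (f y) ^ 2 ∂sphMeasure d

/-- `ω_d`, the volume of `S^d`. -/
def omegaS (d : ℕ) : ℝ := 2 * Real.pi ^ (((d : ℝ) + 1) / 2) / Real.Gamma (((d : ℝ) + 1) / 2)

/-- The reproducing kernel `K_{d;n}` of `Π_n^d`. -/
def sphK (d n : ℕ) (x : ℝ) : ℝ :=
  (omegaS d / omegaS (d - 1)) * jacobiK ((d : ℝ) / 2 - 1) ((d : ℝ) / 2 - 1) n x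

/-- The kernel `Φ̃_{d;n,r}`. -/
def PhiTilde (d n : ℕ) (r : ℝ) (x : ℝ) : ℝ :=
  sphK d ((d + 2) * n) x *
    (jacobiP ((d : ℝ) / 2 + r) ((d : ℝ) / 2 - 2) (d * n) x /
      jacobiP ((d : ℝ) / 2 + r) ((d : ℝ) / 2 - 2) (d * n) 1)

/-- The kernel `Φ_{d;n,r}`. -/
def Phi (d n : ℕ) (r : ℝ) (x : ℝ) : ℝ := PhiTilde d n r x * ((1 + x) / 2) ^ n

/-- The inner product `x·y` of two points of `S^d`. -/
def ip {d : ℕ} (x y : Sph d) : ℝ :=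
  ⟪(x : EuclideanSpace ℝ (Fin (d + 1))), (y : EuclideanSpace ℝ (Fin (d + 1)))⟫

/-- The operator `σ_{d;n,r}(ν, f)`. -/
def sigmaOp (d n : ℕ) (r : ℝ) (ν : SignedMeasure (Sph d)) (f : Sph d → ℝ) (x : Sph d) : ℝ :=
  sInt ν (fun y => f y * Phi d n r (ip x y))

/-- The operator `σ̃_{d;n,r}(ν, f)`. -/
def sigmaTildeOp (d n : ℕ) (r : ℝ) (ν : SignedMeasure (Sph d)) (f : Sph d → ℝ) (x : Sph d) : ℝ :=
  sInt ν (fun y => f y * PhiTilde d n r (ip x y))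

/-- The uniform (supremum) norm `‖f‖_∞`. -/
def supNorm {X : Type*} (f : X → ℝ) : ℝ := sSup (Set.range fun x => |f x|)

/-- `E_{d;n}(f)`, the degree of approximation of `f` from `Π_n^d` in the uniform norm. -/
def bestApprox (d : ℕ) (n : ℝ) (f : Sph d → ℝ) : ℝ :=
  sInf {t | ∃ g, IsSphPoly d n g ∧ ∀ y, |f y - g y| ≤ t}

/-- `dim Π_n^d = (2n+d−2)·Γ(n+d−1)/(Γ(n)·Γ(d+1))` (for `n ≥ 2`). -/
def dimPi (d n : ℕ) : ℝ :=
  (2 * (n : ℝ) + d - 2) * Real.Gamma ((n : ℝ) + d - 1) /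
    (Real.Gamma n * Real.Gamma ((d : ℝ) + 1))


/-! ### Finite differences and Gamma ratios -/

lemma alt_poly (n : ℕ) (P : Polynomial ℝ) (hP : P.natDegree < n) :
    ∑ i ∈ Finset.range (n + 1), (-1 : ℝ) ^ i * (n.choose i : ℝ) * P.eval (i : ℝ) = 0 := by
  have h := congrFun (Polynomial.fwdDiff_iter_eq_zero_of_degree_lt hP) 0
  rw [fwdDiff_iter_eq_sum_shift] at h
  have h2 : ∑ i ∈ Finset.range (n + 1), (-1 : ℝ) ^ i * (n.choose i : ℝ) * P.eval (i : ℝ)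
      = (-1 : ℝ) ^ n * ∑ k ∈ Finset.range (n + 1),
        ((-1 : ℤ) ^ (n - k) * n.choose k) • P.eval (0 + k • (1 : ℝ)) := by
    rw [Finset.mul_sum]
    refine Finset.sum_congr rfl fun i hi => ?_
    have hi' : i ≤ n := by simpa [Nat.lt_succ_iff] using hi
    have : (-1 : ℝ) ^ n * (-1) ^ (n - i) = (-1) ^ i := by
      rw [← pow_add]
      obtain ⟨k, rfl⟩ := Nat.exists_eq_add_of_le hi'
      have : i + k + (i + k - i) = i + 2 * k := by omega
      rw [this, pow_add, pow_mul]; simp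
    simp only [zsmul_eq_mul, nsmul_eq_mul, mul_one, zero_add]
    push_cast
    rw [← this]; ring
  rw [h2, h]; simp

lemma Gamma_add_nat (x : ℝ) (hx : 0 < x) (k : ℕ) :
    Real.Gamma (x + k) = (∏ l ∈ Finset.range k, (x + l)) * Real.Gamma x := by
  induction k with
  | zero => simp
  | succ k ih =>
    rw [Finset.prod_range_succ, Nat.cast_succ, ← add_assoc, Real.Gamma_add_one (by positivity), ih]
    ring

lemma fwd_inv (n : ℕ) : ∀ z : ℝ, 0 < z → (fwdDiff (1 : ℝ))^[n] (fun x : ℝ => 1 / x) z =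
    (-1) ^ n * n.factorial * Real.Gamma z / Real.Gamma (z + n + 1) := by
  induction n with
  | zero =>
    intro z hz
    simp [Real.Gamma_add_one hz.ne']
    field_simp [(Real.Gamma_pos_of_pos hz).ne']
  | succ n ih =>
    intro z hz
    rw [Function.iterate_succ_apply', fwdDiff, ih z hz, ih (z + 1) (by positivity)]
    have e1 : z + 1 + n + 1 = (z + n + 1) + 1 := by ring
    have e2 : z + ((n + 1 : ℕ) : ℝ) + 1 = (z + n + 1) + 1 := by push_cast; ring
    have hg : 0 < Real.Gamma (z + n + 1) := Real.Gamma_pos_of_pos (by positivity)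
    have hz1 : z + n + 1 ≠ 0 := by positivity
    rw [e1, e2, Real.Gamma_add_one hz.ne', Real.Gamma_add_one hz1, Nat.factorial_succ]
    push_cast
    field_simp
    ring

lemma alt_inv (n : ℕ) (z : ℝ) (hz : 0 < z) :
    ∑ i ∈ Finset.range (n + 1), (-1 : ℝ) ^ i * (n.choose i : ℝ) * (1 / (z + i)) =
      n.factorial * Real.Gamma z / Real.Gamma (z + n + 1) := by
  have h := fwd_inv n z hz
  rw [fwdDiff_iter_eq_sum_shift] at h
  have h2 : ∑ i ∈ Finset.range (n + 1), (-1 : ℝ) ^ i * (n.choose i : ℝ) * (1 / (z + i))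
      = (-1 : ℝ) ^ n * ∑ k ∈ Finset.range (n + 1),
        ((-1 : ℤ) ^ (n - k) * n.choose k) • (1 / (z + k • (1 : ℝ))) := by
    rw [Finset.mul_sum]
    refine Finset.sum_congr rfl fun i hi => ?_
    have hi' : i ≤ n := by simpa [Nat.lt_succ_iff] using hi
    have : (-1 : ℝ) ^ n * (-1) ^ (n - i) = (-1) ^ i := by
      rw [← pow_add]
      obtain ⟨k, rfl⟩ := Nat.exists_eq_add_of_le hi'
      have : i + k + (i + k - i) = i + 2 * k := by omega
      rw [this, pow_add, pow_mul]; simp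
    simp only [zsmul_eq_mul, nsmul_eq_mul, mul_one]
    push_cast
    rw [← this]; ring
  rw [h2, h, mul_div_assoc, ← mul_assoc, ← mul_assoc, ← pow_add, ← two_mul, pow_mul]
  simp; ring

/-- partial fractions, one pole -/
lemma alt_pole (n : ℕ) (z : ℝ) (hz : 0 < z) (R : Polynomial ℝ) (hR : R.natDegree ≤ n) :
    ∑ i ∈ Finset.range (n + 1), (-1 : ℝ) ^ i * (n.choose i : ℝ) * (R.eval (i : ℝ) / (z + i)) =
      R.eval (-z) * (n.factorial * Real.Gamma z / Real.Gamma (z + n + 1)) := by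
  set S := R /ₘ (Polynomial.X - Polynomial.C (-z)) with hS
  have hRS : ∀ t : ℝ, R.eval t = R.eval (-z) + (t + z) * S.eval t := by
    intro t
    have := congrArg (Polynomial.eval t) (Polynomial.modByMonic_add_div R (Polynomial.X - Polynomial.C (-z)))
    rw [Polynomial.modByMonic_X_sub_C_eq_C_eval] at this
    simp only [Polynomial.eval_add, Polynomial.eval_mul, Polynomial.eval_C, Polynomial.eval_sub,
      Polynomial.eval_X] at this
    rw [← this]; ring
  rw [← alt_inv n z hz, Finset.mul_sum]
  have key : ∀ i ∈ Finset.range (n + 1), (-1 : ℝ) ^ i * (n.choose i : ℝ) * (R.eval (i : ℝ) / (z + i))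
      = R.eval (-z) * ((-1 : ℝ) ^ i * (n.choose i : ℝ) * (1 / (z + i))) +
        (-1 : ℝ) ^ i * (n.choose i : ℝ) * S.eval (i : ℝ) := by
    intro i _
    have : z + (i : ℝ) ≠ 0 := by positivity
    rw [hRS i]; field_simp; ring
  rw [Finset.sum_congr rfl key, Finset.sum_add_distrib]
  have hz0 : ∑ i ∈ Finset.range (n + 1), (-1 : ℝ) ^ i * (n.choose i : ℝ) * S.eval (i : ℝ) = 0 := by
    rcases Nat.eq_zero_or_pos n with hn | hn
    · have : S = 0 := by
        rw [hS, Polynomial.divByMonic_eq_zero_iff (Polynomial.monic_X_sub_C _), Polynomial.degree_X_sub_C]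
        have : R.natDegree < 1 := by omega
        exact (Polynomial.degree_lt_iff_coeff_zero R 1).2 fun m hm =>
          Polynomial.coeff_eq_zero_of_natDegree_lt (by omega)
      simp [this]
    · apply alt_poly
      rw [hS, Polynomial.natDegree_divByMonic _ (Polynomial.monic_X_sub_C _), Polynomial.natDegree_X_sub_C]
      omega
  rw [hz0, add_zero]

/-- partial fractions, two poles -/
lemma alt_pole2 (n : ℕ) (z : ℝ) (hz : 1 < z) (R : Polynomial ℝ) (hR : R.natDegree ≤ n + 1) :
    ∑ i ∈ Finset.range (n + 1), (-1 : ℝ) ^ i * (n.choose i : ℝ) *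
        (R.eval (i : ℝ) / ((z + i) * (z - 1 + i))) =
      R.eval (1 - z) * (n.factorial * Real.Gamma (z - 1) / Real.Gamma (z + n))
      - R.eval (-z) * (n.factorial * Real.Gamma z / Real.Gamma (z + n + 1)) := by
  set S := R /ₘ (Polynomial.X - Polynomial.C (-z)) with hS
  have hRS : ∀ t : ℝ, R.eval t = R.eval (-z) + (t + z) * S.eval t := by
    intro t
    have := congrArg (Polynomial.eval t) (Polynomial.modByMonic_add_div R (Polynomial.X - Polynomial.C (-z)))
    rw [Polynomial.modByMonic_X_sub_C_eq_C_eval] at this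
    simp only [Polynomial.eval_add, Polynomial.eval_mul, Polynomial.eval_C, Polynomial.eval_sub,
      Polynomial.eval_X] at this
    rw [← this]; ring
  have hSd : S.natDegree ≤ n := by
    rw [hS, Polynomial.natDegree_divByMonic _ (Polynomial.monic_X_sub_C _), Polynomial.natDegree_X_sub_C]
    omega
  have h1 := alt_pole n (z - 1) (by linarith) S hSd
  have h2 := alt_inv n z (by linarith)
  have h3 := alt_inv n (z - 1) (by linarith)
  have key : ∀ i ∈ Finset.range (n + 1), (-1 : ℝ) ^ i * (n.choose i : ℝ) *
        (R.eval (i : ℝ) / ((z + i) * (z - 1 + i)))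
      = R.eval (-z) * ((-1 : ℝ) ^ i * (n.choose i : ℝ) * (1 / (z - 1 + i)))
       - R.eval (-z) * ((-1 : ℝ) ^ i * (n.choose i : ℝ) * (1 / (z + i))) +
        (-1 : ℝ) ^ i * (n.choose i : ℝ) * (S.eval (i : ℝ) / (z - 1 + i)) := by
    intro i _
    have hi : (0 : ℝ) ≤ i := Nat.cast_nonneg i
    have a1 : z + (i : ℝ) ≠ 0 := by linarith
    have a2 : z - 1 + (i : ℝ) ≠ 0 := by linarith
    rw [hRS i]; field_simp; ring
  rw [Finset.sum_congr rfl key, Finset.sum_add_distrib, Finset.sum_sub_distrib, ← Finset.mul_sum,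
    ← Finset.mul_sum, h1, h2, h3, hRS (1 - z)]
  have e : z - 1 + n + 1 = z + n := by ring
  have e' : -(z - 1) = 1 - z := by ring
  rw [e, e']; ring

/-- rising factorial as polynomial -/
def pochP (c : ℝ) (k : ℕ) : Polynomial ℝ :=
  ∏ l ∈ Finset.range k, (Polynomial.X + Polynomial.C (c + l))

lemma pochP_eval (c : ℝ) (k : ℕ) (t : ℝ) :
    (pochP c k).eval t = ∏ l ∈ Finset.range k, (t + c + l) := by
  rw [pochP, Polynomial.eval_prod]
  refine Finset.prod_congr rfl fun l _ => ?_
  simp; ring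

lemma pochP_natDegree (c : ℝ) (k : ℕ) : (pochP c k).natDegree ≤ k := by
  refine (Polynomial.natDegree_prod_le _ _).trans ?_
  refine (Finset.sum_le_sum (g := fun _ => 1) fun l _ => ?_).trans (by simp)
  exact Polynomial.natDegree_X_add_C _ |>.le

lemma pochP_Gamma (c : ℝ) (k : ℕ) (t : ℝ) (h : 0 < t + c) :
    (pochP c k).eval t = Real.Gamma (t + c + k) / Real.Gamma (t + c) := by
  rw [pochP_eval, Gamma_add_nat _ h]
  field_simp [(Real.Gamma_pos_of_pos h).ne']

lemma Gamma_ratio_upper (x r : ℝ) (hx : 0 < x) (hr : 0 < r) :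
    Real.Gamma (x + r) ≤ (x + r) ^ r * Real.Gamma x := by
  have hc := Real.convexOn_log_Gamma
  have h := hc.slope_mono_adjacent (x := x) (y := x + r) (z := x + r + 1) (by simpa using hx)
    (by simp; linarith) (by linarith) (by linarith)
  have g1 := Real.Gamma_pos_of_pos hx
  have g2 := Real.Gamma_pos_of_pos (show 0 < x + r by linarith)
  simp only [Function.comp] at h
  rw [Real.Gamma_add_one (by linarith), Real.log_mul (by linarith) g2.ne'] at h
  have : Real.log (Real.Gamma (x + r)) ≤ Real.log ((x + r) ^ r * Real.Gamma x) := by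
    rw [Real.log_mul (by positivity) g1.ne', Real.log_rpow (by linarith)]
    have e1 : x + r - x = r := by ring
    have e2 : x + r + 1 - (x + r) = 1 := by ring
    rw [e1, e2, div_one, div_le_iff₀ hr] at h
    linarith
  exact (Real.log_le_log_iff g2 (by positivity)).1 this

lemma Gamma_ratio_lower (x r : ℝ) (hx : 1 < x) (hr : 0 < r) :
    (x - 1) ^ r * Real.Gamma x ≤ Real.Gamma (x + r) := by
  have hc := Real.convexOn_log_Gamma
  have h := hc.slope_mono_adjacent (x := x - 1) (y := x) (z := x + r) (by simpa using hx)
    (by simp; linarith) (by linarith) (by linarith)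
  have hx1 : 0 < x - 1 := by linarith
  have g0 := Real.Gamma_pos_of_pos hx1
  have g1 := Real.Gamma_pos_of_pos (show 0 < x by linarith)
  have g2 := Real.Gamma_pos_of_pos (show 0 < x + r by linarith)
  simp only [Function.comp] at h
  have e : Real.Gamma x = (x - 1) * Real.Gamma (x - 1) := by
    conv_lhs => rw [show x = (x - 1) + 1 by ring]
    rw [Real.Gamma_add_one (by linarith)]
  have el : Real.log (Real.Gamma x) = Real.log (x - 1) + Real.log (Real.Gamma (x - 1)) := by
    rw [e, Real.log_mul hx1.ne' g0.ne']
  have : Real.log ((x - 1) ^ r * Real.Gamma x) ≤ Real.log (Real.Gamma (x + r)) := by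
    rw [Real.log_mul (by positivity) g1.ne', Real.log_rpow hx1]
    have e1 : x + r - x = r := by ring
    have e2 : x - (x - 1) = 1 := by ring
    rw [e1, e2, div_one, le_div_iff₀ hr] at h
    rw [el] at h ⊢
    nlinarith
  exact (Real.log_le_log_iff (by positivity) g2).1 this



/-! ### Weighted integrals on (0,1) -/

/-- Integral on `(0,1)` against the Jacobi weight. -/
def WI (a b : ℝ) (f : ℝ → ℝ) : ℝ := ∫ u in Ioo (0 : ℝ) 1, f u * (u ^ a * (1 - u) ^ b)

lemma beta_integrable (a b : ℝ) (ha : -1 < a) (hb : -1 < b) :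
    IntegrableOn (fun u : ℝ => u ^ a * (1 - u) ^ b) (Ioo (0 : ℝ) 1) := by
  have h := Complex.betaIntegral_convergent (u := ((a + 1 : ℝ) : ℂ)) (v := ((b + 1 : ℝ) : ℂ))
    (by simp; linarith) (by simp; linarith)
  rw [intervalIntegrable_iff_integrableOn_Ioo_of_le (by norm_num)] at h
  refine (h.re).congr ?_
  refine ae_restrict_of_forall_mem measurableSet_Ioo fun u hu => ?_
  have h1 : (0 : ℝ) ≤ 1 - u := by linarith [hu.2]
  push_cast
  rw [add_sub_cancel_right, add_sub_cancel_right]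
  norm_cast
  rw [← Complex.ofReal_cpow hu.1.le, ← Complex.ofReal_cpow h1, ← Complex.ofReal_mul]
  simp

lemma beta_integral (a b : ℝ) (ha : -1 < a) (hb : -1 < b) :
    ∫ u in Ioo (0 : ℝ) 1, u ^ a * (1 - u) ^ b =
      Real.Gamma (a + 1) * Real.Gamma (b + 1) / Real.Gamma (a + b + 2) := by
  have h := ProbabilityTheory.beta_eq_betaIntegralReal (a + 1) (b + 1) (by linarith) (by linarith)
  rw [ProbabilityTheory.beta] at h
  have e : a + 1 + (b + 1) = a + b + 2 := by ring
  rw [e] at h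
  rw [h, Complex.betaIntegral, intervalIntegral.integral_of_le (by norm_num),
    integral_Ioc_eq_integral_Ioo]
  have h2 : ∀ u ∈ Ioo (0 : ℝ) 1, (u : ℂ) ^ (((a + 1 : ℝ) : ℂ) - 1) * (1 - (u : ℂ)) ^ (((b + 1 : ℝ) : ℂ) - 1)
      = ((u ^ a * (1 - u) ^ b : ℝ) : ℂ) := by
    intro u hu
    have h1 : (0 : ℝ) ≤ 1 - u := by linarith [hu.2]
    push_cast
    rw [add_sub_cancel_right, add_sub_cancel_right]
    norm_cast
    rw [Complex.ofReal_mul, Complex.ofReal_cpow hu.1.le, Complex.ofReal_cpow h1]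
  rw [setIntegral_congr_fun measurableSet_Ioo h2, integral_complex_ofReal]
  simp

lemma wi_integrable (a b : ℝ) (ha : -1 < a) (hb : -1 < b) (f : ℝ → ℝ) (hf : Continuous f) :
    IntegrableOn (fun u : ℝ => f u * (u ^ a * (1 - u) ^ b)) (Ioo (0 : ℝ) 1) := by
  have h := beta_integrable a b ha hb
  rw [← integrableOn_Icc_iff_integrableOn_Ioo] at h ⊢
  exact h.continuousOn_mul hf.continuousOn isCompact_Icc

lemma wi_add (a b : ℝ) (ha : -1 < a) (hb : -1 < b) (f g : ℝ → ℝ) (hf : Continuous f)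
    (hg : Continuous g) : WI a b (fun u => f u + g u) = WI a b f + WI a b g := by
  unfold WI
  rw [← integral_add (wi_integrable a b ha hb f hf) (wi_integrable a b ha hb g hg)]
  simp only [add_mul]

lemma wi_const_mul (a b c : ℝ) (f : ℝ → ℝ) : WI a b (fun u => c * f u) = c * WI a b f := by
  unfold WI
  rw [← integral_const_mul]
  simp only [mul_assoc]

lemma wi_sum {ι : Type*} (s : Finset ι) (a b : ℝ) (ha : -1 < a) (hb : -1 < b) (f : ι → ℝ → ℝ)
    (hf : ∀ i, Continuous (f i)) :
    WI a b (fun u => ∑ i ∈ s, f i u) = ∑ i ∈ s, WI a b (f i) := by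
  unfold WI
  rw [← integral_finsetSum _ fun i _ => wi_integrable a b ha hb (f i) (hf i)]
  simp only [Finset.sum_mul]

lemma wi_shift (a b : ℝ) (k : ℕ) (f : ℝ → ℝ) :
    WI a b (fun u => u ^ k * f u) = WI (a + k) b f := by
  unfold WI
  refine setIntegral_congr_fun measurableSet_Ioo fun u hu => ?_
  simp only
  rw [Real.rpow_add hu.1, Real.rpow_natCast]; ring

lemma wi_pow (a b : ℝ) (ha : -1 < a) (hb : -1 < b) (k : ℕ) :
    WI a b (fun u => u ^ k) =
      Real.Gamma (a + k + 1) * Real.Gamma (b + 1) / Real.Gamma (a + k + b + 2) := by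
  have h := wi_shift a b k (fun _ => 1)
  simp only [mul_one] at h
  have hk : (0 : ℝ) ≤ k := Nat.cast_nonneg k
  rw [h, WI, ← beta_integral (a + k) b (by linarith) hb]
  simp

/-- The (unnormalised) Jacobi polynomial in the variable `u = (1-t)/2`. -/
def Jf (α β : ℝ) (n : ℕ) (u : ℝ) : ℝ :=
  ∑ m ∈ Finset.range (n + 1), ((-1) ^ m * (n.choose m : ℝ) *
    (Real.Gamma (α + β + n + m + 1) / Real.Gamma (α + m + 1))) * u ^ m

lemma Jf_continuous (α β : ℝ) (n : ℕ) : Continuous (Jf α β n) := by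
  unfold Jf; fun_prop

lemma Jf_zero (α β : ℝ) (n : ℕ) :
    Jf α β n 0 = Real.Gamma (α + β + n + 1) / Real.Gamma (α + 1) := by
  unfold Jf
  rw [Finset.sum_eq_single 0]
  · simp
  · intro b _ hb; simp [hb]
  · simp

lemma wi_Jf (α β c : ℝ) (n : ℕ) (hc : -1 < c) (hβ : -1 < β) :
    WI c β (Jf α β n) = Real.Gamma (β + 1) * ∑ m ∈ Finset.range (n + 1), (-1) ^ m * (n.choose m : ℝ) *
      (Real.Gamma (α + β + n + m + 1) / Real.Gamma (c + m + β + 2) *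
        (Real.Gamma (c + m + 1) / Real.Gamma (α + m + 1))) := by
  unfold Jf
  rw [wi_sum _ _ _ hc hβ _ (fun i => by fun_prop), Finset.mul_sum]
  refine Finset.sum_congr rfl fun m _ => ?_
  rw [wi_const_mul, wi_pow c β hc hβ]
  ring

lemma wi_Jf_orth (α β : ℝ) (n s : ℕ) (hα : -1 < α) (hβ : -1 < β) (hs : s < n) :
    WI (α + s) β (Jf α β n) = 0 := by
  have hs0 : (0 : ℝ) ≤ s := Nat.cast_nonneg s
  rw [wi_Jf α β (α + s) n (by linarith) hβ]
  obtain ⟨k, rfl⟩ := Nat.exists_eq_add_of_lt hs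
  have h := alt_poly (s + k + 1) (pochP (α + β + s + 2) k * pochP (α + 1) s) (by
    refine lt_of_le_of_lt Polynomial.natDegree_mul_le ?_
    have := pochP_natDegree (α + β + s + 2) k
    have := pochP_natDegree (α + 1) s
    omega)
  rw [mul_eq_zero]; right
  rw [← h]
  refine Finset.sum_congr rfl fun m _ => ?_
  congr 1
  have hm : (0 : ℝ) ≤ m := Nat.cast_nonneg m
  rw [Polynomial.eval_mul, pochP_Gamma _ _ _ (by linarith), pochP_Gamma _ _ _ (by linarith)]
  have e1 : α + β + ((s + k + 1 : ℕ) : ℝ) + m + 1 = m + (α + β + s + 2) + k := by push_cast; ring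
  have e2 : α + s + m + β + 2 = m + (α + β + s + 2) := by ring
  have e3 : α + s + m + 1 = m + (α + 1) + s := by ring
  have e4 : α + m + 1 = m + (α + 1) := by ring
  rw [e1, e2, e3, e4]

lemma wi_Jf_neg_one (α β : ℝ) (n : ℕ) (hα : 0 < α) (hβ : -1 < β) :
    WI (α - 1) β (Jf α β n) =
      Real.Gamma (β + n + 1) * n.factorial * Real.Gamma α / Real.Gamma (α + n + 1) := by
  rw [wi_Jf α β (α - 1) n (by linarith) hβ]
  have h := alt_pole n α hα (pochP (α + β + 1) n) (pochP_natDegree _ _)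
  rw [pochP_Gamma _ _ (-α) (by linarith)] at h
  have e : -α + (α + β + 1) = β + 1 := by ring
  rw [e] at h
  have h2 : ∑ m ∈ Finset.range (n + 1), (-1) ^ m * (n.choose m : ℝ) *
      (Real.Gamma (α + β + n + m + 1) / Real.Gamma (α - 1 + m + β + 2) *
        (Real.Gamma (α - 1 + m + 1) / Real.Gamma (α + m + 1))) =
      ∑ i ∈ Finset.range (n + 1), (-1 : ℝ) ^ i * (n.choose i : ℝ) *
        ((pochP (α + β + 1) n).eval (i : ℝ) / (α + i)) := by
    refine Finset.sum_congr rfl fun m _ => ?_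
    congr 1
    have hm : (0 : ℝ) ≤ m := Nat.cast_nonneg m
    rw [pochP_Gamma _ _ _ (by linarith)]
    have e1 : α + β + n + m + 1 = m + (α + β + 1) + n := by ring
    have e2 : α - 1 + m + β + 2 = m + (α + β + 1) := by ring
    have e3 : α - 1 + m + 1 = α + m := by ring
    have hp : 0 < α + m := by linarith
    rw [e1, e2, e3, Real.Gamma_add_one hp.ne']
    have := (Real.Gamma_pos_of_pos hp).ne'
    field_simp
  rw [h2, h]
  have e5 : β + 1 + n = β + n + 1 := by ring
  have := (Real.Gamma_pos_of_pos (show 0 < β + 1 by linarith)).ne'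
  rw [e5]
  field_simp

lemma wi_Jf_neg_two (α β : ℝ) (n : ℕ) (hα : 1 < α) (hβ : -1 < β) (hab : 0 < α + β) :
    WI (α - 2) β (Jf α β n) =
      Real.Gamma (β + n + 1) * n.factorial * Real.Gamma α / Real.Gamma (α + n + 1) *
        ((n + 1) * (α + β + n) / (α - 1)) := by
  rw [wi_Jf α β (α - 2) n (by linarith) hβ]
  have h := alt_pole2 n α hα (pochP (α + β) (n + 1)) (pochP_natDegree _ _)
  rw [pochP_Gamma _ _ (1 - α) (by linarith), pochP_eval _ _ (-α), Finset.prod_range_succ'] at h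
  have hprod : ∏ k ∈ Finset.range n, (-α + (α + β) + ((k + 1 : ℕ) : ℝ)) =
      Real.Gamma (β + 1 + n) / Real.Gamma (β + 1) := by
    rw [Gamma_add_nat (β + 1) (by linarith), mul_div_cancel_right₀ _
      (Real.Gamma_pos_of_pos (show 0 < β + 1 by linarith)).ne']
    refine Finset.prod_congr rfl fun k _ => ?_
    push_cast; ring
  rw [hprod] at h
  have e : 1 - α + (α + β) = β + 1 := by ring
  have e' : -α + (α + β) + ((0 : ℕ) : ℝ) = β := by simp
  rw [e, e'] at h
  have h2 : ∑ m ∈ Finset.range (n + 1), (-1) ^ m * (n.choose m : ℝ) *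
      (Real.Gamma (α + β + n + m + 1) / Real.Gamma (α - 2 + m + β + 2) *
        (Real.Gamma (α - 2 + m + 1) / Real.Gamma (α + m + 1))) =
      ∑ i ∈ Finset.range (n + 1), (-1 : ℝ) ^ i * (n.choose i : ℝ) *
        ((pochP (α + β) (n + 1)).eval (i : ℝ) / ((α + i) * (α - 1 + i))) := by
    refine Finset.sum_congr rfl fun m _ => ?_
    congr 1
    have hm : (0 : ℝ) ≤ m := Nat.cast_nonneg m
    rw [pochP_Gamma _ _ _ (by linarith)]
    have e1 : α + β + n + m + 1 = m + (α + β) + ((n + 1 : ℕ) : ℝ) := by push_cast; ring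
    have e2 : α - 2 + m + β + 2 = m + (α + β) := by ring
    have e3 : α - 2 + m + 1 = α - 1 + m := by ring
    have e4 : α + m = (α - 1 + m) + 1 := by ring
    have hp : 0 < α - 1 + m := by linarith
    have hp' : 0 < α - 1 + m + 1 := by linarith
    rw [e1, e2, e3, e4, Real.Gamma_add_one hp'.ne', Real.Gamma_add_one hp.ne']
    have := (Real.Gamma_pos_of_pos hp).ne'
    field_simp
  rw [h2, h]
  have hn0 : (0 : ℝ) ≤ n := Nat.cast_nonneg n
  have e5 : β + 1 + ((n + 1 : ℕ) : ℝ) = (β + n + 1) + 1 := by push_cast; ring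
  have e6 : β + 1 + n = β + n + 1 := by ring
  have e7 : Real.Gamma α = (α - 1) * Real.Gamma (α - 1) := by
    conv_lhs => rw [show α = (α - 1) + 1 by ring]
    rw [Real.Gamma_add_one (by linarith)]
  have hg1 := (Real.Gamma_pos_of_pos (show 0 < β + 1 by linarith)).ne'
  have hg2 := (Real.Gamma_pos_of_pos (show 0 < α + n by linarith)).ne'
  have ha1 : α - 1 ≠ 0 := by linarith
  have ha2 : α + n ≠ 0 := by linarith
  rw [e5, e6, Real.Gamma_add_one (show β + n + 1 ≠ 0 by linarith), e7, Real.Gamma_add_one ha2]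
  field_simp
  ring

/-- polynomial versions -/
lemma wi_Jf_mul_zero (α β : ℝ) (n : ℕ) (hα : -1 < α) (hβ : -1 < β) (q : Polynomial ℝ)
    (hq : q.natDegree < n) : WI α β (fun u => Jf α β n u * q.eval u) = 0 := by
  have e : (fun u => Jf α β n u * q.eval u) =
      fun u => ∑ i ∈ Finset.range n, q.coeff i * (u ^ i * Jf α β n u) := by
    funext u
    rw [Polynomial.eval_eq_sum_range' hq, Finset.mul_sum]
    exact Finset.sum_congr rfl fun i _ => by ring
  have hJ := Jf_continuous α β n
  rw [e, wi_sum _ _ _ hα hβ _ (fun i => by fun_prop)]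
  refine Finset.sum_eq_zero fun i hi => ?_
  rw [wi_const_mul, wi_shift, wi_Jf_orth α β n i hα hβ (Finset.mem_range.1 hi), mul_zero]

lemma wi_Jf_mul_one (α β : ℝ) (n : ℕ) (hα : 0 < α) (hβ : -1 < β) (q : Polynomial ℝ)
    (hq : q.natDegree ≤ n) : WI (α - 1) β (fun u => Jf α β n u * q.eval u) =
      q.eval 0 * (Real.Gamma (β + n + 1) * n.factorial * Real.Gamma α / Real.Gamma (α + n + 1)) := by
  have hJ := Jf_continuous α β n
  have e : (fun u => Jf α β n u * q.eval u) =
      fun u => q.eval 0 * Jf α β n u + u ^ 1 * (Jf α β n u * q.divX.eval u) := by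
    funext u
    conv_lhs => rw [← Polynomial.divX_mul_X_add q]
    rw [← Polynomial.coeff_zero_eq_eval_zero]
    simp; ring
  have hc : Continuous (fun u => q.divX.eval u) := q.divX.continuous
  rw [e, wi_add _ _ (by linarith) hβ _ _ (by fun_prop) (by fun_prop), wi_const_mul,
    wi_Jf_neg_one α β n hα hβ, wi_shift]
  have e1 : α - 1 + ((1 : ℕ) : ℝ) = α := by simp
  rw [e1]
  rcases Nat.eq_zero_or_pos n with hn | hn
  · have : q.divX = 0 := by
      have := Polynomial.eq_C_of_natDegree_eq_zero (show q.natDegree = 0 by omega)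
      rw [this, Polynomial.divX_C]
    simp [this, WI]
  · rw [wi_Jf_mul_zero α β n (by linarith) hβ _ (by rw [Polynomial.natDegree_divX_eq_natDegree_tsub_one]; omega)]
    simp

lemma wi_Jf_mul_two (α β : ℝ) (n : ℕ) (hα : 1 < α) (hβ : -1 < β) (hab : 0 < α + β) (q : Polynomial ℝ)
    (hq : q.natDegree ≤ n) : WI (α - 2) β (fun u => Jf α β n u * q.eval u) =
      Real.Gamma (β + n + 1) * n.factorial * Real.Gamma α / Real.Gamma (α + n + 1) *
       (q.eval 0 * ((n + 1) * (α + β + n) / (α - 1)) + q.coeff 1) := by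
  have hJ := Jf_continuous α β n
  have e : (fun u => Jf α β n u * q.eval u) =
      fun u => q.eval 0 * Jf α β n u + u ^ 1 * (Jf α β n u * q.divX.eval u) := by
    funext u
    conv_lhs => rw [← Polynomial.divX_mul_X_add q]
    rw [← Polynomial.coeff_zero_eq_eval_zero]
    simp; ring
  have hc : Continuous (fun u => q.divX.eval u) := q.divX.continuous
  rw [e, wi_add _ _ (by linarith) hβ _ _ (by fun_prop) (by fun_prop), wi_const_mul,
    wi_Jf_neg_two α β n hα hβ hab, wi_shift]
  have e1 : α - 2 + ((1 : ℕ) : ℝ) = α - 1 := by push_cast; ring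
  rw [e1, wi_Jf_mul_one α β n (by linarith) hβ _
    (by rw [Polynomial.natDegree_divX_eq_natDegree_tsub_one]; omega),
    ← Polynomial.coeff_zero_eq_eval_zero q.divX, Polynomial.coeff_divX]
  ring



/-! ### Jacobi polynomials of the statement in terms of `Jf` -/

/-- Normalising factor. -/
def jnrm (α β : ℝ) (n : ℕ) : ℝ :=
  Real.sqrt ((2 * (n : ℝ) + α + β + 1) / 2 ^ (α + β + 1) *
      (Real.Gamma ((n : ℝ) + α + β + 1) * (n.factorial : ℝ) /
        (Real.Gamma ((n : ℝ) + α + 1) * Real.Gamma ((n : ℝ) + β + 1)))) *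
    (Real.Gamma (α + n + 1) / ((n.factorial : ℝ) * Real.Gamma (α + β + n + 1)))

lemma jacobiP_eq (α β : ℝ) (n : ℕ) (t : ℝ) :
    jacobiP α β n t = jnrm α β n * Jf α β n ((1 - t) / 2) := by
  unfold jacobiP jnrm Jf
  congr 1
  refine Finset.sum_congr rfl fun m _ => ?_
  have : (t - 1) / 2 = -1 * ((1 - t) / 2) := by ring
  rw [this, mul_pow]; ring

lemma jnrm_sq (α β : ℝ) (n : ℕ) (hα : -1 < α) (hβ : -1 < β) (hab : 0 < α + β + 1) :
    jnrm α β n ^ 2 = (2 * (n : ℝ) + α + β + 1) / 2 ^ (α + β + 1) *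
      (Real.Gamma ((n : ℝ) + α + 1) / (Real.Gamma ((n : ℝ) + β + 1) *
        Real.Gamma ((n : ℝ) + α + β + 1) * n.factorial)) ∧ 0 < jnrm α β n := by
  have hn : (0 : ℝ) ≤ n := Nat.cast_nonneg n
  have g1 := Real.Gamma_pos_of_pos (show 0 < (n : ℝ) + α + β + 1 by linarith)
  have g2 := Real.Gamma_pos_of_pos (show 0 < (n : ℝ) + α + 1 by linarith)
  have g3 := Real.Gamma_pos_of_pos (show 0 < (n : ℝ) + β + 1 by linarith)
  have hf : (0 : ℝ) < n.factorial := by exact_mod_cast n.factorial_pos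
  have h1 : 0 < 2 * (n : ℝ) + α + β + 1 := by linarith
  have e1 : α + n + 1 = n + α + 1 := by ring
  have e2 : α + β + n + 1 = n + α + β + 1 := by ring
  unfold jnrm
  rw [e1, e2]
  constructor
  · rw [mul_pow, Real.sq_sqrt (by positivity)]
    field_simp
  · positivity

lemma Jf_zero_pos (α β : ℝ) (n : ℕ) (hα : -1 < α) (hab : 0 < α + β + 1) : 0 < Jf α β n 0 := by
  have hn : (0 : ℝ) ≤ n := Nat.cast_nonneg n
  rw [Jf_zero]
  exact div_pos (Real.Gamma_pos_of_pos (by linarith)) (Real.Gamma_pos_of_pos (by linarith))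

lemma jacobi_ratio (α β : ℝ) (n : ℕ) (hα : -1 < α) (hβ : -1 < β) (hab : 0 < α + β + 1) (t : ℝ) :
    jacobiP α β n t / jacobiP α β n 1 = Jf α β n ((1 - t) / 2) / Jf α β n 0 := by
  rw [jacobiP_eq, jacobiP_eq]
  have := (jnrm_sq α β n hα hβ hab).2
  simp only [sub_self, zero_div]
  rw [mul_div_mul_left _ _ this.ne']

lemma cd_coeff (a : ℝ) (ha : -1 / 2 < a) (m M : ℕ) :
    ∑ ℓ ∈ Finset.range (M + 1), (2 * (ℓ : ℝ) + 2 * a + 1) / ℓ.factorial * (ℓ.choose m : ℝ) *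
        Real.Gamma (2 * a + ℓ + m + 1) =
      (M.choose m : ℝ) / M.factorial * Real.Gamma (2 * a + m + M + 2) * ((a + M + 1) / (a + m + 1)) := by
  have hm : (0 : ℝ) ≤ m := Nat.cast_nonneg m
  induction M with
  | zero =>
    rw [Finset.sum_range_one]
    rcases Nat.eq_zero_or_pos m with h | h
    · subst h
      have : Real.Gamma (2 * a + 2) = (2 * a + 1) * Real.Gamma (2 * a + 1) := by
        rw [← Real.Gamma_add_one (by linarith)]; congr 1; ring
      have h1 : a + 1 ≠ 0 := by linarith
      simp [this, h1]
    · simp [Nat.choose_eq_zero_of_lt h]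
  | succ M ih =>
    have hM : (0 : ℝ) ≤ M := Nat.cast_nonneg M
    rw [Finset.sum_range_succ, ih]
    by_cases hmM : m ≤ M + 1
    · have hc : (M.choose m : ℝ) * (M + 1) = ((M + 1).choose m : ℝ) * (M + 1 - m) := by
        have := Nat.choose_mul_succ_eq M m
        have h2 : ((M.choose m * (M + 1) : ℕ) : ℝ) = (((M + 1).choose m * (M + 1 - m) : ℕ) : ℝ) := by
          rw [this]
        rw [Nat.cast_mul, Nat.cast_mul, Nat.cast_sub hmM] at h2
        push_cast at h2; exact h2
      have hM1 : (M : ℝ) + 1 ≠ 0 := by positivity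
      have hc' : (M.choose m : ℝ) = ((M + 1).choose m : ℝ) * (M + 1 - m) / (M + 1) := by
        field_simp; linarith
      rw [hc', Nat.factorial_succ]
      have e1 : 2 * a + ((M + 1 : ℕ) : ℝ) + m + 1 = 2 * a + m + M + 2 := by push_cast; ring
      have e2 : 2 * a + m + ((M + 1 : ℕ) : ℝ) + 2 = (2 * a + m + M + 2) + 1 := by push_cast; ring
      have hf : (M.factorial : ℝ) ≠ 0 := by exact_mod_cast M.factorial_ne_zero
      have h1 : a + m + 1 ≠ 0 := by linarith
      rw [e1, e2, Real.Gamma_add_one (by linarith)]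
      push_cast
      field_simp
      ring
    · push Not at hmM
      simp [Nat.choose_eq_zero_of_lt hmM, Nat.choose_eq_zero_of_lt (show M < m by omega)]

lemma jacobiK_eq (a : ℝ) (ha : -1 / 2 < a) (M : ℕ) (t : ℝ) :
    jacobiK a a (M + 1) t = (a + M + 1) / (2 ^ (2 * a + 1) * Real.Gamma (a + 1) * M.factorial) *
      Jf (a + 1) a M ((1 - t) / 2) := by
  have hterm : ∀ ℓ ∈ Finset.range (M + 1), jacobiP a a ℓ 1 * jacobiP a a ℓ t =
      ∑ m ∈ Finset.range (M + 1), 1 / (2 ^ (2 * a + 1) * Real.Gamma (a + 1)) *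
        ((-1) ^ m / Real.Gamma (a + m + 1) * ((1 - t) / 2) ^ m) *
        ((2 * (ℓ : ℝ) + 2 * a + 1) / ℓ.factorial * (ℓ.choose m : ℝ) *
        Real.Gamma (2 * a + ℓ + m + 1)) := by
    intro ℓ hℓ
    have hl : (0 : ℝ) ≤ ℓ := Nat.cast_nonneg ℓ
    rw [jacobiP_eq, jacobiP_eq]
    have h1 := (jnrm_sq a a ℓ (by linarith) (by linarith) (by linarith)).1
    have h2 : jnrm a a ℓ * Jf a a ℓ ((1 - 1) / 2) * (jnrm a a ℓ * Jf a a ℓ ((1 - t) / 2)) =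
      jnrm a a ℓ ^ 2 * Jf a a ℓ 0 * Jf a a ℓ ((1 - t) / 2) := by simp; ring
    rw [h2, h1, Jf_zero, Jf, Finset.mul_sum]
    have hsub : Finset.range (ℓ + 1) ⊆ Finset.range (M + 1) := by
      apply Finset.range_subset_range.2
      have := Finset.mem_range.1 hℓ; omega
    rw [← Finset.sum_subset hsub]
    · refine Finset.sum_congr rfl fun m _ => ?_
      have g1 := (Real.Gamma_pos_of_pos (show 0 < (ℓ : ℝ) + a + 1 by linarith)).ne'
      have g2 := (Real.Gamma_pos_of_pos (show 0 < (ℓ : ℝ) + a + a + 1 by linarith)).ne'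
      have e1 : a + a + ℓ + 1 = ℓ + a + a + 1 := by ring
      have e2 : 2 * a + ℓ + m + 1 = a + a + ℓ + m + 1 := by ring
      have e3 : a + a + 1 = 2 * a + 1 := by ring
      rw [e1, e2, e3]
      field_simp
      ring
    · intro m _ hm
      have : ℓ < m := by
        by_contra h
        exact hm (Finset.mem_range.2 (by omega))
      simp [Nat.choose_eq_zero_of_lt this]
  unfold jacobiK
  rw [Finset.sum_congr rfl hterm, Finset.sum_comm, Jf, Finset.mul_sum]
  refine Finset.sum_congr rfl fun m _ => ?_
  have hm : (0 : ℝ) ≤ m := Nat.cast_nonneg m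
  rw [← Finset.mul_sum, cd_coeff a ha]
  have e1 : a + 1 + a + M + m + 1 = 2 * a + m + M + 2 := by ring
  have e2 : a + 1 + m + 1 = (a + m + 1) + 1 := by ring
  have h1 : a + m + 1 ≠ 0 := by linarith
  have g1 := (Real.Gamma_pos_of_pos (show 0 < a + m + 1 by linarith)).ne'
  have hf : (M.factorial : ℝ) ≠ 0 := by exact_mod_cast M.factorial_ne_zero
  rw [e1, e2, Real.Gamma_add_one h1]
  field_simp

/-- polynomial in `u` -/
def Jpoly (α β : ℝ) (n : ℕ) : Polynomial ℝ :=
  ∑ m ∈ Finset.range (n + 1), Polynomial.C ((-1) ^ m * (n.choose m : ℝ) *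
    (Real.Gamma (α + β + n + m + 1) / Real.Gamma (α + m + 1))) * Polynomial.X ^ m

lemma Jpoly_eval (α β : ℝ) (n : ℕ) (u : ℝ) : (Jpoly α β n).eval u = Jf α β n u := by
  simp [Jpoly, Jf, Polynomial.eval_finsetSum]

lemma Jpoly_natDegree (α β : ℝ) (n : ℕ) : (Jpoly α β n).natDegree ≤ n := by
  refine Polynomial.natDegree_sum_le_of_forall_le _ _ fun m hm => ?_
  refine (Polynomial.natDegree_C_mul_X_pow_le _ _).trans ?_
  have := Finset.mem_range.1 hm; omega

lemma Jpoly_coeff_one (α β : ℝ) (n : ℕ) : (Jpoly α β n).coeff 1 =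
    -(n : ℝ) * (Real.Gamma (α + β + n + 2) / Real.Gamma (α + 2)) := by
  have e1 : α + β + n + 1 + 1 = α + β + n + 2 := by ring
  have e2 : α + 1 + 1 = α + 2 := by ring
  rw [Jpoly, Polynomial.finsetSum_coeff]
  simp only [Polynomial.coeff_C_mul, Polynomial.coeff_X_pow]
  rcases Nat.eq_zero_or_pos n with h | h
  · subst h; simp
  · rw [Finset.sum_eq_single 1]
    · simp [e1, e2]
    · intro b _ hb; simp [Ne.symm hb]
    · intro h2; exact absurd (Finset.mem_range.2 (by omega)) h2

lemma Jf_sq_one (α β : ℝ) (n : ℕ) (hα : 0 < α) (hβ : -1 < β) :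
    WI (α - 1) β (fun u => Jf α β n u ^ 2) =
      Jf α β n 0 * (Real.Gamma (β + n + 1) * n.factorial * Real.Gamma α / Real.Gamma (α + n + 1)) := by
  have := wi_Jf_mul_one α β n hα hβ (Jpoly α β n) (Jpoly_natDegree α β n)
  simp only [Jpoly_eval] at this
  rw [← this]; simp only [sq]

lemma Jf_sq_two (α β : ℝ) (n : ℕ) (hα : 1 < α) (hβ : -1 < β) (hab : 0 < α + β) :
    WI (α - 2) β (fun u => Jf α β n u ^ 2) = WI (α - 1) β (fun u => Jf α β n u ^ 2) *
      (2 * n * (α + β + n + 1) / ((α - 1) * (α + 1)) + (α + β) / (α - 1)) := by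
  have := wi_Jf_mul_two α β n hα hβ hab (Jpoly α β n) (Jpoly_natDegree α β n)
  simp only [Jpoly_eval, Jpoly_coeff_one] at this
  have hn : (0 : ℝ) ≤ n := Nat.cast_nonneg n
  rw [Jf_sq_one α β n (by linarith) hβ]
  simp only [sq]
  rw [this, Jf_zero]
  have e1 : α + β + n + 2 = (α + β + n + 1) + 1 := by ring
  have e2 : α + 2 = (α + 1) + 1 := by ring
  have g1 := (Real.Gamma_pos_of_pos (show 0 < α + 1 by linarith)).ne'
  have h1 : α - 1 ≠ 0 := by linarith
  have h2 : α + 1 ≠ 0 := by linarith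
  have h3 : α + β + n + 1 ≠ 0 := by
    have : 0 < α + β + n + 1 := by linarith
    exact this.ne'
  rw [e1, e2, Real.Gamma_add_one h3, Real.Gamma_add_one h2]
  field_simp
  ring



lemma polar_hom (d : ℕ) (f : EuclideanSpace ℝ (Fin (d + 1)) → ℝ) (k : ℕ)
    (hf : ∀ (t : ℝ) (y : EuclideanSpace ℝ (Fin (d + 1))), 0 < t → f (t • y) = t ^ k * f y) :
    ∫ y, f y * Real.exp (-‖y‖ ^ 2) =
      (∫ y : Sph d, f y ∂(volume : Measure (EuclideanSpace ℝ (Fin (d + 1)))).toSphere) *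
        (Real.Gamma (((k : ℝ) + d + 1) / 2) / 2) := by
  let E := EuclideanSpace ℝ (Fin (d + 1))
  let μ : Measure E := volume
  have hdim : Module.finrank ℝ E - 1 = d := by
    have := finrank_euclideanSpace (𝕜 := ℝ) (ι := Fin (d + 1))
    rw [Fintype.card_fin] at this
    change Module.finrank ℝ (EuclideanSpace ℝ (Fin (d + 1))) - 1 = d
    omega
  calc ∫ y, f y * Real.exp (-‖y‖ ^ 2)
    _ = ∫ x : ({(0)}ᶜ : Set E), f x.1 * Real.exp (-‖x.1‖ ^ 2) ∂(μ.comap (↑)) := by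
      rw [integral_subtype_comap (measurableSet_singleton _).compl fun y : E ↦ f y * Real.exp (-‖y‖ ^ 2),
        restrict_compl_singleton]
    _ = ∫ z, f z.1 * (z.2.1 ^ k * Real.exp (-z.2.1 ^ 2)) ∂μ.toSphere.prod (.volumeIoiPow (Module.finrank ℝ E - 1)) := by
      rw [← μ.measurePreserving_homeomorphUnitSphereProd.integral_comp
        (Homeomorph.measurableEmbedding _)]
      congr 1; ext x
      have hx : 0 < ‖x.1‖ := norm_pos_iff.2 x.2
      simp only [homeomorphUnitSphereProd_apply_fst_coe, homeomorphUnitSphereProd_apply_snd_coe]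
      rw [hf _ _ (inv_pos.2 hx)]
      have h3 : ‖x.1‖⁻¹ ^ k * ‖x.1‖ ^ k = 1 := by
        rw [← mul_pow, inv_mul_cancel₀ hx.ne', one_pow]
      linear_combination (- f x.1 * Real.exp (-‖x.1‖ ^ 2)) * h3
    _ = (∫ y : Sph d, f y ∂μ.toSphere) * ∫ t : Ioi (0 : ℝ), (t.1 ^ k * Real.exp (-t.1 ^ 2)) ∂(.volumeIoiPow (Module.finrank ℝ E - 1)) :=
      integral_prod_mul (fun y : Sph d => f y) (fun t : Ioi (0 : ℝ) => (t.1 ^ k * Real.exp (-t.1 ^ 2)))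
    _ = _ := by
      congr 1
      rw [hdim]
      simp only [Measure.volumeIoiPow, ENNReal.ofReal]
      rw [integral_withDensity_eq_integral_smul,
        integral_subtype_comap measurableSet_Ioi fun a : ℝ ↦ Real.toNNReal (a ^ d) • (a ^ k * Real.exp (-a ^ 2)),
        setIntegral_congr_fun (g := fun a : ℝ => a ^ ((k : ℝ) + d) * Real.exp (-a ^ (2 : ℝ))) measurableSet_Ioi fun x hx ↦ ?_]
      · rw [integral_rpow_mul_exp_neg_rpow (by norm_num)]
        · ring
        · have : (0 : ℝ) ≤ k + d := by positivity
          linarith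
      · simp only [NNReal.smul_def, Real.coe_toNNReal _ (pow_nonneg hx.out.le _)]
        rw [Real.rpow_add hx.out]
        simp; ring
      · exact (measurable_subtype_coe.pow_const _).real_toNNReal

/-- Gaussian moments. -/
def gm (k : ℕ) : ℝ := if Even k then Real.Gamma (((k : ℝ) + 1) / 2) else 0

lemma gm_integral (k : ℕ) : ∫ t : ℝ, t ^ k * Real.exp (-t ^ 2) = gm k := by
  rw [gm]
  split_ifs with h
  · have e : (fun t : ℝ => t ^ k * Real.exp (-t ^ 2)) = fun t => (fun s : ℝ => s ^ k * Real.exp (-s ^ 2)) |t| := by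
      ext t; simp only [sq_abs, h.pow_abs]
    rw [e, integral_comp_abs (f := fun s : ℝ => s ^ k * Real.exp (-s ^ 2)),
      setIntegral_congr_fun (g := fun a : ℝ => a ^ (k : ℝ) * Real.exp (-a ^ (2 : ℝ))) measurableSet_Ioi fun x hx ↦ ?_]
    · rw [integral_rpow_mul_exp_neg_rpow (by norm_num)]
      · ring
      · have : (0 : ℝ) ≤ k := by positivity
        linarith
    · simp
  · have ho : Odd k := Nat.not_even_iff_odd.1 h
    have := integral_neg_eq_self (fun t : ℝ => t ^ k * Real.exp (-t ^ 2)) volume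
    simp only [ho.neg_pow, neg_sq, neg_mul, integral_neg] at this
    linarith

lemma gm_zero : gm 0 = Real.sqrt Real.pi := by
  rw [gm, if_pos (by simp)]; rw [← Real.Gamma_one_half_eq]; simp

lemma gm_one : gm 1 = 0 := by rw [gm, if_neg (by simp)]

lemma gm_rec (k : ℕ) : gm (k + 2) = ((k : ℝ) + 1) / 2 * gm k := by
  rw [gm, gm]
  have : Even (k + 2) ↔ Even k := by simp [Nat.even_add]
  simp only [this]
  split_ifs with h
  · rw [← Real.Gamma_add_one (by positivity)]
    congr 1; push_cast; ring
  · simp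

lemma gauss_prod (d : ℕ) (b : OrthonormalBasis (Fin (d + 1)) ℝ (EuclideanSpace ℝ (Fin (d + 1))))
    (s : Fin (d + 1) → ℕ) :
    ∫ y, (∏ i, ⟪b i, y⟫ ^ s i) * Real.exp (-‖y‖ ^ 2) = ∏ i, gm (s i) := by
  have h1 := b.measurePreserving_repr.integral_comp b.repr.toHomeomorph.measurableEmbedding
    (fun z : EuclideanSpace ℝ (Fin (d + 1)) => (∏ i, z i ^ s i) * Real.exp (-‖z‖ ^ 2))
  have h2 := (EuclideanSpace.volume_preserving_symm_measurableEquiv_toLp (Fin (d + 1))).integral_comp'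
    (fun z : Fin (d + 1) → ℝ => ∏ i, (z i ^ s i * Real.exp (-z i ^ 2)))
  have h3 := integral_fintype_prod_volume_eq_prod (fun (i : Fin (d + 1)) (t : ℝ) => t ^ s i * Real.exp (-t ^ 2))
  simp only [gm_integral] at h3
  rw [← h3, ← h2]
  simp only [OrthonormalBasis.repr_apply_apply, LinearIsometryEquiv.norm_map] at h1
  rw [h1]
  congr 1; ext z
  rw [Finset.prod_mul_distrib, ← Real.exp_sum, EuclideanSpace.norm_sq_eq]
  simp

lemma sph_total (d : ℕ) :
    (volume : Measure (EuclideanSpace ℝ (Fin (d + 1)))).toSphere.real univ =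
      2 * Real.sqrt Real.pi ^ (d + 1) / Real.Gamma (((d : ℝ) + 1) / 2) := by
  have h1 := polar_hom d (fun _ => 1) 0 (by simp)
  have h2 := gauss_prod d (EuclideanSpace.basisFun (Fin (d + 1)) ℝ) (fun _ => 0)
  simp only [pow_zero, Finset.prod_const_one, gm_zero] at h2
  rw [h2] at h1
  have hg := (Real.Gamma_pos_of_pos (show (0 : ℝ) < ((d : ℝ) + 1) / 2 by positivity)).ne'
  simp at h1
  rw [eq_div_iff hg, h1]
  simp
  ring

lemma sph_integral (d : ℕ) (f : Sph d → ℝ) : ∫ y, f y ∂sphMeasure d =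
    (Real.Gamma (((d : ℝ) + 1) / 2) / (2 * Real.sqrt Real.pi ^ (d + 1))) *
      ∫ y, f y ∂(volume : Measure (EuclideanSpace ℝ (Fin (d + 1)))).toSphere := by
  rw [sphMeasure, integral_smul_measure, ENNReal.toReal_inv]
  have := sph_total d
  rw [Measure.real] at this
  rw [this, inv_div, smul_eq_mul]

instance sphProb (d : ℕ) : IsProbabilityMeasure (sphMeasure d) := by
  constructor
  rw [sphMeasure, Measure.smul_apply, smul_eq_mul]
  refine ENNReal.inv_mul_cancel ?_ (measure_ne_top _ _)
  intro h
  have := sph_total d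
  rw [Measure.real, h] at this
  have hg := (Real.Gamma_pos_of_pos (show (0 : ℝ) < ((d : ℝ) + 1) / 2 by positivity))
  have hp := Real.pi_pos
  have : 0 < 2 * Real.sqrt Real.pi ^ (d + 1) / Real.Gamma (((d : ℝ) + 1) / 2) := by positivity
  simp_all

lemma sph_moment (d : ℕ) (b : OrthonormalBasis (Fin (d + 1)) ℝ (EuclideanSpace ℝ (Fin (d + 1))))
    (s : Fin (d + 1) → ℕ) :
    ∫ y : Sph d, (∏ i, ⟪b i, (y : EuclideanSpace ℝ (Fin (d + 1)))⟫ ^ s i) ∂sphMeasure d =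
      Real.Gamma (((d : ℝ) + 1) / 2) / Real.sqrt Real.pi ^ (d + 1) * (∏ i, gm (s i)) /
        Real.Gamma ((((∑ i, s i : ℕ) : ℝ) + d + 1) / 2) := by
  have h1 := polar_hom d (fun y => ∏ i, ⟪b i, y⟫ ^ s i) (∑ i, s i) (by
    intro t y _
    simp only [inner_smul_right, mul_pow, Finset.prod_mul_distrib, Finset.prod_pow_eq_pow_sum])
  rw [gauss_prod] at h1
  rw [sph_integral, h1]
  have hg := (Real.Gamma_pos_of_pos (show (0 : ℝ) < (((∑ i, s i : ℕ) : ℝ) + d + 1) / 2 by positivity)).ne'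
  have hp := Real.pi_pos
  field_simp



lemma ibp_t (b : ℝ) (hb : 0 < b) (k : ℕ) :
    WI (b - 1) (b - 1) (fun u => -2 * (k : ℝ) * (1 - 2 * u) ^ (k - 1) * (u * (1 - u)) + b * (1 - 2 * u) ^ (k + 1)) = 0 := by
  have hcont : ContinuousOn (fun u : ℝ => (1 - 2 * u) ^ k * (u ^ b * (1 - u) ^ b)) (Icc 0 1) := by
    refine Continuous.continuousOn ?_
    refine Continuous.mul (by fun_prop) (Continuous.mul ?_ ?_)
    · exact continuous_id.rpow_const (fun _ => Or.inr hb.le)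
    · exact (continuous_const.sub continuous_id).rpow_const (fun _ => Or.inr hb.le)
  have hder : ∀ u ∈ Ioo (0 : ℝ) 1, HasDerivAt (fun u : ℝ => (1 - 2 * u) ^ k * (u ^ b * (1 - u) ^ b))
      ((-2 * (k : ℝ) * (1 - 2 * u) ^ (k - 1) * (u * (1 - u)) + b * (1 - 2 * u) ^ (k + 1)) * (u ^ (b - 1) * (1 - u) ^ (b - 1))) u := by
    intro u hu
    have h0 : u ≠ 0 := hu.1.ne'
    have h1 : 0 < 1 - u := by linarith [hu.2]
    have d1 : HasDerivAt (fun u : ℝ => (1 - 2 * u)) (-2) u := by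
      simpa using ((hasDerivAt_id u).const_mul 2).const_sub 1
    have d2 : HasDerivAt (fun u : ℝ => (1 - u)) (-1) u := by
      simpa using (hasDerivAt_id u).const_sub 1
    have d3 := d1.pow k
    have d4 := (hasDerivAt_id u).rpow_const (p := b) (Or.inl h0)
    have d5 := d2.rpow_const (p := b) (Or.inl h1.ne')
    have d6 := d3.mul (d4.mul d5)
    refine d6.congr_deriv ?_
    have e1 : u ^ b = u ^ (b - 1) * u := by
      rw [Real.rpow_sub_one h0]; field_simp
    have e2 : (1 - u) ^ b = (1 - u) ^ (b - 1) * (1 - u) := by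
      rw [Real.rpow_sub_one h1.ne']; field_simp
    simp only [id, Pi.pow_apply, Pi.mul_apply]
    rw [e1, e2, pow_succ]; ring
  have hi := wi_integrable (b - 1) (b - 1) (by linarith) (by linarith)
    (fun u => -2 * (k : ℝ) * (1 - 2 * u) ^ (k - 1) * (u * (1 - u)) + b * (1 - 2 * u) ^ (k + 1)) (by fun_prop)
  have := intervalIntegral.integral_eq_sub_of_hasDerivAt_of_le zero_le_one hcont hder (by
    rw [intervalIntegrable_iff_integrableOn_Ioo_of_le zero_le_one]; exact hi)
  rw [WI, ← integral_Ioc_eq_integral_Ioo, ← intervalIntegral.integral_of_le zero_le_one, this]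
  simp [Real.zero_rpow hb.ne']

def Ib (b : ℝ) (a : ℕ) : ℝ := WI (b - 1) (b - 1) (fun u => (1 - 2 * u) ^ a)

lemma Ib_one (b : ℝ) (hb : 0 < b) : Ib b 1 = 0 := by
  have := ibp_t b hb 0
  simp only [Nat.cast_zero, mul_zero, zero_mul, zero_add] at this
  rw [wi_const_mul] at this
  exact (mul_eq_zero.1 this).resolve_left hb.ne'

lemma Ib_rec (b : ℝ) (hb : 0 < b) (a : ℕ) : (((a : ℝ) + 1) / 2 + b) * Ib b (a + 2) = ((a : ℝ) + 1) / 2 * Ib b a := by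
  have := ibp_t b hb (a + 1)
  have e : (fun u : ℝ => -2 * ((a + 1 : ℕ) : ℝ) * (1 - 2 * u) ^ (a + 1 - 1) * (u * (1 - u)) + b * (1 - 2 * u) ^ (a + 1 + 1)) =
     fun u => (((a : ℝ) + 1) / 2 + b) * (1 - 2 * u) ^ (a + 2) + (-(((a : ℝ) + 1) / 2)) * (1 - 2 * u) ^ a := by
    ext u
    simp only [Nat.add_sub_cancel]
    push_cast
    ring
  rw [e, wi_add _ _ (by linarith) (by linarith) _ _ (by fun_prop) (by fun_prop), wi_const_mul, wi_const_mul] at this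
  rw [Ib, Ib]; linarith

lemma Ib_zero (b : ℝ) (hb : 0 < b) : Ib b 0 = Real.Gamma b ^ 2 / Real.Gamma (2 * b) := by
  have := wi_pow (b - 1) (b - 1) (by linarith) (by linarith) 0
  simp only [pow_zero] at this
  simp only [Ib, pow_zero]
  rw [this]
  have e : b - 1 + ((0 : ℕ) : ℝ) + (b - 1) + 2 = 2 * b := by push_cast; ring
  simp only [e]
  simp [sq]

lemma Ib_zero_pos (b : ℝ) (hb : 0 < b) : 0 < Ib b 0 := by
  rw [Ib_zero b hb]
  have h1 := Real.Gamma_pos_of_pos hb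
  have h2 := Real.Gamma_pos_of_pos (show 0 < 2 * b by linarith)
  positivity

lemma Ib_eq (b : ℝ) (hb : 0 < b) (a : ℕ) :
    Ib b a = Ib b 0 * Real.Gamma (1 / 2 + b) / Real.sqrt Real.pi * gm a / Real.Gamma (((a : ℝ) + 1) / 2 + b) := by
  induction a using Nat.twoStepInduction with
  | zero =>
    have h1 := (Real.Gamma_pos_of_pos (show 0 < 1 / 2 + b by linarith)).ne'
    have hp := Real.pi_pos
    rw [gm_zero]; norm_num
    field_simp
  | one => rw [Ib_one b hb, gm_one]; simp
  | more a ih _ =>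
    have hr := Ib_rec b hb a
    have hpos : 0 < ((a : ℝ) + 1) / 2 + b := by positivity
    have h1 := (Real.Gamma_pos_of_pos hpos).ne'
    have hp := Real.pi_pos
    have e : (((a + 2 : ℕ) : ℝ) + 1) / 2 + b = (((a : ℝ) + 1) / 2 + b) + 1 := by push_cast; ring
    rw [e, Real.Gamma_add_one hpos.ne', gm_rec]
    have : Ib b (a + 2) = ((a : ℝ) + 1) / 2 * Ib b a / (((a : ℝ) + 1) / 2 + b) := by
      rw [eq_div_iff hpos.ne', mul_comm, hr]
    rw [this, ih]
    field_simp

lemma sph_intble {d : ℕ} {μ : Measure (Sph d)} [IsFiniteMeasure μ] {f : Sph d → ℝ} (hf : Continuous f) :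
    Integrable f μ :=
  hf.integrable_of_hasCompactSupport (HasCompactSupport.of_compactSpace f)

/-- constant in the mixed moment formula -/
def Cmom (d : ℕ) (s : Fin d → ℕ) : ℝ :=
  Real.Gamma (((d : ℝ) + 1) / 2) / Real.sqrt Real.pi ^ (d + 1) * (∏ i, gm (s i)) * Real.sqrt Real.pi /
    (Ib ((d : ℝ) / 2 + ((∑ i, s i : ℕ) : ℝ) / 2) 0 * Real.Gamma (1 / 2 + ((d : ℝ) / 2 + ((∑ i, s i : ℕ) : ℝ) / 2)))

lemma Cmom_odd (d : ℕ) (s : Fin d → ℕ) (i : Fin d) (hi : ¬ Even (s i)) : Cmom d s = 0 := by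
  have : ∏ i, gm (s i) = 0 := Finset.prod_eq_zero (Finset.mem_univ i) (by rw [gm, if_neg hi])
  rw [Cmom, this]; simp

lemma Cmom_zero (d : ℕ) : Cmom d (fun _ => 0) = 1 / Ib ((d : ℝ) / 2) 0 := by
  rw [Cmom]
  simp only [gm_zero, Finset.prod_const, Finset.card_univ, Fintype.card_fin, Finset.sum_const_zero]
  have hg := (Real.Gamma_pos_of_pos (show (0 : ℝ) < ((d : ℝ) + 1) / 2 by positivity)).ne'
  have hp := Real.pi_pos
  have e : 1 / 2 + ((d : ℝ) / 2 + ((0 : ℕ) : ℝ) / 2) = ((d : ℝ) + 1) / 2 := by push_cast; ring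
  have e2 : ((d : ℝ) / 2 + ((0 : ℕ) : ℝ) / 2) = (d : ℝ) / 2 := by push_cast; ring
  rw [e, e2, pow_succ]
  field_simp

lemma mom_pow (d : ℕ) (hd : 0 < d) (b : OrthonormalBasis (Fin (d + 1)) ℝ (EuclideanSpace ℝ (Fin (d + 1))))
    (s : Fin d → ℕ) (a : ℕ) :
    ∫ y : Sph d, (⟪b 0, (y : EuclideanSpace ℝ (Fin (d + 1)))⟫ ^ a *
      ∏ i, ⟪b (Fin.succ i), (y : EuclideanSpace ℝ (Fin (d + 1)))⟫ ^ s i) ∂sphMeasure d =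
      Cmom d s * Ib ((d : ℝ) / 2 + ((∑ i, s i : ℕ) : ℝ) / 2) a := by
  have h := sph_moment d b (Fin.cons a s)
  simp only [Fin.prod_univ_succ, Fin.cons_zero, Fin.cons_succ, Fin.sum_univ_succ] at h
  rw [h]
  have hd' : (0 : ℝ) < d := by exact_mod_cast hd
  have hb : 0 < (d : ℝ) / 2 + ((∑ i, s i : ℕ) : ℝ) / 2 := by positivity
  rw [Ib_eq _ hb a, Cmom]
  have e : (((a + ∑ i, s i : ℕ) : ℝ) + d + 1) / 2 = ((a : ℝ) + 1) / 2 + ((d : ℝ) / 2 + ((∑ i, s i : ℕ) : ℝ) / 2) := by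
    push_cast; ring
  rw [e]
  have h1 := (Real.Gamma_pos_of_pos (show 0 < 1 / 2 + ((d : ℝ) / 2 + ((∑ i, s i : ℕ) : ℝ) / 2) by linarith)).ne'
  have h2 := (Ib_zero_pos _ hb).ne'
  have hp := Real.pi_pos
  generalize ((d : ℝ) / 2 + ((∑ i, s i : ℕ) : ℝ) / 2) = B at *
  field_simp

lemma mom_poly (d : ℕ) (hd : 0 < d) (b : OrthonormalBasis (Fin (d + 1)) ℝ (EuclideanSpace ℝ (Fin (d + 1))))
    (s : Fin d → ℕ) (p : Polynomial ℝ) :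
    ∫ y : Sph d, (p.eval ⟪b 0, (y : EuclideanSpace ℝ (Fin (d + 1)))⟫ *
      ∏ i, ⟪b (Fin.succ i), (y : EuclideanSpace ℝ (Fin (d + 1)))⟫ ^ s i) ∂sphMeasure d =
      Cmom d s * WI ((d : ℝ) / 2 + ((∑ i, s i : ℕ) : ℝ) / 2 - 1) ((d : ℝ) / 2 + ((∑ i, s i : ℕ) : ℝ) / 2 - 1)
        (fun u => p.eval (1 - 2 * u)) := by
  have hd' : (0 : ℝ) < d := by exact_mod_cast hd
  have hb : 0 < (d : ℝ) / 2 + ((∑ i, s i : ℕ) : ℝ) / 2 := by positivity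
  simp only [Polynomial.eval_eq_sum_range, Finset.sum_mul]
  rw [integral_finsetSum, wi_sum _ _ _ (by linarith) (by linarith), Finset.mul_sum]
  · refine Finset.sum_congr rfl fun k _ => ?_
    simp only [mul_assoc]
    rw [integral_const_mul, mom_pow d hd, wi_const_mul, Ib]
    ring
  · intro i; fun_prop
  · intro i _
    exact sph_intble (by fun_prop)



abbrev EE (d : ℕ) := EuclideanSpace ℝ (Fin (d + 1))
abbrev OB (d : ℕ) := OrthonormalBasis (Fin (d + 1)) ℝ (EE d)

def SP {d : ℕ} (b : OB d) (k : ℕ) (f : Sph d → ℝ) : Prop :=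
  ∃ p : MvPolynomial (Fin (d + 1)) ℝ, p.totalDegree ≤ k ∧
    ∀ y : Sph d, f y = MvPolynomial.eval (fun i => ⟪b i, (y : EE d)⟫) p

namespace SP
variable {d : ℕ} {b : OB d}

lemma mono {k l : ℕ} {f : Sph d → ℝ} (h : SP b k f) (hkl : k ≤ l) : SP b l f := by
  obtain ⟨p, hp, hf⟩ := h; exact ⟨p, hp.trans hkl, hf⟩

lemma const (c : ℝ) : SP b 0 (fun _ => c) := ⟨MvPolynomial.C c, by simp, by simp⟩

lemma add {k : ℕ} {f g : Sph d → ℝ} (hf : SP b k f) (hg : SP b k g) : SP b k (fun y => f y + g y) := by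
  obtain ⟨p, hp, hf⟩ := hf
  obtain ⟨q, hq, hg⟩ := hg
  exact ⟨p + q, (MvPolynomial.totalDegree_add p q).trans (max_le hp hq), by simp [hf, hg]⟩

lemma mul {k l : ℕ} {f g : Sph d → ℝ} (hf : SP b k f) (hg : SP b l g) : SP b (k + l) (fun y => f y * g y) := by
  obtain ⟨p, hp, hf⟩ := hf
  obtain ⟨q, hq, hg⟩ := hg
  exact ⟨p * q, (MvPolynomial.totalDegree_mul p q).trans (add_le_add hp hq), by simp [hf, hg]⟩

lemma const_mul {k : ℕ} {f : Sph d → ℝ} (c : ℝ) (hf : SP b k f) : SP b k (fun y => c * f y) := by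
  simpa using (const c).mul hf

lemma pow {k : ℕ} {f : Sph d → ℝ} (hf : SP b k f) (m : ℕ) : SP b (m * k) (fun y => f y ^ m) := by
  induction m with
  | zero => simpa using const 1
  | succ m ih => simpa [pow_succ, add_mul] using ih.mul hf

lemma sum {ι : Type*} (s : Finset ι) {k : ℕ} {f : ι → Sph d → ℝ} (hf : ∀ i ∈ s, SP b k (f i)) :
    SP b k (fun y => ∑ i ∈ s, f i y) := by
  classical
  induction s using Finset.induction_on with
  | empty => simpa using (const 0).mono (Nat.zero_le k)
  | insert i s hi ih =>
    simp only [Finset.sum_insert hi]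
    exact (hf i (Finset.mem_insert_self _ _)).add (ih fun j hj => hf j (Finset.mem_insert_of_mem hj))

lemma prod {ι : Type*} (s : Finset ι) {k : ι → ℕ} {f : ι → Sph d → ℝ} (hf : ∀ i ∈ s, SP b (k i) (f i)) :
    SP b (∑ i ∈ s, k i) (fun y => ∏ i ∈ s, f i y) := by
  classical
  induction s using Finset.induction_on with
  | empty => simpa using const 1
  | insert i s hi ih =>
    simp only [Finset.prod_insert hi, Finset.sum_insert hi]
    exact (hf i (Finset.mem_insert_self _ _)).mul (ih fun j hj => hf j (Finset.mem_insert_of_mem hj))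

lemma lin (v : EE d) : SP b 1 (fun y => ⟪v, (y : EE d)⟫) := by
  have h : (fun y : Sph d => ⟪v, (y : EE d)⟫) = fun y : Sph d => ∑ i, ⟪v, b i⟫ * ⟪b i, (y : EE d)⟫ := by
    ext y; rw [b.sum_inner_mul_inner]
  rw [h]
  refine sum _ fun i _ => const_mul _ ?_
  exact ⟨MvPolynomial.X i, by simp, by simp⟩

lemma poly {k m : ℕ} {f : Sph d → ℝ} (hf : SP b k f) (q : Polynomial ℝ) (hq : q.natDegree ≤ m) :
    SP b (m * k) (fun y => q.eval (f y)) := by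
  simp only [Polynomial.eval_eq_sum_range]
  refine sum _ fun i hi => const_mul _ ((hf.pow i).mono ?_)
  have : i ≤ m := (Nat.lt_succ_iff.1 (Finset.mem_range.1 hi)).trans hq
  exact Nat.mul_le_mul_right k this

lemma change {k : ℕ} {f : Sph d → ℝ} (b' : OB d) (hf : SP b k f) : SP b' k f := by
  obtain ⟨p, hp, hf⟩ := hf
  have : f = fun y : Sph d => ∑ s ∈ p.support, p.coeff s * ∏ i, ⟪b i, (y : EE d)⟫ ^ s i := by
    ext y; rw [hf, MvPolynomial.eval_eq']
  rw [this]
  refine sum _ fun s hs => const_mul _ ?_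
  refine (prod Finset.univ (k := fun i => s i * 1) fun i _ => (lin (b := b') (b i)).pow (s i)).mono ?_
  have h := MvPolynomial.le_totalDegree hs
  rw [Finsupp.sum_fintype _ _ (fun _ => rfl)] at h
  simpa using h.trans hp

lemma continuous {k : ℕ} {f : Sph d → ℝ} (hf : SP b k f) : Continuous f := by
  obtain ⟨p, hp, hf⟩ := hf
  have : f = fun y : Sph d => ∑ s ∈ p.support, p.coeff s * ∏ i, ⟪b i, (y : EE d)⟫ ^ s i := by
    ext y; rw [hf, MvPolynomial.eval_eq']
  rw [this]
  fun_prop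

end SP

abbrev stdB (d : ℕ) : OB d := EuclideanSpace.basisFun (Fin (d + 1)) ℝ

lemma stdB_inner {d : ℕ} (y : EE d) (i : Fin (d + 1)) : ⟪stdB d i, y⟫ = y i := by
  simp [EuclideanSpace.inner_single_left]

lemma SP.isSphPoly {d k : ℕ} {b : OB d} {f : Sph d → ℝ} (hf : SP b k f) (n : ℝ) (hn : (k : ℝ) < n) :
    IsSphPoly d n f := by
  obtain ⟨p, hp, hf⟩ := hf.change (stdB d)
  refine ⟨p, lt_of_le_of_lt (by exact_mod_cast hp) hn, fun y => ?_⟩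
  rw [hf]; simp only [stdB_inner]

lemma IsSphPoly.sp {d : ℕ} {n : ℝ} {f : Sph d → ℝ} (hf : IsSphPoly d n f) (b : OB d) :
    ∃ k : ℕ, (k : ℝ) < n ∧ SP b k f := by
  obtain ⟨p, hp, hf⟩ := hf
  refine ⟨p.totalDegree, hp, SP.change (b := stdB d) b ⟨p, le_rfl, fun y => ?_⟩⟩
  rw [hf]; simp only [stdB_inner]

lemma exists_basis {d : ℕ} (x : Sph d) : ∃ b : OB d, b 0 = x := by
  have hx : ‖(x : EE d)‖ = 1 := by simp
  obtain ⟨b, hb⟩ := Orthonormal.exists_orthonormalBasis_extension_of_card_eq (𝕜 := ℝ) (E := EE d)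
    (ι := Fin (d + 1)) (by simp) (v := fun _ => (x : EE d)) (s := {0}) (by
      constructor
      · intro i; simp
      · intro i j hij; exact absurd (Subsingleton.elim i j) hij)
  exact ⟨b, hb 0 rfl⟩

def kap (d M : ℕ) : ℝ := Ib ((d : ℝ) / 2) 0 * (((d : ℝ) / 2 + M) / (Real.Gamma ((d : ℝ) / 2) * M.factorial))

lemma sphK_eq (d M : ℕ) (hd : 2 ≤ d) (t : ℝ) :
    sphK d (M + 1) t = kap d M * Jf ((d : ℝ) / 2) ((d : ℝ) / 2 - 1) M ((1 - t) / 2) := by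
  have hd' : (2 : ℝ) ≤ d := by exact_mod_cast hd
  rw [sphK, jacobiK_eq _ (by linarith), kap, Ib_zero _ (by linarith), omegaS, omegaS]
  have e1 : ((d - 1 : ℕ) : ℝ) + 1 = d := by
    rw [Nat.cast_sub (by omega)]; push_cast; ring
  have e2 : (d : ℝ) / 2 - 1 + 1 = (d : ℝ) / 2 := by ring
  have e3 : 2 * ((d : ℝ) / 2 - 1) + 1 = (d : ℝ) - 1 := by ring
  have e4 : 2 * ((d : ℝ) / 2) = d := by ring
  have e5 : (d : ℝ) / 2 - 1 + M + 1 = (d : ℝ) / 2 + M := by ring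
  rw [e1, e2, e3, e4, e5]
  have dup := Real.Gamma_mul_Gamma_add_half ((d : ℝ) / 2)
  have e6 : (d : ℝ) / 2 + 1 / 2 = ((d : ℝ) + 1) / 2 := by ring
  have e7 : (1 : ℝ) - d = -((d : ℝ) - 1) := by ring
  rw [e4, e6, e7, Real.rpow_neg (by norm_num)] at dup
  have hp : Real.pi ^ (((d : ℝ) + 1) / 2) = Real.pi ^ ((d : ℝ) / 2) * Real.sqrt Real.pi := by
    rw [Real.sqrt_eq_rpow, ← Real.rpow_add Real.pi_pos]; congr 1; ring
  rw [hp]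
  have g1 := Real.Gamma_pos_of_pos (show 0 < (d : ℝ) / 2 by linarith)
  have g2 := Real.Gamma_pos_of_pos (show 0 < ((d : ℝ) + 1) / 2 by linarith)
  have g3 := Real.Gamma_pos_of_pos (show 0 < (d : ℝ) by linarith)
  have g4 : (0 : ℝ) < 2 ^ ((d : ℝ) - 1) := by positivity
  have g5 : 0 < Real.pi ^ ((d : ℝ) / 2) := Real.rpow_pos_of_pos Real.pi_pos _
  have g6 : 0 < Real.sqrt Real.pi := Real.sqrt_pos.2 Real.pi_pos
  have g7 : (0 : ℝ) < M.factorial := by exact_mod_cast M.factorial_pos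
  have key : Real.sqrt Real.pi / (Real.Gamma (((d : ℝ) + 1) / 2) * 2 ^ ((d : ℝ) - 1)) =
      Real.Gamma ((d : ℝ) / 2) / Real.Gamma d := by
    rw [div_eq_div_iff (by positivity) (by positivity)]
    field_simp at dup
    linarith
  have := congrArg (fun z => z * (((d : ℝ) / 2 + M) / M.factorial * Jf ((d : ℝ) / 2) ((d : ℝ) / 2 - 1) M ((1 - t) / 2))) key
  generalize Jf ((d : ℝ) / 2) ((d : ℝ) / 2 - 1) M ((1 - t) / 2) = J at *
  generalize Real.Gamma (((d : ℝ) + 1) / 2) = G2 at *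
  generalize Real.Gamma ((d : ℝ) / 2) = G1 at *
  generalize (2 : ℝ) ^ ((d : ℝ) - 1) = T at *
  generalize Real.pi ^ ((d : ℝ) / 2) = Pp at *
  generalize Real.sqrt Real.pi = Sp at *
  field_simp
  field_simp at this
  linarith

lemma wi_K (d M : ℕ) (hd : 2 ≤ d) (q : Polynomial ℝ) (hq : q.natDegree ≤ M) :
    WI ((d : ℝ) / 2 - 1) ((d : ℝ) / 2 - 1) (fun u => sphK d (M + 1) (1 - 2 * u) * q.eval u) =
      Ib ((d : ℝ) / 2) 0 * q.eval 0 := by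
  have hd' : (2 : ℝ) ≤ d := by exact_mod_cast hd
  have e0 : ∀ u : ℝ, (1 - (1 - 2 * u)) / 2 = u := fun u => by ring
  simp only [sphK_eq d M hd, e0, mul_assoc]
  rw [wi_const_mul, wi_Jf_mul_one _ _ _ (by linarith) (by linarith) q hq, kap]
  have e1 : (d : ℝ) / 2 - 1 + M + 1 = (d : ℝ) / 2 + M := by ring
  have hM : (0 : ℝ) ≤ M := Nat.cast_nonneg M
  rw [e1, Real.Gamma_add_one (show (d : ℝ) / 2 + M ≠ 0 by positivity)]
  have g1 := Real.Gamma_pos_of_pos (show 0 < (d : ℝ) / 2 by linarith)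
  have g2 := Real.Gamma_pos_of_pos (show 0 < (d : ℝ) / 2 + M by linarith)
  have g7 : (0 : ℝ) < M.factorial := by exact_mod_cast M.factorial_pos
  have g8 : (d : ℝ) / 2 + M ≠ 0 := by positivity
  generalize (d : ℝ) / 2 + M = z at *
  generalize (d : ℝ) / 2 = w at *
  field_simp

lemma sphK_poly (d M : ℕ) (hd : 2 ≤ d) :
    ∃ p : Polynomial ℝ, p.natDegree ≤ M ∧ ∀ t, p.eval t = sphK d (M + 1) t := by
  refine ⟨Polynomial.C (kap d M) * (Jpoly ((d : ℝ) / 2) ((d : ℝ) / 2 - 1) M).comp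
    (Polynomial.C (1 / 2) - Polynomial.C (1 / 2) * Polynomial.X), ?_, fun t => ?_⟩
  · refine (Polynomial.natDegree_C_mul_le _ _).trans ?_
    refine Polynomial.natDegree_comp_le.trans ?_
    have : (Polynomial.C (1 / 2 : ℝ) - Polynomial.C (1 / 2) * Polynomial.X).natDegree ≤ 1 := by
      compute_degree
    calc _ ≤ M * 1 := Nat.mul_le_mul (Jpoly_natDegree _ _ _) this
      _ = M := mul_one M
  · rw [sphK_eq d M hd]
    simp only [Polynomial.eval_mul, Polynomial.eval_C, Polynomial.eval_comp, Polynomial.eval_sub,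
      Polynomial.eval_X, Jpoly_eval]
    congr 2; ring

/-- zonal integrals -/
lemma zonal (d : ℕ) (hd : 2 ≤ d) (x : Sph d) (p : Polynomial ℝ) :
    ∫ y : Sph d, p.eval (ip x y) ∂sphMeasure d =
      WI ((d : ℝ) / 2 - 1) ((d : ℝ) / 2 - 1) (fun u => p.eval (1 - 2 * u)) / Ib ((d : ℝ) / 2) 0 := by
  obtain ⟨b, hb⟩ := exists_basis x
  have := mom_poly d (by omega) b (fun _ => 0) p
  simp only [pow_zero, Finset.prod_const_one, mul_one, hb, Cmom_zero, Finset.sum_const_zero, Nat.cast_zero, zero_div,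
    add_zero] at this
  simp only [ip]
  rw [this]; ring

lemma reproducing (d M : ℕ) (hd : 2 ≤ d) (x : Sph d) (b' : OB d) (f : Sph d → ℝ) (hf : SP b' M f) :
    ∫ y : Sph d, f y * sphK d (M + 1) (ip x y) ∂sphMeasure d = f x := by
  obtain ⟨b, hb⟩ := exists_basis x
  obtain ⟨p, hp, hf⟩ := hf.change b
  obtain ⟨k, hk, hke⟩ := sphK_poly d M hd
  have hd' : (2 : ℝ) ≤ d := by exact_mod_cast hd
  have hI := (Ib_zero_pos ((d : ℝ) / 2) (by linarith)).ne'
  have hmono : ∀ s : Fin (d + 1) →₀ ℕ, s ∈ p.support →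
      ∫ y : Sph d, (∏ i, ⟪b i, (y : EE d)⟫ ^ s i) * sphK d (M + 1) (ip x y) ∂sphMeasure d =
        ∏ i, ⟪b i, (x : EE d)⟫ ^ s i := by
    intro s hs
    have hdeg := MvPolynomial.le_totalDegree hs
    rw [Finsupp.sum_fintype _ _ (fun _ => rfl), Fin.sum_univ_succ] at hdeg
    have h := mom_poly d (by omega) b (fun i => s i.succ) (k * Polynomial.X ^ s 0)
    have e : (fun y : Sph d => (∏ i, ⟪b i, (y : EE d)⟫ ^ s i) * sphK d (M + 1) (ip x y)) =
        fun y : Sph d => ((k * Polynomial.X ^ s 0).eval ⟪b 0, (y : EE d)⟫ * ∏ i : Fin d, ⟪b (Fin.succ i), (y : EE d)⟫ ^ s i.succ) := by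
      ext y
      rw [Fin.prod_univ_succ]
      simp only [Polynomial.eval_mul, hke, Polynomial.eval_pow, Polynomial.eval_X, hb, ip]
      ring
    rw [e, h]
    have hx1 : ⟪b 0, (x : EE d)⟫ = 1 := by
      rw [← hb, b.inner_eq_one]
    have hxs : ∀ i : Fin d, ⟪b i.succ, (x : EE d)⟫ = 0 := by
      intro i; rw [← hb, b.inner_eq_zero (Fin.succ_ne_zero i)]
    rw [Fin.prod_univ_succ, hx1]
    simp only [hxs, one_pow, one_mul]
    by_cases hall : ∀ i : Fin d, Even (s i.succ)
    · -- all even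
      have hev : Even (∑ i : Fin d, s i.succ) := Finset.even_sum _ fun i _ => hall i
      obtain ⟨j, hj⟩ := hev
      have hw : WI ((d : ℝ) / 2 + ((∑ i : Fin d, s i.succ : ℕ) : ℝ) / 2 - 1) ((d : ℝ) / 2 + ((∑ i : Fin d, s i.succ : ℕ) : ℝ) / 2 - 1)
          (fun u => (k * Polynomial.X ^ s 0).eval (1 - 2 * u)) =
          Ib ((d : ℝ) / 2) 0 * (if j = 0 then 1 else 0) := by
        have := wi_K d M hd ((Polynomial.X * (1 - Polynomial.X)) ^ j * (1 - 2 * Polynomial.X) ^ s 0) (by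
          have h1 : (Polynomial.X * (1 - Polynomial.X) : Polynomial ℝ).natDegree ≤ 2 := by
            have : (1 - Polynomial.X : Polynomial ℝ).natDegree ≤ 1 := by compute_degree
            refine Polynomial.natDegree_mul_le.trans ?_
            rw [Polynomial.natDegree_X]; omega
          have h2 : (1 - 2 * Polynomial.X : Polynomial ℝ).natDegree ≤ 1 := by compute_degree
          refine Polynomial.natDegree_mul_le.trans ?_
          have h3 := Polynomial.natDegree_pow_le_of_le j h1
          have h4 := Polynomial.natDegree_pow_le_of_le (s 0) h2
          omega)
        have e9 : (Polynomial.eval 0 ((Polynomial.X * (1 - Polynomial.X)) ^ j * (1 - 2 * Polynomial.X) ^ s 0) : ℝ) = if j = 0 then 1 else 0 := by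
          simp [zero_pow_eq]
        rw [e9] at this
        rw [← this, WI, WI]
        refine setIntegral_congr_fun measurableSet_Ioo fun u hu => ?_
        have hu1 : 0 < 1 - u := by linarith [hu.2]
        have e3 : (d : ℝ) / 2 + ((∑ i : Fin d, s i.succ : ℕ) : ℝ) / 2 - 1 = ((d : ℝ) / 2 - 1) + (j : ℕ) := by
          rw [hj]; push_cast; ring
        rw [e3, Real.rpow_add hu.1, Real.rpow_add hu1, Real.rpow_natCast, Real.rpow_natCast]
        simp only [Polynomial.eval_mul, hke, Polynomial.eval_pow, Polynomial.eval_X, Polynomial.eval_sub,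
          Polynomial.eval_one, Polynomial.eval_ofNat, mul_pow]
        ring
      rw [hw]
      by_cases hj0 : j = 0
      · have hz : ∀ i : Fin d, s i.succ = 0 := by
          subst hj0
          simpa using hj
        simp only [hz, pow_zero, Finset.prod_const_one, hj0, if_true, mul_one]
        rw [Cmom_zero]; field_simp
      · rw [if_neg hj0]
        have : ∃ i : Fin d, s i.succ ≠ 0 := by
          by_contra hc
          push Not at hc
          simp [hc] at hj
          omega
        obtain ⟨i, hi⟩ := this
        rw [Finset.prod_eq_zero (Finset.mem_univ i) (by simp [hi])]
        simp
    · push Not at hall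
      obtain ⟨i, hi⟩ := hall
      rw [Cmom_odd d _ i hi, zero_mul]
      rw [Finset.prod_eq_zero (Finset.mem_univ i)]
      rw [zero_pow]
      intro h0; rw [h0] at hi; simp at hi
  have hcK : Continuous fun y : Sph d => sphK d (M + 1) (ip x y) := by
    simp only [← hke, ip]; fun_prop
  have e : (fun y => f y * sphK d (M + 1) (ip x y)) = fun y : Sph d =>
      ∑ s ∈ p.support, p.coeff s * ((∏ i, ⟪b i, (y : EE d)⟫ ^ s i) * sphK d (M + 1) (ip x y)) := by
    ext y; rw [hf, MvPolynomial.eval_eq', Finset.sum_mul]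
    simp only [mul_assoc]
  rw [e, integral_finsetSum]
  · rw [hf, MvPolynomial.eval_eq']
    refine Finset.sum_congr rfl fun s hs => ?_
    rw [integral_const_mul, hmono s hs]
  · intro s _
    exact sph_intble (by fun_prop)



def Sp : ℕ → Polynomial ℝ
  | 0 => Polynomial.X
  | i + 1 => 4 * Sp i * (1 - Sp i)

lemma Sp_deg (i : ℕ) : (Sp i).natDegree ≤ 2 ^ i := by
  induction i with
  | zero => simp [Sp]
  | succ i ih =>
    rw [Sp]
    refine Polynomial.natDegree_mul_le.trans ?_
    have h1 : (4 * Sp i).natDegree ≤ 2 ^ i := by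
      have : (4 : Polynomial ℝ) = Polynomial.C 4 := rfl
      rw [this]
      exact (Polynomial.natDegree_C_mul_le _ _).trans ih
    have h2 : (1 - Sp i).natDegree ≤ 2 ^ i := by
      refine (Polynomial.natDegree_sub_le _ _).trans ?_
      simpa using ih
    rw [pow_succ]; omega

lemma Sp_sin (i : ℕ) (θ : ℝ) : (Sp i).eval (Real.sin θ ^ 2) = Real.sin (2 ^ i * θ) ^ 2 := by
  induction i with
  | zero => simp [Sp]
  | succ i ih =>
    rw [Sp]
    simp only [Polynomial.eval_mul, Polynomial.eval_sub, Polynomial.eval_one, Polynomial.eval_ofNat, ih]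
    have : (2 : ℝ) ^ (i + 1) * θ = 2 * (2 ^ i * θ) := by ring
    rw [this, Real.sin_two_mul, ← Real.cos_sq']
    ring

lemma exists_theta (u : ℝ) (hu : u ∈ Icc (0 : ℝ) 1) :
    ∃ θ : ℝ, 0 ≤ θ ∧ θ ≤ Real.pi / 2 ∧ Real.sin θ ^ 2 = u ∧ Real.sqrt u ≤ θ := by
  have h0 : 0 ≤ Real.sqrt u := Real.sqrt_nonneg u
  have h1 : Real.sqrt u ≤ 1 := Real.sqrt_le_one.2 hu.2
  have hs : Real.sin (Real.arcsin (Real.sqrt u)) = Real.sqrt u := Real.sin_arcsin (by linarith) h1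
  have ht : 0 ≤ Real.arcsin (Real.sqrt u) := Real.arcsin_nonneg.2 h0
  refine ⟨Real.arcsin (Real.sqrt u), ht, Real.arcsin_le_pi_div_two _, ?_, ?_⟩
  · rw [hs, Real.sq_sqrt hu.1]
  · have := Real.sin_le ht
    rwa [hs] at this

lemma Sp_nonneg (i : ℕ) (u : ℝ) (hu : u ∈ Icc (0 : ℝ) 1) : 0 ≤ (Sp i).eval u := by
  obtain ⟨θ, _, _, h, _⟩ := exists_theta u hu
  rw [← h, Sp_sin]; positivity

lemma Sp_le_one (i : ℕ) (u : ℝ) (hu : u ∈ Icc (0 : ℝ) 1) : (Sp i).eval u ≤ 1 := by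
  obtain ⟨θ, _, _, h, _⟩ := exists_theta u hu
  rw [← h, Sp_sin]; exact Real.sin_sq_le_one _

lemma Sp_le (i : ℕ) (u : ℝ) (hu : u ∈ Icc (0 : ℝ) 1) : (Sp i).eval u ≤ 4 ^ i * u := by
  induction i with
  | zero => simp [Sp]
  | succ i ih =>
    rw [Sp]
    simp only [Polynomial.eval_mul, Polynomial.eval_sub, Polynomial.eval_one, Polynomial.eval_ofNat]
    have h0 := Sp_nonneg i u hu
    rw [pow_succ]
    nlinarith

lemma sum_upper (s : ℝ) (hs : 0 < s) (hs1 : s < 1) (I : ℕ) (u : ℝ) (hu : u ∈ Icc (0 : ℝ) 1) (hu0 : 0 < u) :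
    ∑ i ∈ Finset.range (I + 1), ((2 : ℝ) ^ (-s)) ^ i * (Sp i).eval u ≤
      (4 + 1 / (1 - (2 : ℝ) ^ (-s))) * Real.sqrt u ^ s := by
  set v := Real.sqrt u with hv
  have hv0 : 0 < v := Real.sqrt_pos.2 hu0
  have hv1 : v ≤ 1 := Real.sqrt_le_one.2 hu.2
  have huv : u = v ^ 2 := (Real.sq_sqrt hu.1).symm
  set q : ℝ := (2 : ℝ) ^ (-s) with hq
  have hq0 : 0 < q := by positivity
  have hq1 : q < 1 := Real.rpow_lt_one_of_one_lt_of_neg (by norm_num) (by linarith)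
  have hq2 : 1 / 2 ≤ q := by
    have : (2 : ℝ) ^ (-1 : ℝ) ≤ (2 : ℝ) ^ (-s) := Real.rpow_le_rpow_of_exponent_le (by norm_num) (by linarith)
    rw [Real.rpow_neg_one] at this
    rw [hq]; linarith
  have hex : ∃ i : ℕ, 1 ≤ 2 ^ i * v := by
    obtain ⟨i, hi⟩ := pow_unbounded_of_one_lt (1 / v) (by norm_num : (1 : ℝ) < 2)
    refine ⟨i, ?_⟩
    rw [div_lt_iff₀ hv0] at hi; exact hi.le
  classical
  set m := Nat.find hex with hm
  have hm1 : 1 ≤ 2 ^ m * v := Nat.find_spec hex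
  have hm2 : 2 ^ m * v ≤ 2 := by
    rcases Nat.eq_zero_or_pos m with h | h
    · rw [h]; linarith
    · have := Nat.find_min hex (m := m - 1) (by omega)
      push Not at this
      have e : (2 : ℝ) ^ m = 2 ^ (m - 1) * 2 := by rw [← pow_succ]; congr 1; omega
      rw [e]; linarith
  -- q^i = (2^i)^(-s)
  have hqi : ∀ i : ℕ, q ^ i = ((2 : ℝ) ^ i) ^ (-s) := by
    intro i
    rw [hq, ← Real.rpow_natCast, ← Real.rpow_mul (by norm_num), ← Real.rpow_natCast, ← Real.rpow_mul (by norm_num), mul_comm]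
  have hqm : q ^ m ≤ v ^ s := by
    rw [hqi, Real.rpow_neg (by positivity), inv_le_iff_one_le_mul₀ (by positivity), ← Real.mul_rpow hv0.le (by positivity)]
    exact Real.one_le_rpow (by linarith) hs.le
  have h1 : ∑ i ∈ Finset.range (I + 1), q ^ i * (Sp i).eval u ≤
      ∑ i ∈ Finset.range (m + (I + 1)), q ^ i * (Sp i).eval u := by
    refine Finset.sum_le_sum_of_subset_of_nonneg (Finset.range_mono (by omega)) fun i _ _ => ?_
    have := Sp_nonneg i u hu
    positivity
  have h2 : ∑ i ∈ Finset.range m, q ^ i * (Sp i).eval u ≤ 4 * v ^ s := by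
    have hb : ∑ i ∈ Finset.range m, q ^ i * (Sp i).eval u ≤ u * ∑ i ∈ Finset.range m, (4 * q) ^ i := by
      rw [Finset.mul_sum]
      refine Finset.sum_le_sum fun i _ => ?_
      have := Sp_le i u hu
      calc q ^ i * (Sp i).eval u ≤ q ^ i * (4 ^ i * u) := by gcongr
        _ = u * (4 * q) ^ i := by rw [mul_pow]; ring
    have hgs : ∑ i ∈ Finset.range m, (4 * q) ^ i ≤ (4 * q) ^ m := by
      have hg := geom_sum_mul (4 * q) m
      have hnn : 0 ≤ ∑ i ∈ Finset.range m, (4 * q) ^ i := Finset.sum_nonneg fun i _ => by positivity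
      nlinarith
    have e : u * (4 * q) ^ m = (2 ^ m * v) ^ 2 * q ^ m := by
      rw [huv, mul_pow, mul_pow, ← pow_mul, mul_comm m 2, pow_mul]; norm_num; ring
    calc _ ≤ u * (4 * q) ^ m := hb.trans (mul_le_mul_of_nonneg_left hgs hu.1)
      _ = (2 ^ m * v) ^ 2 * q ^ m := e
      _ ≤ 2 ^ 2 * v ^ s := by gcongr
      _ = 4 * v ^ s := by norm_num
  have h3 : ∑ k ∈ Finset.range (I + 1), q ^ (m + k) * (Sp (m + k)).eval u ≤ 1 / (1 - q) * v ^ s := by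
    calc _ ≤ ∑ k ∈ Finset.range (I + 1), q ^ m * q ^ k := by
            refine Finset.sum_le_sum fun k _ => ?_
            rw [← pow_add]
            have := Sp_le_one (m + k) u hu
            exact mul_le_of_le_one_right (by positivity) this
      _ = q ^ m * ∑ k ∈ Finset.range (I + 1), q ^ k := by rw [Finset.mul_sum]
      _ ≤ v ^ s * (1 / (1 - q)) := by
            have hg := geom_sum_mul q (I + 1)
            have hs2 : ∑ k ∈ Finset.range (I + 1), q ^ k ≤ 1 / (1 - q) := by
              rw [le_div_iff₀ (by linarith)]
              have : 0 ≤ q ^ (I + 1) := by positivity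
              linarith
            have hnn : 0 ≤ ∑ i ∈ Finset.range (I + 1), q ^ i := Finset.sum_nonneg fun i _ => by positivity
            exact mul_le_mul hqm hs2 hnn (by positivity)
      _ = _ := by ring
  rw [Finset.sum_range_add _ m (I + 1)] at h1
  linarith

lemma sum_lower (s : ℝ) (hs : 0 < s) (hs1 : s < 1) (n : ℕ) (hn : 1 ≤ n) (u : ℝ) (hu : u ∈ Icc (0 : ℝ) 1) :
    Real.sqrt u ^ s ≤ 4 * ((n : ℝ) ^ (-s) + ∑ i ∈ Finset.range (Nat.log 2 n + 1), ((2 : ℝ) ^ (-s)) ^ i * (Sp i).eval u) := by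
  obtain ⟨θ, h0, h1, h2, h3⟩ := exists_theta u hu
  have hn' : (1 : ℝ) ≤ n := by exact_mod_cast hn
  set I := Nat.log 2 n with hI
  have hIn : (n : ℝ) < 2 ^ (I + 1) := by exact_mod_cast Nat.lt_pow_succ_log_self (by norm_num) n
  have hnn : 0 ≤ ∑ i ∈ Finset.range (I + 1), ((2 : ℝ) ^ (-s)) ^ i * (Sp i).eval u :=
    Finset.sum_nonneg fun i _ => mul_nonneg (by positivity) (Sp_nonneg i u hu)
  have hns : 0 < (n : ℝ) ^ (-s) := by positivity
  have hpi := Real.pi_pos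
  have hpi4 := Real.pi_le_four
  have two_s : (2 : ℝ) ^ s ≤ 2 := by
    calc (2 : ℝ) ^ s ≤ 2 ^ (1 : ℝ) := Real.rpow_le_rpow_of_exponent_le (by norm_num) hs1.le
      _ = 2 := by norm_num
  rcases le_or_gt (2 ^ I * θ) (Real.pi / 4) with h | h
  · have hθ : θ ≤ 2 / n := by
      rw [le_div_iff₀ (by linarith)]
      have : θ * n ≤ θ * 2 ^ (I + 1) := by gcongr
      rw [pow_succ] at this
      nlinarith
    have : Real.sqrt u ^ s ≤ (2 / n) ^ s := Real.rpow_le_rpow (Real.sqrt_nonneg u) (h3.trans hθ) hs.le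
    rw [div_eq_mul_inv, Real.mul_rpow (by norm_num) (by positivity), Real.inv_rpow (by positivity), ← Real.rpow_neg (by positivity)] at this
    nlinarith
  · classical
    have hex : ∃ i : ℕ, Real.pi / 4 < 2 ^ i * θ := ⟨I, h⟩
    set m := Nat.find hex with hm
    have hm1 : Real.pi / 4 < 2 ^ m * θ := Nat.find_spec hex
    have hmI : m ≤ I := Nat.find_min' hex h
    have hm2 : 2 ^ m * θ ≤ Real.pi / 2 := by
      rcases Nat.eq_zero_or_pos m with h | h
      · rw [h]; linarith
      · have := Nat.find_min hex (m := m - 1) (by omega)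
        push Not at this
        have e : (2 : ℝ) ^ m = 2 ^ (m - 1) * 2 := by rw [← pow_succ]; congr 1; omega
        rw [e]; linarith
    have hS : 1 / 2 ≤ (Sp m).eval u := by
      rw [← h2, Sp_sin, Real.sin_sq_eq_half_sub]
      have : Real.cos (2 * (2 ^ m * θ)) ≤ 0 :=
        Real.cos_nonpos_of_pi_div_two_le_of_le (by linarith) (by linarith)
      linarith
    have hqi : ((2 : ℝ) ^ (-s)) ^ m = ((2 : ℝ) ^ m) ^ (-s) := by
      rw [← Real.rpow_natCast, ← Real.rpow_mul (by norm_num), ← Real.rpow_natCast, ← Real.rpow_mul (by norm_num), mul_comm]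
    have hle : ((2 : ℝ) ^ (-s)) ^ m * (Sp m).eval u ≤ ∑ i ∈ Finset.range (I + 1), ((2 : ℝ) ^ (-s)) ^ i * (Sp i).eval u :=
      Finset.single_le_sum (f := fun i => ((2 : ℝ) ^ (-s)) ^ i * (Sp i).eval u)
        (fun i _ => mul_nonneg (by positivity) (Sp_nonneg i u hu)) (Finset.mem_range.2 (by omega))
    have hv : Real.sqrt u ≤ 2 * ((2 : ℝ) ^ m)⁻¹ := by
      refine h3.trans ?_
      rw [← div_eq_mul_inv, le_div_iff₀ (by positivity)]; linarith
    have hvs : Real.sqrt u ^ s ≤ 2 ^ s * ((2 : ℝ) ^ m) ^ (-s) := by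
      refine (Real.rpow_le_rpow (Real.sqrt_nonneg u) hv hs.le).trans ?_
      rw [Real.mul_rpow (by norm_num) (by positivity), Real.inv_rpow (by positivity), ← Real.rpow_neg (by positivity)]
    rw [← hqi] at hvs
    have hqm : 0 < ((2 : ℝ) ^ (-s)) ^ m := by positivity
    nlinarith

/-- The polynomial majorant of `u^(s/2)`. -/
lemma majorant (s : ℝ) (hs : 0 ≤ s) (hs1 : s < 1) : ∃ C : ℝ, 1 ≤ C ∧ ∀ n : ℕ, 1 ≤ n → ∃ g : Polynomial ℝ,
    g.natDegree ≤ n ∧ ∀ u ∈ Icc (0 : ℝ) 1, 0 ≤ g.eval u ∧ Real.sqrt u ^ s ≤ C * g.eval u ∧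
      g.eval u ≤ C * ((n : ℝ) ^ (-s) + Real.sqrt u ^ s) := by
  rcases hs.eq_or_lt with h | h
  · subst h
    refine ⟨1, le_rfl, fun n _ => ⟨1, by simp, fun u hu => ?_⟩⟩
    simp
  · have hq1 : (2 : ℝ) ^ (-s) < 1 := Real.rpow_lt_one_of_one_lt_of_neg (by norm_num) (by linarith)
    have hD : 0 < 1 / (1 - (2 : ℝ) ^ (-s)) := by
      have : 0 < 1 - (2 : ℝ) ^ (-s) := by linarith
      positivity
    refine ⟨4 + 1 / (1 - (2 : ℝ) ^ (-s)), by linarith, fun n hn => ⟨Polynomial.C ((n : ℝ) ^ (-s)) +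
      ∑ i ∈ Finset.range (Nat.log 2 n + 1), Polynomial.C (((2 : ℝ) ^ (-s)) ^ i) * Sp i, ?_, fun u hu => ?_⟩⟩
    · refine (Polynomial.natDegree_add_le _ _).trans (max_le (by simp) ?_)
      refine Polynomial.natDegree_sum_le_of_forall_le _ _ fun i hi => ?_
      refine (Polynomial.natDegree_C_mul_le _ _).trans ((Sp_deg i).trans ?_)
      calc 2 ^ i ≤ 2 ^ (Nat.log 2 n) := Nat.pow_le_pow_right (by norm_num) (Nat.lt_succ_iff.1 (Finset.mem_range.1 hi))
        _ ≤ n := Nat.pow_log_le_self 2 (by omega)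
    · simp only [Polynomial.eval_add, Polynomial.eval_C, Polynomial.eval_finsetSum, Polynomial.eval_mul]
      have hnn : 0 ≤ ∑ i ∈ Finset.range (Nat.log 2 n + 1), ((2 : ℝ) ^ (-s)) ^ i * (Sp i).eval u :=
        Finset.sum_nonneg fun i _ => mul_nonneg (by positivity) (Sp_nonneg i u hu)
      have hns : 0 ≤ (n : ℝ) ^ (-s) := by positivity
      have hl := sum_lower s h hs1 n hn u hu
      refine ⟨by positivity, by nlinarith, ?_⟩
      rcases hu.1.eq_or_lt with h0 | h0
      · have : ∑ i ∈ Finset.range (Nat.log 2 n + 1), ((2 : ℝ) ^ (-s)) ^ i * (Sp i).eval u ≤ 0 := by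
          refine Finset.sum_nonpos fun i _ => ?_
          have := Sp_le i u hu
          rw [← h0, mul_zero] at this
          rw [← h0]
          exact mul_nonpos_of_nonneg_of_nonpos (by positivity) this
        have hv : 0 ≤ Real.sqrt u ^ s := Real.rpow_nonneg (Real.sqrt_nonneg u) s
        nlinarith
      · have := sum_upper s h hs1 (Nat.log 2 n) u hu h0
        nlinarith



lemma basic_n (r : ℝ) (hr : 0 < r) (d n : ℕ) (hd : 3 ≤ d) (h : ((d : ℝ) + r + 1) ^ 2 ≤ (n : ℝ) * d) :
    (d : ℝ) ≤ n ∧ 4 * (r + 1) ≤ n ∧ (d : ℝ) + r + 1 ≤ n * d := by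
  have hd' : (3 : ℝ) ≤ d := by exact_mod_cast hd
  refine ⟨?_, ?_, ?_⟩
  · by_contra hc; push Not at hc; nlinarith
  · by_contra hc; push Not at hc; nlinarith [sq_nonneg ((d : ℝ) - (r + 1))]
  · nlinarith

set_option maxHeartbeats 1000000 in
/-- the numerical product estimate -/
lemma prodbound (r : ℝ) (hr : 0 < r) (d n M : ℕ) (hd : 3 ≤ d) (h : ((d : ℝ) + r + 1) ^ 2 ≤ (n : ℝ) * d)
    (hM : M + 1 = (d + 2) * n) :
    ((d : ℝ) / 2 + M) * Real.Gamma (d + M) / (Real.Gamma ((d : ℝ) / 2) * Real.Gamma ((d : ℝ) / 2 + 1) * M.factorial) *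
     (Real.Gamma ((d : ℝ) / 2 - 2 + (d * n : ℕ) + 1) * (d * n).factorial * Real.Gamma ((d : ℝ) / 2 + r) *
        Real.Gamma ((d : ℝ) / 2 + r + 1) /
      (Real.Gamma ((d : ℝ) / 2 + r + (d * n : ℕ) + 1) * Real.Gamma ((d : ℝ) / 2 + r + ((d : ℝ) / 2 - 2) + (d * n : ℕ) + 1))) ≤
     2 ^ (r + 2) * Real.exp 3 * (r + 2) ^ (2 * r) * ((n : ℝ) ^ (-r)) ^ 2 := by
  obtain ⟨hdn, hnr, hnd⟩ := basic_n r hr d n hd h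
  have hd' : (3 : ℝ) ≤ d := by exact_mod_cast hd
  have hn' : (4 : ℝ) ≤ n := by linarith
  have hMr : (M : ℝ) + 1 = (d + 2) * n := by exact_mod_cast hM
  have hM0 : (0 : ℝ) ≤ M := Nat.cast_nonneg M
  set m : ℝ := ((d * n : ℕ) : ℝ) with hm
  have hmd : m = d * n := by rw [hm]; push_cast; ring
  have hm12 : 12 ≤ m := by rw [hmd]; nlinarith
  have hmn : (n : ℝ) ≤ m := by rw [hmd]; nlinarith
  rw [← Real.Gamma_nat_eq_factorial, ← Real.Gamma_nat_eq_factorial, ← hm]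
  have a1 := Gamma_ratio_upper ((d : ℝ) / 2) r (by linarith) hr
  have a2 := Gamma_ratio_upper ((d : ℝ) / 2 + 1) r (by linarith) hr
  have a3 := Gamma_ratio_lower (m + (d : ℝ) / 2 - 1) (r + 2) (by linarith) (by linarith)
  have a4 := Gamma_ratio_lower (m + 1) (d + r - 2) (by linarith) (by linarith)
  have a5 := Gamma_ratio_upper ((M : ℝ) + 1) (d - 1) (by linarith) (by linarith)
  have e1 : (d : ℝ) / 2 + 1 + r = (d : ℝ) / 2 + r + 1 := by ring
  have e2 : (d : ℝ) / 2 - 2 + m + 1 = m + (d : ℝ) / 2 - 1 := by ring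
  have e3 : m + (d : ℝ) / 2 - 1 + (r + 2) = (d : ℝ) / 2 + r + m + 1 := by ring
  have e4 : m + 1 + (d + r - 2) = (d : ℝ) / 2 + r + ((d : ℝ) / 2 - 2) + m + 1 := by ring
  have e5 : (M : ℝ) + 1 + (d - 1) = d + M := by ring
  rw [e1] at a2
  rw [e3] at a3
  rw [e4] at a4
  rw [e5] at a5
  rw [e2]
  have p1 := Real.Gamma_pos_of_pos (show 0 < (d : ℝ) / 2 by linarith)
  have p2 := Real.Gamma_pos_of_pos (show 0 < (d : ℝ) / 2 + 1 by linarith)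
  have p3 := Real.Gamma_pos_of_pos (show 0 < m + (d : ℝ) / 2 - 1 by linarith)
  have p4 := Real.Gamma_pos_of_pos (show 0 < m + 1 by linarith)
  have p5 := Real.Gamma_pos_of_pos (show 0 < (M : ℝ) + 1 by linarith)
  have p6 := Real.Gamma_pos_of_pos (show 0 < (d : ℝ) / 2 + r by linarith)
  have p7 := Real.Gamma_pos_of_pos (show 0 < (d : ℝ) / 2 + r + 1 by linarith)
  have p8 := Real.Gamma_pos_of_pos (show 0 < (d : ℝ) / 2 + r + m + 1 by linarith)
  have p9 := Real.Gamma_pos_of_pos (show 0 < (d : ℝ) / 2 + r + ((d : ℝ) / 2 - 2) + m + 1 by linarith)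
  have p10 := Real.Gamma_pos_of_pos (show 0 < (d : ℝ) + M by linarith)
  have q3 : 0 < m + (d : ℝ) / 2 - 1 - 1 := by linarith
  have q4 : 0 < m + 1 - 1 := by linarith
  have b1 : Real.Gamma ((d : ℝ) / 2 + r) / Real.Gamma ((d : ℝ) / 2) ≤ ((d : ℝ) / 2 + r + 1) ^ r := by
    rw [div_le_iff₀ p1]
    refine a1.trans (mul_le_mul_of_nonneg_right ?_ p1.le)
    exact Real.rpow_le_rpow (by linarith) (by linarith) hr.le
  have b2 : Real.Gamma ((d : ℝ) / 2 + r + 1) / Real.Gamma ((d : ℝ) / 2 + 1) ≤ ((d : ℝ) / 2 + r + 1) ^ r := by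
    rw [div_le_iff₀ p2]; exact a2
  have b3 : Real.Gamma (m + (d : ℝ) / 2 - 1) / Real.Gamma ((d : ℝ) / 2 + r + m + 1) ≤ ((m / 2) ^ (r + 2))⁻¹ := by
    rw [div_le_iff₀ p8, ← div_eq_inv_mul, le_div_iff₀ (by positivity)]
    refine le_trans ?_ a3
    rw [mul_comm]
    gcongr
    linarith
  have b4 : Real.Gamma (m + 1) / Real.Gamma ((d : ℝ) / 2 + r + ((d : ℝ) / 2 - 2) + m + 1) ≤ (m ^ (d + r - 2))⁻¹ := by
    rw [div_le_iff₀ p9, ← div_eq_inv_mul, le_div_iff₀ (by positivity)]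
    refine le_trans ?_ a4
    rw [mul_comm]
    have : m + 1 - 1 = m := by ring
    rw [this]
  have b5 : ((d : ℝ) / 2 + M) * (Real.Gamma (d + M) / Real.Gamma ((M : ℝ) + 1)) ≤ ((d : ℝ) + M) ^ (d : ℝ) := by
    have : Real.Gamma (d + M) / Real.Gamma ((M : ℝ) + 1) ≤ ((d : ℝ) + M) ^ ((d : ℝ) - 1) := by
      rw [div_le_iff₀ p5]; exact a5
    calc _ ≤ ((d : ℝ) + M) * ((d : ℝ) + M) ^ ((d : ℝ) - 1) := by
            gcongr; linarith
      _ = _ := by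
        rw [Real.rpow_sub_one (by positivity)]; field_simp
  have hprod : ((d : ℝ) / 2 + M) * Real.Gamma (d + M) / (Real.Gamma ((d : ℝ) / 2) * Real.Gamma ((d : ℝ) / 2 + 1) * Real.Gamma ((M : ℝ) + 1)) *
     (Real.Gamma (m + (d : ℝ) / 2 - 1) * Real.Gamma (m + 1) * Real.Gamma ((d : ℝ) / 2 + r) *
        Real.Gamma ((d : ℝ) / 2 + r + 1) /
      (Real.Gamma ((d : ℝ) / 2 + r + m + 1) * Real.Gamma ((d : ℝ) / 2 + r + ((d : ℝ) / 2 - 2) + m + 1))) =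
      (((d : ℝ) / 2 + M) * (Real.Gamma (d + M) / Real.Gamma ((M : ℝ) + 1))) *
      (Real.Gamma ((d : ℝ) / 2 + r) / Real.Gamma ((d : ℝ) / 2)) * (Real.Gamma ((d : ℝ) / 2 + r + 1) / Real.Gamma ((d : ℝ) / 2 + 1)) *
      (Real.Gamma (m + (d : ℝ) / 2 - 1) / Real.Gamma ((d : ℝ) / 2 + r + m + 1)) *
      (Real.Gamma (m + 1) / Real.Gamma ((d : ℝ) / 2 + r + ((d : ℝ) / 2 - 2) + m + 1)) := by
    generalize Real.Gamma (m + (d : ℝ) / 2 - 1) = t1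
    generalize Real.Gamma ((d : ℝ) / 2 + r + ((d : ℝ) / 2 - 2) + m + 1) = t2
    generalize Real.Gamma ((d : ℝ) / 2 + r + m + 1) = t3
    generalize Real.Gamma ((d : ℝ) / 2 + r + 1) = t4
    generalize Real.Gamma ((d : ℝ) / 2 + r) = t5
    generalize Real.Gamma ((d : ℝ) / 2 + 1) = t6
    generalize Real.Gamma ((d : ℝ) / 2) = t7
    ring
  rw [hprod]
  have step1 : (((d : ℝ) / 2 + M) * (Real.Gamma (d + M) / Real.Gamma ((M : ℝ) + 1))) *
      (Real.Gamma ((d : ℝ) / 2 + r) / Real.Gamma ((d : ℝ) / 2)) * (Real.Gamma ((d : ℝ) / 2 + r + 1) / Real.Gamma ((d : ℝ) / 2 + 1)) *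
      (Real.Gamma (m + (d : ℝ) / 2 - 1) / Real.Gamma ((d : ℝ) / 2 + r + m + 1)) *
      (Real.Gamma (m + 1) / Real.Gamma ((d : ℝ) / 2 + r + ((d : ℝ) / 2 - 2) + m + 1)) ≤
      ((d : ℝ) + M) ^ (d : ℝ) * ((d : ℝ) / 2 + r + 1) ^ r * ((d : ℝ) / 2 + r + 1) ^ r * ((m / 2) ^ (r + 2))⁻¹ * (m ^ (d + r - 2))⁻¹ := by
    gcongr
  refine step1.trans ?_
  have hm0 : 0 < m := by linarith
  have step2 : ((d : ℝ) + M) ^ (d : ℝ) * ((d : ℝ) / 2 + r + 1) ^ r * ((d : ℝ) / 2 + r + 1) ^ r * ((m / 2) ^ (r + 2))⁻¹ * (m ^ (d + r - 2))⁻¹ =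
      2 ^ (r + 2) * (((d : ℝ) + M) / m) ^ (d : ℝ) * (((d : ℝ) / 2 + r + 1) / m) ^ (2 * r) := by
    rw [Real.div_rpow hm0.le (by norm_num), Real.div_rpow (by positivity) hm0.le, Real.div_rpow (by positivity) hm0.le,
      two_mul r, Real.rpow_add (show 0 < (d : ℝ) / 2 + r + 1 by positivity)]
    have : m ^ (d : ℝ) * m ^ (r + r) = m ^ (r + 2) * m ^ ((d : ℝ) + r - 2) := by
      rw [← Real.rpow_add hm0, ← Real.rpow_add hm0]; congr 1; ring
    have z1 : 0 < m ^ (r + 2) := by positivity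
    have z2 : 0 < m ^ ((d : ℝ) + r - 2) := by positivity
    have z3 : 0 < m ^ (d : ℝ) := by positivity
    have z4 : 0 < m ^ (r + r) := by positivity
    generalize m ^ (r + 2) = w1 at *
    generalize m ^ ((d : ℝ) + r - 2) = w2 at *
    generalize m ^ (d : ℝ) = w3 at *
    generalize m ^ (r + r) = w4 at *
    generalize ((d : ℝ) + M) ^ (d : ℝ) = w5 at *
    generalize ((d : ℝ) / 2 + r + 1) ^ r = w6 at *
    generalize (2 : ℝ) ^ (r + 2) = w7 at *
    rw [inv_div]
    have : w5 * w6 * w6 * (w7 / w1) * w2⁻¹ = w7 * w5 * (w6 * w6) / (w1 * w2) := by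
      field_simp
    rw [this, ← ‹w3 * w4 = w1 * w2›]
    field_simp
  rw [step2]
  have c1 : (((d : ℝ) + M) / m) ^ (d : ℝ) ≤ Real.exp 3 := by
    have h1 : ((d : ℝ) + M) / m ≤ Real.exp (3 / d) := by
      refine le_trans ?_ (Real.add_one_le_exp _)
      rw [div_le_iff₀ hm0, hmd]
      have : (M : ℝ) = (d + 2) * n - 1 := by linarith
      have e9 : (3 / (d : ℝ) + 1) * (d * n) = 3 * n + d * n := by field_simp
      rw [this, e9]
      linarith
    calc _ ≤ (Real.exp (3 / d)) ^ (d : ℝ) := by gcongr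
      _ = Real.exp 3 := by
        rw [← Real.exp_mul]; congr 1; field_simp
  have c2 : (((d : ℝ) / 2 + r + 1) / m) ^ (2 * r) ≤ (r + 2) ^ (2 * r) * ((n : ℝ) ^ (-r)) ^ 2 := by
    have h1 : ((d : ℝ) / 2 + r + 1) / m ≤ (r + 2) / n := by
      rw [div_le_div_iff₀ hm0 (by linarith), hmd]
      nlinarith [mul_pos (show (0 : ℝ) < n by linarith) hr, mul_nonneg (mul_nonneg hr.le (show (0 : ℝ) ≤ n by linarith)) (show (0 : ℝ) ≤ d - 1 by linarith)]
    calc _ ≤ ((r + 2) / (n : ℝ)) ^ (2 * r) := by gcongr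
      _ = _ := by
        rw [Real.div_rpow (by positivity) (by positivity), div_eq_mul_inv, ← Real.rpow_neg (by positivity),
          ← Real.rpow_natCast, ← Real.rpow_mul (by positivity)]
        congr 2; push_cast; ring
  calc _ ≤ 2 ^ (r + 2) * Real.exp 3 * ((r + 2) ^ (2 * r) * ((n : ℝ) ^ (-r)) ^ 2) := by gcongr
    _ = _ := by ring



lemma wi_mono_bound (r s Cg : ℝ) (j d n : ℕ) (hd : 3 ≤ d) (hn : 1 ≤ n) (hr : 0 < r) (hs : 0 ≤ s) (hs1 : s < 1)
    (hrj : r = j + s) (g : ℝ → ℝ) (hg : Continuous g) (φ : ℝ → ℝ) (hφ : Continuous φ)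
    (hC : 0 ≤ Cg) (hgu : ∀ u ∈ Icc (0 : ℝ) 1, 0 ≤ g u ∧ g u ≤ Cg * ((n : ℝ) ^ (-s) + Real.sqrt u ^ s)) :
    WI ((d : ℝ) / 2 - 1) ((d : ℝ) / 2 - 1) (fun u => u ^ j * g u ^ 2 * φ u ^ 2) ≤
      2 * Cg ^ 2 * (2 * WI ((d : ℝ) / 2 + r - 1) ((d : ℝ) / 2 - 2) (fun u => φ u ^ 2) +
        ((n : ℝ) ^ 2)⁻¹ * WI ((d : ℝ) / 2 + r - 2) ((d : ℝ) / 2 - 2) (fun u => φ u ^ 2)) := by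
  have hd' : (3 : ℝ) ≤ d := by exact_mod_cast hd
  have hn' : (1 : ℝ) ≤ n := by exact_mod_cast hn
  have i1 := wi_integrable ((d : ℝ) / 2 + r - 1) ((d : ℝ) / 2 - 2) (by linarith) (by linarith) (fun u => φ u ^ 2) (by fun_prop)
  have i2 := wi_integrable ((d : ℝ) / 2 + r - 2) ((d : ℝ) / 2 - 2) (by linarith) (by linarith) (fun u => φ u ^ 2) (by fun_prop)
  have i3 := wi_integrable ((d : ℝ) / 2 - 1) ((d : ℝ) / 2 - 1) (by linarith) (by linarith) (fun u => u ^ j * g u ^ 2 * φ u ^ 2) (by fun_prop)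
  unfold WI
  rw [← integral_const_mul, ← integral_const_mul, ← integral_add (i1.const_mul 2) (i2.const_mul _), ← integral_const_mul]
  refine setIntegral_mono_on i3 (((i1.const_mul 2).add (i2.const_mul _)).const_mul _) measurableSet_Ioo fun u hu => ?_
  have hu0 := hu.1
  have hu1 : 0 < 1 - u := by linarith [hu.2]
  obtain ⟨g0, g1⟩ := hgu u ⟨hu0.le, hu.2.le⟩
  have hsq : (Real.sqrt u ^ s) ^ 2 = u ^ s := by
    rw [← Real.rpow_natCast, ← Real.rpow_mul (Real.sqrt_nonneg u), mul_comm, Real.rpow_mul (Real.sqrt_nonneg u)]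
    simp [Real.sq_sqrt hu0.le]
  have hg2 : g u ^ 2 ≤ 2 * Cg ^ 2 * (((n : ℝ) ^ (-s)) ^ 2 + u ^ s) := by
    have h1 : g u ^ 2 ≤ (Cg * ((n : ℝ) ^ (-s) + Real.sqrt u ^ s)) ^ 2 := by gcongr
    rw [← hsq]
    nlinarith [sq_nonneg (Cg * ((n : ℝ) ^ (-s) - Real.sqrt u ^ s))]
  have hz : ((n : ℝ) ^ (-s)) ^ 2 ≤ u ^ s * (1 + ((n : ℝ) ^ 2)⁻¹ * u⁻¹) := by
    have hz0 : 0 < (n : ℝ) ^ 2 * u := by positivity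
    have e : ((n : ℝ) ^ (-s)) ^ 2 = u ^ s * ((n : ℝ) ^ 2 * u) ^ (-s) := by
      rw [Real.mul_rpow (by positivity) hu0.le, ← Real.rpow_natCast, ← Real.rpow_mul (by positivity), ← Real.rpow_natCast,
        ← Real.rpow_mul (by positivity), mul_left_comm, ← Real.rpow_add hu0]
      simp; congr 1; ring
    rw [e, ← mul_inv]
    gcongr
    rcases le_total 1 ((n : ℝ) ^ 2 * u) with h | h
    · have := Real.rpow_le_one_of_one_le_of_nonpos h (show -s ≤ 0 by linarith)
      have : 0 < ((n : ℝ) ^ 2 * u)⁻¹ := by positivity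
      linarith
    · have := Real.rpow_le_rpow_of_exponent_ge hz0 h (show -1 ≤ -s by linarith)
      rw [Real.rpow_neg_one] at this
      linarith
  have hw : (1 - u) ^ ((d : ℝ) / 2 - 1) ≤ (1 - u) ^ ((d : ℝ) / 2 - 2) :=
    Real.rpow_le_rpow_of_exponent_ge hu1 (by linarith) (by linarith)
  have e1 : u ^ ((d : ℝ) / 2 + r - 1) = u ^ ((d : ℝ) / 2 - 1) * u ^ j * u ^ s := by
    rw [← Real.rpow_natCast, ← Real.rpow_add hu0, ← Real.rpow_add hu0, hrj]; congr 1; ring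
  have e2 : u ^ ((d : ℝ) / 2 + r - 2) = u ^ ((d : ℝ) / 2 - 1) * u ^ j * u ^ s * u⁻¹ := by
    rw [← Real.rpow_natCast, ← Real.rpow_neg_one, ← Real.rpow_add hu0, ← Real.rpow_add hu0, ← Real.rpow_add hu0, hrj]
    congr 1; ring
  have hg3 : g u ^ 2 ≤ 2 * Cg ^ 2 * (u ^ s * (2 + ((n : ℝ) ^ 2)⁻¹ * u⁻¹)) := by
    refine hg2.trans ?_
    gcongr
    linarith
  calc u ^ j * g u ^ 2 * φ u ^ 2 * (u ^ ((d : ℝ) / 2 - 1) * (1 - u) ^ ((d : ℝ) / 2 - 1))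
      ≤ u ^ j * (2 * Cg ^ 2 * (u ^ s * (2 + ((n : ℝ) ^ 2)⁻¹ * u⁻¹))) * φ u ^ 2 * (u ^ ((d : ℝ) / 2 - 1) * (1 - u) ^ ((d : ℝ) / 2 - 2)) := by
        gcongr
    _ = _ := by
      rw [e1, e2]
      ring

lemma A2_bound (r : ℝ) (hr : 0 < r) (d n : ℕ) (hd : 3 ≤ d) (h : ((d : ℝ) + r + 1) ^ 2 ≤ (n : ℝ) * d) :
    ((n : ℝ) ^ 2)⁻¹ * WI ((d : ℝ) / 2 + r - 2) ((d : ℝ) / 2 - 2) (fun u => Jf ((d : ℝ) / 2 + r) ((d : ℝ) / 2 - 2) (d * n) u ^ 2) ≤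
     54 * WI ((d : ℝ) / 2 + r - 1) ((d : ℝ) / 2 - 2) (fun u => Jf ((d : ℝ) / 2 + r) ((d : ℝ) / 2 - 2) (d * n) u ^ 2) := by
  obtain ⟨hdn, hnr, hnd⟩ := basic_n r hr d n hd h
  have hd' : (3 : ℝ) ≤ d := by exact_mod_cast hd
  have hn' : (4 : ℝ) ≤ n := by linarith
  rw [Jf_sq_two _ _ _ (by linarith) (by linarith) (by linarith)]
  have hA : 0 ≤ WI ((d : ℝ) / 2 + r - 1) ((d : ℝ) / 2 - 2) (fun u => Jf ((d : ℝ) / 2 + r) ((d : ℝ) / 2 - 2) (d * n) u ^ 2) := by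
    refine setIntegral_nonneg measurableSet_Ioo fun u hu => ?_
    have hu1 : 0 < 1 - u := by linarith [hu.2]
    have := hu.1
    positivity
  set A := WI ((d : ℝ) / 2 + r - 1) ((d : ℝ) / 2 - 2) (fun u => Jf ((d : ℝ) / 2 + r) ((d : ℝ) / 2 - 2) (d * n) u ^ 2)
  have h1 : 2 * ((d * n : ℕ) : ℝ) * ((d : ℝ) / 2 + r + ((d : ℝ) / 2 - 2) + (d * n : ℕ) + 1) /
      (((d : ℝ) / 2 + r - 1) * ((d : ℝ) / 2 + r + 1)) ≤ 48 * (n : ℝ) ^ 2 := by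
    push_cast
    have hden : (d : ℝ) ^ 2 / 12 ≤ ((d : ℝ) / 2 + r - 1) * ((d : ℝ) / 2 + r + 1) := by nlinarith
    rw [div_le_iff₀ (by nlinarith)]
    calc 2 * ((d : ℝ) * n) * ((d : ℝ) / 2 + r + ((d : ℝ) / 2 - 2) + d * n + 1) ≤ 2 * ((d : ℝ) * n) * (2 * (d * n)) := by
          gcongr; nlinarith
      _ = 48 * (n : ℝ) ^ 2 * ((d : ℝ) ^ 2 / 12) := by ring
      _ ≤ _ := by gcongr
  have h2 : ((d : ℝ) / 2 + r + ((d : ℝ) / 2 - 2)) / ((d : ℝ) / 2 + r - 1) ≤ 6 * (n : ℝ) ^ 2 := by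
    rw [div_le_iff₀ (by linarith)]
    calc (d : ℝ) / 2 + r + ((d : ℝ) / 2 - 2) ≤ n * d := by linarith
      _ ≤ (n * n) * d := by nlinarith
      _ = 6 * (n : ℝ) ^ 2 * (d / 6) := by ring
      _ ≤ _ := by gcongr; linarith
  calc _ ≤ ((n : ℝ) ^ 2)⁻¹ * (A * (48 * (n : ℝ) ^ 2 + 6 * (n : ℝ) ^ 2)) := by gcongr
    _ = 54 * A := by field_simp; ring

lemma ip_self {d : ℕ} (x : Sph d) : ip x x = 1 := by
  have hx : ‖(x : EE d)‖ = 1 := by simp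
  rw [ip, real_inner_self_eq_norm_sq, hx]; norm_num

lemma ip_mem {d : ℕ} (x y : Sph d) : (1 - ip x y) / 2 ∈ Icc (0 : ℝ) 1 := by
  have hx : ‖(x : EE d)‖ = 1 := by simp
  have hy : ‖(y : EE d)‖ = 1 := by simp
  have := abs_real_inner_le_norm (x : EE d) (y : EE d)
  rw [hx, hy, mul_one, abs_le] at this
  constructor
  · unfold ip; linarith [this.2]
  · unfold ip; linarith [this.1]

lemma ip_continuous {d : ℕ} (x : Sph d) : Continuous (fun y : Sph d => ip x y) := by
  unfold ip; fun_prop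

lemma SP_ip {d : ℕ} (b : OB d) (x : Sph d) : SP b 1 (fun y => ip x y) := SP.lin _

lemma SP_u {d : ℕ} (b : OB d) (x : Sph d) : SP b 1 (fun y => (1 - ip x y) / 2) := by
  have h := (((SP.const (b := b) (1 / 2)).mono (Nat.zero_le 1)).add ((SP_ip b x).const_mul (-1 / 2)))
  have e : (fun y : Sph d => (1 - ip x y) / 2) = fun y => 1 / 2 + -1 / 2 * ip x y := by ext y; ring
  rw [e]; exact h

lemma SP_K {d : ℕ} (b : OB d) (x : Sph d) (M : ℕ) (hd : 2 ≤ d) : SP b M (fun y => sphK d (M + 1) (ip x y)) := by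
  obtain ⟨k, hk, hke⟩ := sphK_poly d M hd
  have := (SP_ip b x).poly k hk
  simpa [hke] using this

lemma K_sq (d M : ℕ) (hd : 2 ≤ d) (x : Sph d) :
    ∫ y, sphK d (M + 1) (ip x y) ^ 2 ∂sphMeasure d = Ib ((d : ℝ) / 2) 0 *
      (((d : ℝ) / 2 + M) * Real.Gamma (d + M) / (Real.Gamma ((d : ℝ) / 2) * Real.Gamma ((d : ℝ) / 2 + 1) * M.factorial)) := by
  have := reproducing d M hd x (stdB d) _ (SP_K (stdB d) x M hd)
  simp only [sq]
  rw [this, ip_self, sphK_eq d M hd]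
  have e : (1 - 1 : ℝ) / 2 = 0 := by norm_num
  have hd' : (2 : ℝ) ≤ d := by exact_mod_cast hd
  rw [e, Jf_zero, kap]
  have e2 : (d : ℝ) / 2 + ((d : ℝ) / 2 - 1) + M + 1 = d + M := by ring
  rw [e2]
  have g1 := Real.Gamma_pos_of_pos (show 0 < (d : ℝ) / 2 by linarith)
  have g2 := Real.Gamma_pos_of_pos (show 0 < (d : ℝ) / 2 + 1 by linarith)
  generalize Real.Gamma ((d : ℝ) / 2 + 1) = t1 at *
  generalize Real.Gamma ((d : ℝ) / 2) = t2 at *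
  ring

lemma zonal_u (d : ℕ) (hd : 2 ≤ d) (x : Sph d) (p : Polynomial ℝ) :
    ∫ y : Sph d, p.eval ((1 - ip x y) / 2) ∂sphMeasure d =
      WI ((d : ℝ) / 2 - 1) ((d : ℝ) / 2 - 1) (fun u => p.eval u) / Ib ((d : ℝ) / 2) 0 := by
  have := zonal d hd x (p.comp (Polynomial.C (1 / 2) - Polynomial.C (1 / 2) * Polynomial.X))
  simp only [Polynomial.eval_comp, Polynomial.eval_sub, Polynomial.eval_C, Polynomial.eval_mul, Polynomial.eval_X] at this
  have e1 : ∀ t : ℝ, 1 / 2 - 1 / 2 * t = (1 - t) / 2 := fun t => by ring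
  have e2 : ∀ u : ℝ, 1 / 2 - 1 / 2 * (1 - 2 * u) = u := fun u => by ring
  simp only [e2] at this
  simp only [e1] at this
  exact this

lemma dist_sq_u {d : ℕ} (x y : Sph d) : dist x y ^ 2 = 4 * ((1 - ip x y) / 2) := by
  have hx : ‖(x : EE d)‖ = 1 := by simp
  have hy : ‖(y : EE d)‖ = 1 := by simp
  rw [Subtype.dist_eq, dist_eq_norm, norm_sub_sq_real, hx, hy, ip]; ring

lemma u_eq_sum {d : ℕ} (x y : Sph d) : (1 - ip x y) / 2 =
    ∑ l, (1 / 2 * ((x : EE d) l - (y : EE d) l)) ^ 2 := by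
  have h1 := dist_sq_u x y
  rw [Subtype.dist_eq, EuclideanSpace.dist_sq_eq] at h1
  simp only [mul_pow, ← Finset.mul_sum]
  simp only [Real.dist_eq, sq_abs] at h1
  rw [h1]; ring

/-- MZ inequality for `u^j q^2`. -/
lemma mz_uj {d : ℕ} (x : Sph d) (ν : SignedMeasure (Sph d)) (c N : ℝ) (hMZ : IsMZ d N ν c) (j k : ℕ) (q : Sph d → ℝ)
    (hq : SP (stdB d) k q) (hk : ((k + j / 2 + 1 : ℕ) : ℝ) < N / 2) :
    ∫ y, ((1 - ip x y) / 2) ^ j * q y ^ 2 ∂ν.totalVariation ≤ c * ∫ y, ((1 - ip x y) / 2) ^ j * q y ^ 2 ∂sphMeasure d := by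
  have hF : SP (stdB d) (k + j / 2) (fun y => ((1 - ip x y) / 2) ^ (j / 2) * q y) := by
    have := ((SP_u (stdB d) x).pow (j / 2)).mul hq
    exact this.mono (by omega)
  rcases Nat.even_or_odd' j with ⟨i, hi | hi⟩
  · have hji : j / 2 = i := by omega
    have := hMZ _ (hF.isSphPoly (N / 2) (lt_of_le_of_lt (by push_cast; linarith) hk))
    rw [hji] at this
    have e : ∀ y : Sph d, (((1 - ip x y) / 2) ^ i * q y) ^ 2 = ((1 - ip x y) / 2) ^ j * q y ^ 2 := by
      intro y; rw [hi]; ring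
    simpa only [e] using this
  · have hji : j / 2 = i := by omega
    rw [hji] at hF hk
    have hl : ∀ l : Fin (d + 1), SP (stdB d) (k + i + 1)
        (fun y => (1 / 2 * ((x : EE d) l - (y : EE d) l)) * (((1 - ip x y) / 2) ^ i * q y)) := by
      intro l
      have h1 : SP (stdB d) 1 (fun y => (1 / 2 * ((x : EE d) l - (y : EE d) l))) := by
        have h := (((SP.const (b := stdB d) (1 / 2 * (x : EE d) l)).mono (Nat.zero_le 1)).add
          ((SP.lin (b := stdB d) (stdB d l)).const_mul (-1 / 2)))
        simp only [stdB_inner] at h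
        have e : (fun y : Sph d => (1 / 2 * ((x : EE d) l - (y : EE d) l))) = fun y : Sph d => 1 / 2 * (x : EE d) l + -1 / 2 * (y : EE d) l := by
          ext y; ring
        rw [e]; exact h
      exact (h1.mul hF).mono (by omega)
    have hm := fun l => hMZ _ ((hl l).isSphPoly (N / 2) hk)
    have hs := Finset.sum_le_sum fun l (_ : l ∈ (Finset.univ : Finset (Fin (d + 1)))) => hm l
    have hc : ∀ l, Continuous fun y : Sph d => ((1 / 2 * ((x : EE d) l - (y : EE d) l)) * (((1 - ip x y) / 2) ^ i * q y)) ^ 2 :=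
      fun l => (hl l).continuous.pow 2
    rw [← integral_finsetSum _ fun l _ => sph_intble (hc l), ← Finset.mul_sum,
      ← integral_finsetSum _ fun l _ => sph_intble (hc l)] at hs
    have e : ∀ y : Sph d, ∑ l, ((1 / 2 * ((x : EE d) l - (y : EE d) l)) * (((1 - ip x y) / 2) ^ i * q y)) ^ 2 =
        ((1 - ip x y) / 2) ^ j * q y ^ 2 := by
      intro y
      simp only [mul_pow (1 / 2 * ((x : EE d) _ - (y : EE d) _)), ← Finset.sum_mul, ← u_eq_sum]
      rw [hi]; ring
    simpa only [e] using hs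



lemma isMZ_nonneg {d : ℕ} (ν : SignedMeasure (Sph d)) (c N : ℝ) (hN : 0 < N) (hMZ : IsMZ d N ν c) : 0 ≤ c := by
  have h := hMZ (fun _ => 1) ((SP.const (b := stdB d) 1).isSphPoly _ (by push_cast; linarith))
  have h1 : (0 : ℝ) ≤ ∫ _y : Sph d, (1 : ℝ) ^ 2 ∂ν.totalVariation := integral_nonneg fun _ => by norm_num
  have h2 : ∫ _y : Sph d, (1 : ℝ) ^ 2 ∂sphMeasure d = 1 := by simp
  rw [h2] at h
  linarith

lemma XY_bound (r : ℝ) (hr : 0 < r) (s Cg : ℝ) (j d n M : ℕ) (hd : 3 ≤ d) (h : ((d : ℝ) + r + 1) ^ 2 ≤ (n : ℝ) * d)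
    (hs : 0 ≤ s) (hs1 : s < 1) (hrj : r = j + s) (hM : M + 1 = (d + 2) * n) (g : Polynomial ℝ) (hC : 0 ≤ Cg)
    (hgu : ∀ u ∈ Icc (0 : ℝ) 1, 0 ≤ g.eval u ∧ g.eval u ≤ Cg * ((n : ℝ) ^ (-s) + Real.sqrt u ^ s)) (x : Sph d) :
    (∫ y, sphK d (M + 1) (ip x y) ^ 2 ∂sphMeasure d) *
      (∫ y, ((1 - ip x y) / 2) ^ j * (g.eval ((1 - ip x y) / 2) *
        Jf ((d : ℝ) / 2 + r) ((d : ℝ) / 2 - 2) (d * n) ((1 - ip x y) / 2)) ^ 2 ∂sphMeasure d) ≤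
      Jf ((d : ℝ) / 2 + r) ((d : ℝ) / 2 - 2) (d * n) 0 ^ 2 *
      (112 * Cg ^ 2 * (2 ^ (r + 2) * Real.exp 3 * (r + 2) ^ (2 * r)) * ((n : ℝ) ^ (-r)) ^ 2) := by
  obtain ⟨hdn, hnr, hnd⟩ := basic_n r hr d n hd h
  have hd' : (3 : ℝ) ≤ d := by exact_mod_cast hd
  have hn' : (4 : ℝ) ≤ n := by linarith
  have hn1 : 1 ≤ n := by have : (1 : ℝ) ≤ n := by linarith
                         exact_mod_cast this
  have hd2 : 2 ≤ d := by omega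
  rw [K_sq d M hd2 x]
  have hz := zonal_u d hd2 x (Polynomial.X ^ j * (g * Jpoly ((d : ℝ) / 2 + r) ((d : ℝ) / 2 - 2) (d * n)) ^ 2)
  simp only [Polynomial.eval_mul, Polynomial.eval_pow, Polynomial.eval_X, Jpoly_eval] at hz
  rw [hz]
  have hw := wi_mono_bound r s Cg j d n hd hn1 hr hs hs1 hrj (fun u => g.eval u) g.continuous
    (Jf ((d : ℝ) / 2 + r) ((d : ℝ) / 2 - 2) (d * n)) (Jf_continuous _ _ _) hC hgu
  have hA2 := A2_bound r hr d n hd h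
  have hA1 := Jf_sq_one ((d : ℝ) / 2 + r) ((d : ℝ) / 2 - 2) (d * n) (by linarith) (by linarith)
  have hpb := prodbound r hr d n M hd h hM
  have hI := Ib_zero_pos ((d : ℝ) / 2) (by linarith)
  have hJ0 := Jf_zero_pos ((d : ℝ) / 2 + r) ((d : ℝ) / 2 - 2) (d * n) (by linarith) (by linarith)
  have hJe := Jf_zero ((d : ℝ) / 2 + r) ((d : ℝ) / 2 - 2) (d * n)
  set I0 := Ib ((d : ℝ) / 2) 0
  set J0 := Jf ((d : ℝ) / 2 + r) ((d : ℝ) / 2 - 2) (d * n) 0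
  have hw2 : WI ((d : ℝ) / 2 - 1) ((d : ℝ) / 2 - 1) (fun u => u ^ j * (g.eval u *
      Jf ((d : ℝ) / 2 + r) ((d : ℝ) / 2 - 2) (d * n) u) ^ 2) ≤ 112 * Cg ^ 2 *
      WI ((d : ℝ) / 2 + r - 1) ((d : ℝ) / 2 - 2) (fun u => Jf ((d : ℝ) / 2 + r) ((d : ℝ) / 2 - 2) (d * n) u ^ 2) := by
    simp only [mul_pow, ← mul_assoc]
    refine hw.trans ?_
    have : 0 ≤ 2 * Cg ^ 2 := by positivity
    nlinarith [mul_le_mul_of_nonneg_left hA2 this]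
  rw [hA1] at hw2
  set κ := ((d : ℝ) / 2 + M) * Real.Gamma (d + M) / (Real.Gamma ((d : ℝ) / 2) * Real.Gamma ((d : ℝ) / 2 + 1) * M.factorial) with hκ
  have hκ0 : 0 ≤ κ := by
    have h1 := Real.Gamma_pos_of_pos (show 0 < (d : ℝ) + M by positivity)
    have h2 := Real.Gamma_pos_of_pos (show 0 < (d : ℝ) / 2 by positivity)
    have h3 := Real.Gamma_pos_of_pos (show 0 < (d : ℝ) / 2 + 1 by positivity)
    positivity
  set T := Real.Gamma ((d : ℝ) / 2 - 2 + (d * n : ℕ) + 1) * (d * n).factorial * Real.Gamma ((d : ℝ) / 2 + r) /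
      Real.Gamma ((d : ℝ) / 2 + r + (d * n : ℕ) + 1) with hT
  have hpb' : κ * T ≤ J0 * (2 ^ (r + 2) * Real.exp 3 * (r + 2) ^ (2 * r) * ((n : ℝ) ^ (-r)) ^ 2) := by
    refine le_trans (le_of_eq ?_) (mul_le_mul_of_nonneg_left hpb hJ0.le)
    have g1 := (Real.Gamma_pos_of_pos (show 0 < (d : ℝ) / 2 + r + 1 by positivity)).ne'
    have g2 : Real.Gamma ((d : ℝ) / 2 + r + ((d : ℝ) / 2 - 2) + (d * n : ℕ) + 1) ≠ 0 :=
      (Real.Gamma_pos_of_pos (by have : (0:ℝ) ≤ (d * n : ℕ) := by positivity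
                                 linarith)).ne'
    have g3 := (Real.Gamma_pos_of_pos (show 0 < (d : ℝ) / 2 + r + (d * n : ℕ) + 1 by positivity)).ne'
    rw [hT, hJe]
    generalize Real.Gamma ((d : ℝ) / 2 + r + ((d : ℝ) / 2 - 2) + (d * n : ℕ) + 1) = G2 at g2 ⊢
    generalize Real.Gamma ((d : ℝ) / 2 + r + (d * n : ℕ) + 1) = G3 at g3 ⊢
    generalize Real.Gamma ((d : ℝ) / 2 + r + 1) = G1 at g1 ⊢
    generalize Real.Gamma ((d : ℝ) / 2 - 2 + (d * n : ℕ) + 1) = G4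
    field_simp
  calc I0 * κ * (WI ((d : ℝ) / 2 - 1) ((d : ℝ) / 2 - 1) (fun u => u ^ j * (g.eval u *
      Jf ((d : ℝ) / 2 + r) ((d : ℝ) / 2 - 2) (d * n) u) ^ 2) / I0)
      ≤ I0 * κ * ((112 * Cg ^ 2 * (J0 * T)) / I0) := by gcongr
    _ = 112 * Cg ^ 2 * J0 * (κ * T) := by field_simp
    _ ≤ 112 * Cg ^ 2 * J0 * (J0 * (2 ^ (r + 2) * Real.exp 3 * (r + 2) ^ (2 * r) * ((n : ℝ) ^ (-r)) ^ 2)) := by gcongr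
    _ = _ := by ring

set_option maxHeartbeats 1600000 in
lemma key_est (r : ℝ) (hr : 0 < r) : ∃ C : ℝ, 0 < C ∧ ∀ (d n : ℕ) (x : Sph d) (ν : SignedMeasure (Sph d)) (c : ℝ),
    3 ≤ d → ((d : ℝ) + r + 1) ^ 2 ≤ (n : ℝ) * d → IsMZ d ((2 * (d + 2) * n : ℕ) : ℝ) ν c →
    ∫ y, Real.sqrt ((1 - ip x y) / 2) ^ r * |PhiTilde d n r (ip x y)| ∂ν.totalVariation ≤ C * c * (n : ℝ) ^ (-r) := by
  set j := ⌊r⌋₊ with hj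
  set s := r - j with hs
  have hs0 : 0 ≤ s := by have := Nat.floor_le hr.le; rw [hs]; linarith
  have hs1 : s < 1 := by have := Nat.lt_floor_add_one r; rw [hs]; linarith
  have hrj : r = j + s := by rw [hs]; ring
  obtain ⟨Cg, hCg, hmaj⟩ := majorant s hs0 hs1
  set Z := 112 * Cg ^ 2 * (2 ^ (r + 2) * Real.exp 3 * (r + 2) ^ (2 * r)) with hZ
  have hZ0 : 0 < Z := by positivity
  refine ⟨Cg * Real.sqrt Z, by positivity, ?_⟩
  intro d n x ν c hd h hMZ
  obtain ⟨hdn, hnr, hnd⟩ := basic_n r hr d n hd h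
  have hd' : (3 : ℝ) ≤ d := by exact_mod_cast hd
  have hn' : (4 : ℝ) ≤ n := by linarith
  have hn1 : 1 ≤ n := by have : (1 : ℝ) ≤ n := by linarith
                         exact_mod_cast this
  have hd2 : 2 ≤ d := by omega
  have hc0 : 0 ≤ c := isMZ_nonneg ν c _ (by positivity) hMZ
  obtain ⟨g, hgd, hg⟩ := hmaj n hn1
  obtain ⟨M, hM⟩ : ∃ M, M + 1 = (d + 2) * n := ⟨(d + 2) * n - 1, Nat.sub_add_cancel (Nat.mul_pos (by omega) hn1)⟩
  have hXY := XY_bound r hr s Cg j d n M hd h hs0 hs1 hrj hM g (by linarith) (fun u hu => ⟨(hg u hu).1, (hg u hu).2.2⟩) x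
  rw [← hZ] at hXY
  have hJ0 := Jf_zero_pos ((d : ℝ) / 2 + r) ((d : ℝ) / 2 - 2) (d * n) (by linarith) (by linarith)
  set J0 := Jf ((d : ℝ) / 2 + r) ((d : ℝ) / 2 - 2) (d * n) 0
  set U : Sph d → ℝ := fun y => (1 - ip x y) / 2 with hU
  have hUc : Continuous U := by have := ip_continuous x; fun_prop
  set J : Sph d → ℝ := fun y => Jf ((d : ℝ) / 2 + r) ((d : ℝ) / 2 - 2) (d * n) (U y) with hJ
  have hJc : Continuous J := (Jf_continuous _ _ _).comp hUc
  set K : Sph d → ℝ := fun y => sphK d (M + 1) (ip x y) with hK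
  have hKS : SP (stdB d) M K := SP_K _ x M hd2
  have hKc : Continuous K := hKS.continuous
  have hPhi : ∀ y, PhiTilde d n r (ip x y) = K y * (J y / J0) := by
    intro y
    rw [PhiTilde, jacobi_ratio _ _ _ (by linarith) (by linarith) (by linarith), ← hM]
  set X := ∫ y, K y ^ 2 ∂sphMeasure d with hX
  set Y := ∫ y, U y ^ j * (g.eval (U y) * J y) ^ 2 ∂sphMeasure d with hY
  change X * Y ≤ J0 ^ 2 * (Z * ((n : ℝ) ^ (-r)) ^ 2) at hXY
  have hX0 : 0 < X := by
    rw [hX]; simp only [hK]; rw [K_sq d M hd2 x]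
    have h0 := Ib_zero_pos ((d : ℝ) / 2) (by linarith)
    have h1 := Real.Gamma_pos_of_pos (show 0 < (d : ℝ) + M by positivity)
    have h2 := Real.Gamma_pos_of_pos (show 0 < (d : ℝ) / 2 by positivity)
    have h3 := Real.Gamma_pos_of_pos (show 0 < (d : ℝ) / 2 + 1 by positivity)
    positivity
  have hN2 : (((2 * (d + 2) * n : ℕ) : ℝ)) / 2 = ((M + 1 : ℕ) : ℝ) := by rw [hM]; push_cast; ring
  have hMZ1 : ∫ y, K y ^ 2 ∂ν.totalVariation ≤ c * X :=
    hMZ K (hKS.isSphPoly _ (by rw [hN2]; push_cast; linarith))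
  have hqS : SP (stdB d) (d * n + n) (fun y => g.eval (U y) * J y) := by
    have h1 := (SP_u (stdB d) x).poly g hgd
    have h2 := (SP_u (stdB d) x).poly (Jpoly ((d : ℝ) / 2 + r) ((d : ℝ) / 2 - 2) (d * n)) (Jpoly_natDegree _ _ _)
    simp only [Jpoly_eval] at h2
    exact (h1.mul h2).mono (by omega)
  have hjn : j + 4 ≤ n := by
    have h1 : (j : ℝ) ≤ r := Nat.floor_le hr.le
    have : ((j + 4 : ℕ) : ℝ) ≤ n := by push_cast; linarith
    exact_mod_cast this
  have hMZ2 : ∫ y, U y ^ j * (g.eval (U y) * J y) ^ 2 ∂ν.totalVariation ≤ c * Y := by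
    refine mz_uj x ν c _ hMZ j (d * n + n) _ hqS ?_
    rw [hN2, hM]
    have : d * n + n + j / 2 + 1 < (d + 2) * n := by
      have : (d + 2) * n = d * n + n + n := by ring
      omega
    exact_mod_cast this
  have hUm : ∀ y, U y ∈ Icc (0 : ℝ) 1 := fun y => ip_mem x y
  have hn0 : (0 : ℝ) < n := by linarith
  have hnr0 : 0 < (n : ℝ) ^ (-r) := by positivity
  set t := (n : ℝ) ^ (-r) * Real.sqrt Z / X with ht
  have ht0 : 0 < t := by positivity
  have hpt : ∀ y, Real.sqrt (U y) ^ r * |PhiTilde d n r (ip x y)| ≤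
      Cg / 2 * (t * K y ^ 2 + (t⁻¹ * (J0 ^ 2)⁻¹) * (U y ^ j * (g.eval (U y) * J y) ^ 2)) := by
    intro y
    obtain ⟨h1, h2, -⟩ := hg (U y) (hUm y)
    have hu0 := (hUm y).1
    have e : Real.sqrt (U y) ^ r = Real.sqrt (U y) ^ j * Real.sqrt (U y) ^ s := by
      rcases eq_or_lt_of_le (Real.sqrt_nonneg (U y)) with h0 | h0
      · rw [← h0, Real.zero_rpow hr.ne']
        rcases Nat.eq_zero_or_pos j with hj0 | hj0
        · have : s = r := by rw [hs, hj0]; simp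
          rw [this, Real.zero_rpow hr.ne', mul_zero]
        · rw [zero_pow hj0.ne', zero_mul]
      · rw [← Real.rpow_natCast, ← Real.rpow_add h0, ← hrj]
    have e2 : U y ^ j = (Real.sqrt (U y) ^ j) ^ 2 := by
      rw [← pow_mul, mul_comm, pow_mul, Real.sq_sqrt hu0]
    rw [e, hPhi, abs_mul, abs_div, abs_of_pos hJ0]
    set a := Real.sqrt (U y) ^ j with ha
    have ha0 : 0 ≤ a := by positivity
    have hb : a * Real.sqrt (U y) ^ s * (|K y| * (|J y| / J0)) ≤ Cg * (|K y| * (a * g.eval (U y) * |J y| / J0)) := by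
      calc a * Real.sqrt (U y) ^ s * (|K y| * (|J y| / J0)) ≤ a * (Cg * g.eval (U y)) * (|K y| * (|J y| / J0)) := by gcongr
        _ = _ := by ring
    refine hb.trans ?_
    rw [e2]
    set B := a * g.eval (U y) * |J y| / J0 with hB
    have hB2 : (J0 ^ 2)⁻¹ * (a ^ 2 * (g.eval (U y) * J y) ^ 2) = B ^ 2 := by
      rw [hB, div_pow, mul_pow, mul_pow, sq_abs]; field_simp
    rw [mul_assoc t⁻¹, hB2, ← sq_abs (K y)]
    have : 2 * (|K y| * B) ≤ t * |K y| ^ 2 + t⁻¹ * B ^ 2 := by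
      have h0 : 0 ≤ t⁻¹ * (t * |K y| - B) ^ 2 := by positivity
      have : t⁻¹ * (t * |K y| - B) ^ 2 = t * |K y| ^ 2 + t⁻¹ * B ^ 2 - 2 * (|K y| * B) := by field_simp; ring
      linarith
    nlinarith [this]
  have hgc : Continuous fun y => g.eval (U y) := g.continuous.comp hUc
  calc ∫ y, Real.sqrt (U y) ^ r * |PhiTilde d n r (ip x y)| ∂ν.totalVariation
      ≤ ∫ y, Cg / 2 * (t * K y ^ 2 + (t⁻¹ * (J0 ^ 2)⁻¹) * (U y ^ j * (g.eval (U y) * J y) ^ 2)) ∂ν.totalVariation := by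
        refine integral_mono_of_nonneg (Filter.Eventually.of_forall fun y => by positivity) (sph_intble (by fun_prop))
          (Filter.Eventually.of_forall hpt)
    _ = Cg / 2 * (t * ∫ y, K y ^ 2 ∂ν.totalVariation + (t⁻¹ * (J0 ^ 2)⁻¹) * ∫ y, U y ^ j * (g.eval (U y) * J y) ^ 2 ∂ν.totalVariation) := by
        rw [integral_const_mul, integral_add (sph_intble (by fun_prop)) (sph_intble (by fun_prop)), integral_const_mul, integral_const_mul]
    _ ≤ Cg / 2 * (t * (c * X) + (t⁻¹ * (J0 ^ 2)⁻¹) * (c * Y)) := by gcongr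
    _ ≤ Cg / 2 * (c * (Real.sqrt Z * (n : ℝ) ^ (-r)) + c * (Real.sqrt Z * (n : ℝ) ^ (-r))) := by
        have q1 : t * (c * X) = c * (Real.sqrt Z * (n : ℝ) ^ (-r)) := by rw [ht]; field_simp
        have q2 : (t⁻¹ * (J0 ^ 2)⁻¹) * (c * Y) ≤ c * (Real.sqrt Z * (n : ℝ) ^ (-r)) := by
          have : (t⁻¹ * (J0 ^ 2)⁻¹) * (c * Y) = c * (((n : ℝ) ^ (-r) * Real.sqrt Z)⁻¹ * (J0 ^ 2)⁻¹ * (X * Y)) := by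
            rw [ht]; field_simp
          rw [this]
          refine mul_le_mul_of_nonneg_left ?_ hc0
          calc ((n : ℝ) ^ (-r) * Real.sqrt Z)⁻¹ * (J0 ^ 2)⁻¹ * (X * Y) ≤ ((n : ℝ) ^ (-r) * Real.sqrt Z)⁻¹ * (J0 ^ 2)⁻¹ * (J0 ^ 2 * (Z * ((n : ℝ) ^ (-r)) ^ 2)) := by gcongr
            _ = (Real.sqrt Z * (n : ℝ) ^ (-r)) := by
              have : Z = Real.sqrt Z ^ 2 := (Real.sq_sqrt hZ0.le).symm
              have hq : 0 < Real.sqrt Z := by positivity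
              conv_lhs => rw [this]
              rw [Real.sqrt_sq hq.le]
              field_simp
        have : 0 ≤ Cg / 2 := by linarith
        rw [q1]
        gcongr
    _ = Cg * Real.sqrt Z * c * (n : ℝ) ^ (-r) := by ring


lemma coeff_bound (D : ℕ) : ∃ C : ℝ, 0 < C ∧ ∀ (Q : Polynomial ℝ) (M : ℝ), Q.natDegree ≤ D → 0 ≤ M →
    (∀ t ∈ Icc (0 : ℝ) 1, |Q.eval t| ≤ M) → ∀ m ≤ D, |Q.coeff m| ≤ C * M := by
  set v : ℕ → ℝ := fun i => (i : ℝ) / (D + 1) with hv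
  have hvi : Set.InjOn v (Finset.range (D + 1) : Set ℕ) := by
    intro a _ b _ hab
    have hD : (D : ℝ) + 1 ≠ 0 := by positivity
    simp only [hv] at hab
    field_simp at hab
    exact_mod_cast hab
  refine ⟨1 + ∑ m ∈ Finset.range (D + 1), ∑ i ∈ Finset.range (D + 1), |(Lagrange.basis (Finset.range (D + 1)) v i).coeff m|,
    by positivity, fun Q M hQ hM h m hm => ?_⟩
  have hdeg : Q.degree < (Finset.range (D + 1)).card := by
    rw [Finset.card_range]
    exact lt_of_le_of_lt Polynomial.degree_le_natDegree (by exact_mod_cast Nat.lt_succ_of_le hQ)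
  have e := Lagrange.eq_interpolate hvi hdeg
  have e2 : Q.coeff m = ∑ i ∈ Finset.range (D + 1), Q.eval (v i) * (Lagrange.basis (Finset.range (D + 1)) v i).coeff m := by
    conv_lhs => rw [e, Lagrange.interpolate_apply]
    rw [Polynomial.finsetSum_coeff]
    simp [Polynomial.coeff_C_mul]
  rw [e2]
  calc |∑ i ∈ Finset.range (D + 1), Q.eval (v i) * (Lagrange.basis (Finset.range (D + 1)) v i).coeff m|
      ≤ ∑ i ∈ Finset.range (D + 1), |Q.eval (v i) * (Lagrange.basis (Finset.range (D + 1)) v i).coeff m| := Finset.abs_sum_le_sum_abs _ _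
    _ ≤ ∑ i ∈ Finset.range (D + 1), M * |(Lagrange.basis (Finset.range (D + 1)) v i).coeff m| := by
      refine Finset.sum_le_sum fun i hi => ?_
      rw [abs_mul]
      refine mul_le_mul_of_nonneg_right (h _ ⟨by positivity, ?_⟩) (abs_nonneg _)
      rw [Finset.mem_range] at hi
      rw [hv, div_le_one (by positivity)]
      exact_mod_cast hi.le
    _ = (∑ i ∈ Finset.range (D + 1), |(Lagrange.basis (Finset.range (D + 1)) v i).coeff m|) * M := by rw [← Finset.mul_sum, mul_comm]
    _ ≤ _ := by
      refine mul_le_mul_of_nonneg_right ?_ hM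
      have := Finset.single_le_sum (s := Finset.range (D + 1)) (f := fun m => ∑ i ∈ Finset.range (D + 1), |(Lagrange.basis (Finset.range (D + 1)) v i).coeff m|)
        (fun i _ => by positivity) (Finset.mem_range.2 (Nat.lt_succ_of_le hm))
      linarith

lemma poly_growth (k : ℕ) : ∃ C : ℝ, 0 < C ∧ ∀ (Q : Polynomial ℝ) (M τ : ℝ), Q.natDegree ≤ 2 * k → 0 ≤ M → 0 < τ → τ ≤ 1 →
    (∀ t ∈ Icc (0 : ℝ) τ, |Q.eval t| ≤ M) → ∀ t, |Q.eval t| ≤ C * M * (τ ^ (2 * k))⁻¹ * (1 + t ^ 2) ^ k := by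
  obtain ⟨C, hC, h⟩ := coeff_bound (2 * k)
  refine ⟨(2 * k + 1) * C, by positivity, fun Q M τ hQ hM hτ hτ1 hQM t => ?_⟩
  have hc : ∀ m ≤ 2 * k, |Q.coeff m| * τ ^ m ≤ C * M := by
    intro m hm
    have := h (Q.comp (Polynomial.C τ * Polynomial.X)) M ?_ hM ?_ m hm
    · rwa [Polynomial.comp_C_mul_X_coeff, abs_mul, abs_of_pos (by positivity : 0 < τ ^ m)] at this
    · refine Polynomial.natDegree_comp_le.trans ?_
      refine le_trans (Nat.mul_le_mul_left _ (show (Polynomial.C τ * Polynomial.X).natDegree ≤ 1 by compute_degree)) (by omega)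
    · intro t ht
      simp only [Polynomial.eval_comp, Polynomial.eval_mul, Polynomial.eval_C, Polynomial.eval_X]
      exact hQM _ ⟨mul_nonneg hτ.le ht.1, by nlinarith [ht.2]⟩
  rw [Polynomial.eval_eq_sum_range' (Nat.lt_succ_of_le hQ)]
  calc |∑ i ∈ Finset.range (2 * k + 1), Q.coeff i * t ^ i| ≤ ∑ i ∈ Finset.range (2 * k + 1), |Q.coeff i * t ^ i| := Finset.abs_sum_le_sum_abs _ _
    _ ≤ ∑ i ∈ Finset.range (2 * k + 1), C * M * (τ ^ (2 * k))⁻¹ * (1 + t ^ 2) ^ k := by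
      refine Finset.sum_le_sum fun i hi => ?_
      have hi' : i ≤ 2 * k := by rw [Finset.mem_range] at hi; omega
      rw [abs_mul, abs_pow]
      have h1 : |Q.coeff i| ≤ C * M * (τ ^ (2 * k))⁻¹ := by
        have h3 : τ ^ (2 * k) ≤ τ ^ i := pow_le_pow_of_le_one hτ.le hτ1 hi'
        have h4 := hc i hi'
        rw [← div_eq_mul_inv, le_div_iff₀ (by positivity)]
        exact le_trans (mul_le_mul_of_nonneg_left h3 (abs_nonneg _)) h4
      have h2 : |t| ^ i ≤ (1 + t ^ 2) ^ k := by
        have h5 : |t| ≤ Real.sqrt (1 + t ^ 2) := Real.abs_le_sqrt (by linarith)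
        have h6 : 1 ≤ Real.sqrt (1 + t ^ 2) := Real.one_le_sqrt.2 (by nlinarith [sq_nonneg t])
        calc |t| ^ i ≤ Real.sqrt (1 + t ^ 2) ^ i := by gcongr
          _ ≤ Real.sqrt (1 + t ^ 2) ^ (2 * k) := pow_le_pow_right₀ h6 hi'
          _ = _ := by rw [pow_mul, Real.sq_sqrt (by positivity)]
      gcongr
    _ = _ := by rw [Finset.sum_const, Finset.card_range]; simp; ring

lemma circle_poly {d : ℕ} (p : MvPolynomial (Fin (d + 1)) ℝ) (k : ℕ) (hk : p.totalDegree ≤ k) (x v : EE d) :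
    ∃ Q : Polynomial ℝ, Q.natDegree ≤ 2 * k ∧ ∀ t : ℝ,
      Q.eval t = (1 + t ^ 2) ^ k * MvPolynomial.eval (fun i => (((1 - t ^ 2) / (1 + t ^ 2)) • x + (2 * t / (1 + t ^ 2)) • v : EE d) i) p := by
  have hsd : ∀ s ∈ p.support, (∑ i, s i) ≤ k := by
    intro s hs
    have := MvPolynomial.le_totalDegree hs
    rw [Finsupp.sum_fintype _ _ (by simp)] at this
    omega
  refine ⟨∑ s ∈ p.support, Polynomial.C (p.coeff s) * (1 + Polynomial.X ^ 2) ^ (k - ∑ i, s i) *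
    ∏ i, (Polynomial.C (x i) * (1 - Polynomial.X ^ 2) + Polynomial.C (2 * v i) * Polynomial.X) ^ s i, ?_, fun t => ?_⟩
  · refine Polynomial.natDegree_sum_le_of_forall_le _ _ fun s hs => ?_
    have h1 : (1 + Polynomial.X ^ 2 : Polynomial ℝ).natDegree ≤ 2 := by compute_degree
    have h2 : ∀ i, (Polynomial.C (x i) * (1 - Polynomial.X ^ 2) + Polynomial.C (2 * v i) * Polynomial.X : Polynomial ℝ).natDegree ≤ 2 := by
      intro i; compute_degree
    have h3 : (∏ i, (Polynomial.C (x i) * (1 - Polynomial.X ^ 2) + Polynomial.C (2 * v i) * Polynomial.X : Polynomial ℝ) ^ s i).natDegree ≤ ∑ i, s i * 2 :=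
      (Polynomial.natDegree_prod_le _ _).trans (Finset.sum_le_sum fun i _ => Polynomial.natDegree_pow_le.trans (Nat.mul_le_mul_left _ (h2 i)))
    have h4 : ((1 + Polynomial.X ^ 2 : Polynomial ℝ) ^ (k - ∑ i, s i)).natDegree ≤ (k - ∑ i, s i) * 2 :=
      Polynomial.natDegree_pow_le.trans (Nat.mul_le_mul_left _ h1)
    have h5 := hsd s hs
    rw [← Finset.sum_mul] at h3
    refine Polynomial.natDegree_mul_le.trans ?_
    have h6 := (Polynomial.natDegree_C_mul_le (p.coeff s) ((1 + Polynomial.X ^ 2 : Polynomial ℝ) ^ (k - ∑ i, s i)))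
    omega
  · rw [MvPolynomial.eval_eq', Polynomial.eval_finsetSum, Finset.mul_sum]
    refine Finset.sum_congr rfl fun s hs => ?_
    have hpos : (1 + t ^ 2) ≠ 0 := by positivity
    simp only [Polynomial.eval_mul, Polynomial.eval_C, Polynomial.eval_pow, Polynomial.eval_add, Polynomial.eval_one,
      Polynomial.eval_X, Polynomial.eval_prod, Polynomial.eval_sub, PiLp.add_apply, PiLp.smul_apply, smul_eq_mul]
    have e : ∀ i, (1 - t ^ 2) / (1 + t ^ 2) * x i + 2 * t / (1 + t ^ 2) * v i = (1 + t ^ 2)⁻¹ * (x i * (1 - t ^ 2) + 2 * v i * t) := by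
      intro i; field_simp
    simp only [e, mul_pow, Finset.prod_mul_distrib]
    rw [Finset.prod_pow_eq_pow_sum, ← Nat.sub_add_cancel (hsd s hs), pow_add, Nat.add_sub_cancel, inv_pow]
    field_simp
    simp only [mul_comm]

lemma growth (k : ℕ) : ∃ C : ℝ, 0 < C ∧ ∀ (d : ℕ) (hd : 1 ≤ d) (p : MvPolynomial (Fin (d + 1)) ℝ) (x : EE d) (a M : ℝ),
    p.totalDegree ≤ k → ‖x‖ = 1 → 0 < a → a ≤ 1 → 0 ≤ M →
    (∀ z : EE d, ‖z‖ = 1 → ‖z - x‖ ≤ a → |MvPolynomial.eval (fun i => z i) p| ≤ M) →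
    ∀ z : EE d, ‖z‖ = 1 → |MvPolynomial.eval (fun i => z i) p| ≤ C * M * (a ^ (2 * k))⁻¹ := by
  obtain ⟨C, hC, hgr⟩ := poly_growth k
  refine ⟨C * 2 ^ k * 2 ^ (2 * k), by positivity, ?_⟩
  intro d hd p x a M hk hx ha ha1 hM hz
  set B := C * 2 ^ k * 2 ^ (2 * k) * M * (a ^ (2 * k))⁻¹ with hB
  -- the curve
  have key : ∀ v : EE d, ‖v‖ = 1 → ⟪x, v⟫ = 0 → ∀ t : ℝ,
      |MvPolynomial.eval (fun i => (((1 - t ^ 2) / (1 + t ^ 2)) • x + (2 * t / (1 + t ^ 2)) • v : EE d) i) p| ≤ B := by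
    intro v hv hxv t
    obtain ⟨Q, hQ, hQe⟩ := circle_poly p k hk x v
    have hn : ∀ α β : ℝ, ‖α • x + β • v‖ ^ 2 = α ^ 2 + β ^ 2 := by
      intro α β
      rw [norm_add_sq_real, norm_smul, norm_smul, hx, hv, inner_smul_left, inner_smul_right, hxv]
      simp
    have := hgr Q (2 ^ k * M) (a / 2) hQ (by positivity) (by positivity) (by linarith) ?_ t
    · rw [hQe, abs_mul, abs_of_pos (by positivity : 0 < (1 + t ^ 2) ^ k), mul_comm] at this
      have := le_of_mul_le_mul_right this (by positivity : 0 < (1 + t ^ 2) ^ k)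
      refine this.trans (le_of_eq ?_)
      rw [hB, div_pow]; field_simp
    · intro t ht
      rw [hQe, abs_mul, abs_of_pos (by positivity : 0 < (1 + t ^ 2) ^ k)]
      have ht2 : t ^ 2 ≤ (a / 2) ^ 2 := pow_le_pow_left₀ ht.1 ht.2 2
      have hpos : 0 < 1 + t ^ 2 := by positivity
      refine mul_le_mul ?_ (hz _ ?_ ?_) (abs_nonneg _) (by positivity)
      · refine pow_le_pow_left₀ (by positivity) ?_ k
        nlinarith
      · have := hn ((1 - t ^ 2) / (1 + t ^ 2)) (2 * t / (1 + t ^ 2))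
        have e : ((1 - t ^ 2) / (1 + t ^ 2)) ^ 2 + (2 * t / (1 + t ^ 2)) ^ 2 = 1 := by field_simp; ring
        rw [e] at this
        exact (pow_eq_one_iff_of_nonneg (norm_nonneg _) two_ne_zero).1 this
      · have := hn ((1 - t ^ 2) / (1 + t ^ 2) - 1) (2 * t / (1 + t ^ 2))
        have e0 : ((1 - t ^ 2) / (1 + t ^ 2)) • x + (2 * t / (1 + t ^ 2)) • v - x =
          ((1 - t ^ 2) / (1 + t ^ 2) - 1) • x + (2 * t / (1 + t ^ 2)) • v := by rw [sub_smul, one_smul]; abel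
        have e : ((1 - t ^ 2) / (1 + t ^ 2) - 1) ^ 2 + (2 * t / (1 + t ^ 2)) ^ 2 = 4 * t ^ 2 / (1 + t ^ 2) := by field_simp; ring
        rw [e] at this
        rw [e0]
        refine (sq_le_sq₀ (norm_nonneg _) ha.le).1 ?_
        rw [this, div_le_iff₀ hpos]
        nlinarith [sq_nonneg t, sq_nonneg a, mul_nonneg (sq_nonneg a) (sq_nonneg t)]
  intro z hz1
  obtain ⟨b, hb⟩ := exists_basis (⟨x, by simp [hx]⟩ : Sph d)
  simp only at hb
  by_cases hneg : z = -x
  · -- antipode by continuity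
    have hlt : 1 < d + 1 := by omega
    have hv : ‖b ⟨1, hlt⟩‖ = 1 := b.norm_eq_one _
    have hxv : ⟪x, b ⟨1, hlt⟩⟫ = 0 := by
      rw [← hb, b.inner_eq_zero]
      intro h; have := congrArg Fin.val h; simp at this
    set v := b ⟨1, hlt⟩
    set h : ℝ → ℝ := fun ε => |MvPolynomial.eval (fun i => (((ε ^ 2 - 1) / (ε ^ 2 + 1)) • x + (2 * ε / (ε ^ 2 + 1)) • v : EE d) i) p| with hh
    have hcont : Continuous h := by
      have hne : ∀ ε : ℝ, ε ^ 2 + 1 ≠ 0 := fun ε => by positivity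
      rw [hh]
      simp only [MvPolynomial.eval_eq', PiLp.add_apply, PiLp.smul_apply, smul_eq_mul]
      fun_prop (disch := exact hne _)
    have hcl : IsClosed {ε | h ε ≤ B} := isClosed_le hcont continuous_const
    have hsub : ({0}ᶜ : Set ℝ) ⊆ {ε | h ε ≤ B} := by
      intro ε hε
      have hε' : ε ≠ 0 := hε
      have := key v hv hxv ε⁻¹
      have e1 : (1 - ε⁻¹ ^ 2) / (1 + ε⁻¹ ^ 2) = (ε ^ 2 - 1) / (ε ^ 2 + 1) := by field_simp
      have e2 : 2 * ε⁻¹ / (1 + ε⁻¹ ^ 2) = 2 * ε / (ε ^ 2 + 1) := by field_simp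
      rw [e1, e2] at this
      exact this
    have h0 : (0 : ℝ) ∈ {ε | h ε ≤ B} := by
      have := closure_minimal hsub hcl
      rw [(dense_compl_singleton (0 : ℝ)).closure_eq] at this
      exact this (mem_univ 0)
    have h1 : h 0 ≤ B := h0
    have e : (((0:ℝ) ^ 2 - 1) / (0 ^ 2 + 1)) • x + (2 * 0 / (0 ^ 2 + 1) : ℝ) • v = z := by
      rw [hneg]; simp
    simp only [hh] at h1
    rw [e] at h1
    exact h1
  · set i := ⟪x, z⟫ with hi
    have hi1 : -1 < i := by
      have h1 : -1 ≤ i := by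
        have := abs_real_inner_le_norm x z
        rw [hx, hz1, mul_one, abs_le] at this; exact this.1
      refine lt_of_le_of_ne h1 fun h2 => hneg ?_
      have := (inner_eq_neg_one_iff_of_norm_eq_one (𝕜 := ℝ) hx hz1).1 h2.symm
      rw [this, neg_neg]
    set w := z - i • x with hw
    have hxw : ⟪x, w⟫ = 0 := by
      rw [hw, inner_sub_right, inner_smul_right, real_inner_self_eq_norm_sq, hx, ← hi]; ring
    have hwn : ‖w‖ ^ 2 = 1 - i ^ 2 := by
      rw [hw, norm_sub_sq_real, hz1, norm_smul, hx, inner_smul_right, real_inner_comm, ← hi]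
      simp; ring
    by_cases hw0 : w = 0
    · have h1 : (1 - i) * (1 + i) = 0 := by rw [hw0] at hwn; simp at hwn; linarith
      have h2 : i = 1 := by
        rcases mul_eq_zero.1 h1 with h | h <;> linarith
      have h3 : z = x := by rw [hw, h2, one_smul] at hw0; exact sub_eq_zero.1 hw0
      have hlt : 1 < d + 1 := by omega
      have hv : ‖b ⟨1, hlt⟩‖ = 1 := b.norm_eq_one _
      have hxv : ⟪x, b ⟨1, hlt⟩⟫ = 0 := by
        rw [← hb, b.inner_eq_zero]
        intro h; have := congrArg Fin.val h; simp at this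
      have := key _ hv hxv 0
      rw [h3]
      simpa using this
    · have hwp : 0 < ‖w‖ := norm_pos_iff.2 hw0
      have hv : ‖(‖w‖⁻¹ : ℝ) • w‖ = 1 := by rw [norm_smul, norm_inv, norm_norm, inv_mul_cancel₀ hwp.ne']
      have hxv : ⟪x, (‖w‖⁻¹ : ℝ) • w⟫ = 0 := by rw [inner_smul_right, hxw, mul_zero]
      have := key _ hv hxv (‖w‖ / (1 + i))
      have hi2 : 1 + i ≠ 0 := by linarith
      have e0 : (1 : ℝ) + (‖w‖ / (1 + i)) ^ 2 = 2 / (1 + i) := by rw [div_pow, hwn]; field_simp; ring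
      have e1 : (1 - (‖w‖ / (1 + i)) ^ 2) / (1 + (‖w‖ / (1 + i)) ^ 2) = i := by
        rw [e0, div_pow, hwn]; field_simp; ring
      have e2 : 2 * (‖w‖ / (1 + i)) / (1 + (‖w‖ / (1 + i)) ^ 2) = ‖w‖ := by rw [e0]; field_simp
      rw [e1, e2, smul_smul, mul_inv_cancel₀ hwp.ne', one_smul, hw, add_sub_cancel] at this
      exact this


lemma dimPi_bound (d n : ℕ) (hd : 3 ≤ d) (hn : 1 ≤ n) :
    0 < dimPi d (2 * (d + 2) * n) ∧ dimPi d (2 * (d + 2) * n) ≤ (24 * (n : ℝ)) ^ d := by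
  obtain ⟨m, hm⟩ : ∃ m, m + 1 = 2 * (d + 2) * n := ⟨2 * (d + 2) * n - 1, Nat.sub_add_cancel (Nat.mul_pos (by omega) hn)⟩
  obtain ⟨e, rfl⟩ : ∃ e, d = e + 1 := ⟨d - 1, by omega⟩
  rw [← hm]
  have g1 : Real.Gamma (((m + 1 : ℕ) : ℝ) + (e + 1 : ℕ) - 1) = (m + e).factorial := by
    rw [← Real.Gamma_nat_eq_factorial]; congr 1; push_cast; ring
  have g2 : Real.Gamma ((m + 1 : ℕ) : ℝ) = m.factorial := by
    rw [← Real.Gamma_nat_eq_factorial]; push_cast; rfl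
  have g3 : Real.Gamma (((e + 1 : ℕ) : ℝ) + 1) = (e + 1).factorial := Real.Gamma_nat_eq_factorial _
  have he : dimPi (e + 1) (m + 1) = (2 * (m : ℝ) + e + 1) * (m + e).factorial / (m.factorial * (e + 1).factorial) := by
    rw [dimPi, g1, g2, g3]; push_cast; ring
  rw [he]
  have hf1 : (0 : ℝ) < (m + e).factorial := by positivity
  refine ⟨by positivity, ?_⟩
  have h1 : ((m + e).factorial : ℝ) ≤ m.factorial * ((m : ℝ) + e) ^ e := by
    have := Nat.factorial_mul_ascFactorial m e
    have h2 := Nat.ascFactorial_le_pow_add m e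
    rw [← this]; push_cast
    gcongr
    exact_mod_cast h2
  have h2 : ((e + 1 : ℕ) : ℝ) ^ (e + 1) ≤ 3 ^ (e + 1) * (e + 1).factorial := by
    have := Real.pow_div_factorial_le_exp ((e + 1 : ℕ) : ℝ) (by positivity) (e + 1)
    rw [div_le_iff₀ (by positivity)] at this
    refine this.trans ?_
    gcongr
    have h3 : Real.exp ((e + 1 : ℕ) : ℝ) = Real.exp 1 ^ (e + 1) := by rw [← Real.exp_nat_mul, mul_one]
    rw [h3]
    gcongr
    exact Real.exp_one_lt_three.le
  have h4 : 2 * (m : ℝ) + e + 1 ≤ (8 * n) * (e + 1 : ℕ) := by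
    have : (m : ℝ) + 1 = 2 * ((e + 1 : ℕ) + 2) * n := by exact_mod_cast hm
    have hd' : (3 : ℝ) ≤ (e + 1 : ℕ) := by exact_mod_cast hd
    have hn' : (1 : ℝ) ≤ n := by exact_mod_cast hn
    push_cast at this hd' ⊢
    nlinarith [mul_nonneg (sub_nonneg.2 hd') (sub_nonneg.2 hn')]
  rw [div_le_iff₀ (by positivity)]
  calc (2 * (m : ℝ) + e + 1) * (m + e).factorial ≤ (2 * (m : ℝ) + e + 1) * (m.factorial * ((m : ℝ) + e) ^ e) := by gcongr
    _ ≤ (2 * (m : ℝ) + e + 1) * (m.factorial * (2 * (m : ℝ) + e + 1) ^ e) := by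
        have : (0 : ℝ) ≤ m := by positivity
        have h5 : ((m : ℝ) + e) ^ e ≤ (2 * (m : ℝ) + e + 1) ^ e := pow_le_pow_left₀ (by positivity) (by linarith) e
        gcongr
    _ = (2 * (m : ℝ) + e + 1) ^ (e + 1) * m.factorial := by ring
    _ ≤ ((8 * n) * (e + 1 : ℕ)) ^ (e + 1) * m.factorial := by gcongr
    _ = (8 * n : ℝ) ^ (e + 1) * ((e + 1 : ℕ) : ℝ) ^ (e + 1) * m.factorial := by rw [mul_pow]
    _ ≤ (8 * n : ℝ) ^ (e + 1) * (3 ^ (e + 1) * (e + 1).factorial) * m.factorial := by gcongr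
    _ = (24 * (n : ℝ)) ^ (e + 1) * (m.factorial * (e + 1).factorial) := by
        have : (24 * (n : ℝ)) = 8 * n * 3 := by ring
        rw [this, mul_pow (8 * (n : ℝ)) 3]; ring

lemma dimPi_rpow (r : ℝ) (hr : 0 < r) (d n : ℕ) (hd : 3 ≤ d) (hn : 1 ≤ n) :
    (n : ℝ) ^ (-r) ≤ 24 ^ r * dimPi d (2 * (d + 2) * n) ^ (-(r / (d : ℝ))) := by
  obtain ⟨h0, h1⟩ := dimPi_bound d n hd hn
  have hd' : (0 : ℝ) < d := by have : 0 < d := by omega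
                               exact_mod_cast this
  have hn' : (0 : ℝ) < n := by exact_mod_cast hn
  have h2 := Real.rpow_le_rpow_of_nonpos h0 h1 (show -(r / (d : ℝ)) ≤ 0 by have : 0 < r / d := by positivity
                                                                           linarith)
  have h3 : ((24 * (n : ℝ)) ^ d) ^ (-(r / (d : ℝ))) = (24 : ℝ) ^ (-r) * (n : ℝ) ^ (-r) := by
    rw [← Real.rpow_natCast, ← Real.rpow_mul (by positivity)]
    have : (d : ℝ) * -(r / d) = -r := by field_simp
    rw [this, Real.mul_rpow (by norm_num) hn'.le]
  rw [h3] at h2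
  calc (n : ℝ) ^ (-r) = 24 ^ r * ((24 : ℝ) ^ (-r) * (n : ℝ) ^ (-r)) := by
        rw [← mul_assoc, ← Real.rpow_add (by norm_num)]; simp
    _ ≤ _ := by gcongr

lemma sIntOn_abs_le {X : Type*} [MeasurableSpace X] (ν : SignedMeasure X) (s : Set X) (h G : X → ℝ) (hs : MeasurableSet s)
    (hG : Integrable G ν.totalVariation) (hb : ∀ y ∈ s, |h y| ≤ G y) :
    |sIntOn ν s h| ≤ ∫ y in s, G y ∂ν.totalVariation := by
  rw [SignedMeasure.totalVariation, Measure.restrict_add]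
  rw [SignedMeasure.totalVariation] at hG
  obtain ⟨h1, h2⟩ := integrable_add_measure.1 hG
  rw [integral_add_measure h1.integrableOn h2.integrableOn, sIntOn]
  refine (abs_sub _ _).trans (add_le_add ?_ ?_)
  all_goals rw [← Real.norm_eq_abs]
  · exact norm_integral_le_of_norm_le h1.integrableOn ((ae_restrict_iff' hs).2 (Filter.Eventually.of_forall hb))
  · exact norm_integral_le_of_norm_le h2.integrableOn ((ae_restrict_iff' hs).2 (Filter.Eventually.of_forall hb))

/-- splitting identity -/
lemma split_bound {d : ℕ} (ν : SignedMeasure (Sph d)) (s : Set (Sph d)) (hs : MeasurableSet s) (f P Ψ G : Sph d → ℝ)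
    (hf : Continuous f) (hP : Continuous P) (hΨ : Continuous Ψ) (hG : Continuous G) 
    (h1 : ∀ y ∈ s, |(P y - f y) * Ψ y| ≤ G y) (h2 : ∀ y ∉ s, |P y * Ψ y| ≤ G y) :
    |sInt ν (fun y => P y * Ψ y) - sIntOn ν s (fun y => f y * Ψ y)| ≤ ∫ y, G y ∂ν.totalVariation := by
  have e : sInt ν (fun y => P y * Ψ y) - sIntOn ν s (fun y => f y * Ψ y) =
      sIntOn ν s (fun y => (P y - f y) * Ψ y) + sIntOn ν sᶜ (fun y => P y * Ψ y) := by
    have q : ∀ (μ : Measure (Sph d)) [IsFiniteMeasure μ], ∫ y, P y * Ψ y ∂μ = (∫ y in s, (P y - f y) * Ψ y ∂μ) +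
        (∫ y in s, f y * Ψ y ∂μ) + ∫ y in sᶜ, P y * Ψ y ∂μ := by
      intro μ _
      rw [← integral_add_compl hs (sph_intble (by fun_prop)), ← integral_add (sph_intble (by fun_prop)) (sph_intble (by fun_prop))]
      congr 2
      ext y; ring
    rw [sInt, sIntOn, sIntOn, sIntOn, q ν.toJordanDecomposition.posPart, q ν.toJordanDecomposition.negPart]
    ring
  rw [e, ← integral_add_compl hs (sph_intble hG)]
  exact (abs_add_le _ _).trans (add_le_add (sIntOn_abs_le ν s _ _ hs (sph_intble hG) h1)
    (sIntOn_abs_le ν _ _ _ hs.compl (sph_intble hG) h2))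

lemma main_identity (r : ℝ) (hr : 0 < r) (d n : ℕ) (hd : 3 ≤ d) (h : ((d : ℝ) + r + 1) ^ 2 ≤ (n : ℝ) * d) (x : Sph d)
    (ν : SignedMeasure (Sph d)) (hQ : IsQuadrature d ((2 * (d + 2) * n : ℕ) : ℝ) ν) (P : Sph d → ℝ) (hP : IsSphPoly d r P) :
    Continuous P ∧ Continuous (fun y => PhiTilde d n r (ip x y)) ∧ sInt ν (fun y => P y * Phi d n r (ip x y)) = P x := by
  obtain ⟨hdn, hnr, hnd⟩ := basic_n r hr d n hd h
  have hd' : (3 : ℝ) ≤ d := by exact_mod_cast hd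
  have hn' : (4 : ℝ) ≤ n := by linarith
  have hn1 : 1 ≤ n := by have : (1 : ℝ) ≤ n := by linarith
                         exact_mod_cast this
  have hd2 : 2 ≤ d := by omega
  obtain ⟨M, hM⟩ : ∃ M, M + 1 = (d + 2) * n := ⟨(d + 2) * n - 1, Nat.sub_add_cancel (Nat.mul_pos (by omega) hn1)⟩
  obtain ⟨k, hk, hPS⟩ := hP.sp (stdB d)
  have hJ0 := Jf_zero_pos ((d : ℝ) / 2 + r) ((d : ℝ) / 2 - 2) (d * n) (by linarith) (by linarith)
  have hKS : SP (stdB d) M (fun y => sphK d (M + 1) (ip x y)) := SP_K _ x M hd2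
  set J0 := Jf ((d : ℝ) / 2 + r) ((d : ℝ) / 2 - 2) (d * n) 0
  have hJS : SP (stdB d) (d * n) (fun y => J0⁻¹ * Jf ((d : ℝ) / 2 + r) ((d : ℝ) / 2 - 2) (d * n) ((1 - ip x y) / 2)) := by
    have h2 := (SP_u (stdB d) x).poly (Jpoly ((d : ℝ) / 2 + r) ((d : ℝ) / 2 - 2) (d * n)) (Jpoly_natDegree _ _ _)
    simp only [Jpoly_eval] at h2
    exact (h2.const_mul _).mono (by omega)
  have hVS : SP (stdB d) n (fun y => (1 / 2 + 1 / 2 * ip x y) ^ n) :=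
    ((((SP.const (b := stdB d) (1 / 2)).mono (Nat.zero_le 1)).add ((SP_ip (stdB d) x).const_mul (1 / 2))).pow n).mono (by omega)
  have hkn : k + d * n + n ≤ M := by
    have : ((k + 1 : ℕ) : ℝ) ≤ n := by push_cast; linarith
    have h2 : k + 1 ≤ n := by exact_mod_cast this
    have h3 : (d + 2) * n = d * n + n + n := by ring
    omega
  have hS := ((hPS.mul hJS).mul hVS).mono hkn
  have hrep := reproducing d M hd2 x (stdB d) _ hS
  have hTil : ∀ y, PhiTilde d n r (ip x y) = sphK d (M + 1) (ip x y) * (J0⁻¹ * Jf ((d : ℝ) / 2 + r) ((d : ℝ) / 2 - 2) (d * n) ((1 - ip x y) / 2)) := by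
    intro y
    rw [PhiTilde, jacobi_ratio _ _ _ (by linarith) (by linarith) (by linarith), ← hM, div_eq_inv_mul]
  refine ⟨hPS.continuous, ?_, ?_⟩
  · simp only [hTil]
    exact (hKS.mul hJS).continuous
  · have e : (fun y => P y * Phi d n r (ip x y)) = fun y => P y * (J0⁻¹ * Jf ((d : ℝ) / 2 + r) ((d : ℝ) / 2 - 2) (d * n) ((1 - ip x y) / 2)) *
        (1 / 2 + 1 / 2 * ip x y) ^ n * sphK d (M + 1) (ip x y) := by
      ext y
      have : (1 + ip x y) / 2 = 1 / 2 + 1 / 2 * ip x y := by ring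
      rw [Phi, hTil, this]; ring
    have e2 : (2 * (d + 2) * n : ℕ) = M + M + 2 := by rw [mul_assoc, ← hM]; ring
    rw [hQ _ (by rw [e]; exact (hS.mul hKS).isSphPoly _ (by rw [e2]; push_cast; linarith)), e, hrep]
    simp only [ip_self]
    have e3 : (1 - 1 : ℝ) / 2 = 0 := by norm_num
    have e4 : (1 / 2 + 1 / 2 * 1 : ℝ) = 1 := by norm_num
    rw [e3, e4, one_pow, mul_one]
    change P x * (J0⁻¹ * J0) = P x
    rw [inv_mul_cancel₀ hJ0.ne', mul_one]


lemma le_supNorm {d : ℕ} (f : Sph d → ℝ) (hf : Continuous f) (y : Sph d) : |f y| ≤ supNorm f := by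
  have hb : BddAbove (Set.range fun x => |f x|) := (isCompact_range (continuous_abs.comp hf)).bddAbove
  exact le_csSup hb ⟨y, rfl⟩

/-- decay of the damping factor outside of the cap -/
lemma outside_decay (r : ℝ) (hr : 0 < r) (n u : ℝ) (hn : 4 ≤ n) (hu1 : u ≤ 1) (N : ℕ) (hN : (N : ℝ) = n)
    (hu : 16 * r * Real.log n / n ≤ 4 * u) :
    (1 - u) ^ N ≤ n ^ (-(4 * r)) ∧ 1 ≤ Real.sqrt u ^ r * (n ^ (r / 2) * ((4 * r) ^ (r / 2))⁻¹) := by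
  have hn0 : 0 < n := by linarith
  have hlog : 1 ≤ Real.log n := by
    rw [Real.le_log_iff_exp_le hn0]
    linarith [Real.exp_one_lt_three]
  have h1 : 4 * r * Real.log n ≤ u * n := by
    rw [div_le_iff₀ hn0] at hu; linarith
  have hu4 : 4 * r / n ≤ u := by
    rw [div_le_iff₀ hn0]; nlinarith
  have hu0 : 0 ≤ u := le_trans (by positivity) hu4
  constructor
  · calc (1 - u) ^ N ≤ (Real.exp (-u)) ^ N := pow_le_pow_left₀ (by linarith) (Real.one_sub_le_exp_neg u) N
      _ = Real.exp (-(u * n)) := by rw [← Real.exp_nat_mul, hN]; congr 1; ring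
      _ ≤ Real.exp (Real.log n * -(4 * r)) := Real.exp_le_exp.2 (by linarith)
      _ = n ^ (-(4 * r)) := by rw [Real.rpow_def_of_pos hn0]
  · have h2 : Real.sqrt u ^ r = u ^ (r / 2) := by
      rw [Real.sqrt_eq_rpow, ← Real.rpow_mul hu0]; congr 1; ring
    have h3 : (4 * r / n) ^ (r / 2) ≤ u ^ (r / 2) := Real.rpow_le_rpow (by positivity) hu4 (by positivity)
    rw [h2]
    rw [Real.div_rpow (by positivity) hn0.le] at h3
    have h4 : 0 < n ^ (r / 2) := by positivity
    have h5 : 0 < (4 * r) ^ (r / 2) := by positivity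
    rw [div_le_iff₀ h4] at h3
    rw [← mul_assoc, ← div_eq_mul_inv, le_div_iff₀ h5]
    linarith

/-- growth of the approximating polynomial -/
lemma P_growth (r : ℝ) (hr : 0 < r) : ∃ C : ℝ, 0 < C ∧ ∀ (d n : ℕ) (x : Sph d) (P : Sph d → ℝ) (M : ℝ), 3 ≤ d → 4 ≤ n →
    IsSphPoly d r P → 0 ≤ M → (∀ y ∈ Metric.closedBall x (Real.sqrt (16 * r * Real.log n / n)), |P y| ≤ M) →
    ∀ y, |P y| ≤ C * M * (n : ℝ) ^ r := by
  set k := ⌊r⌋₊ with hk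
  obtain ⟨C, hC, hg⟩ := growth k
  set ρ := min (16 * r) 1 with hρ
  have hρ0 : 0 < ρ := lt_min (by positivity) one_pos
  refine ⟨C * (ρ ^ k)⁻¹, by positivity, ?_⟩
  intro d n x P M hd hn hP hM hPM y
  obtain ⟨p, hp, hPe⟩ := hP
  have hn4 : (4 : ℝ) ≤ n := by exact_mod_cast hn
  have hn0 : (0 : ℝ) < n := by linarith
  have hlog : 1 ≤ Real.log n := by
    rw [Real.le_log_iff_exp_le hn0]
    linarith [Real.exp_one_lt_three]
  have hpk : p.totalDegree ≤ k := Nat.le_floor hp.le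
  set δ := Real.sqrt (16 * r * Real.log n / n) with hδ
  set a := min δ 1 with ha
  have hδ0 : 0 < δ := by
    rw [hδ]; apply Real.sqrt_pos.2; positivity
  have ha0 : 0 < a := lt_min hδ0 one_pos
  have ha2 : ρ / n ≤ a ^ 2 := by
    rcases min_choice δ 1 with h | h
    · rw [ha, h, hδ, Real.sq_sqrt (by positivity)]
      refine div_le_div_of_nonneg_right ?_ hn0.le
      calc ρ ≤ 16 * r := min_le_left _ _
        _ ≤ 16 * r * Real.log n := le_mul_of_one_le_right (by positivity) hlog
    · rw [ha, h, one_pow, div_le_one hn0]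
      exact (min_le_right _ _).trans (by linarith)
  have := hg d (by omega) p x a M hpk (by simp) ha0 (min_le_right _ _) hM (fun z hz hzx => by
    have h1 := hPM ⟨z, by simp [hz]⟩ (by
      rw [Metric.mem_closedBall, Subtype.dist_eq, dist_eq_norm]
      exact hzx.trans (min_le_left _ _))
    rwa [hPe] at h1) (y : EE d) (by simp)
  rw [hPe]
  refine this.trans ?_
  have h2 : (a ^ (2 * k))⁻¹ ≤ (ρ ^ k)⁻¹ * (n : ℝ) ^ r := by
    rw [pow_mul]
    calc ((a ^ 2) ^ k)⁻¹ ≤ ((ρ / n) ^ k)⁻¹ := by gcongr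
      _ = (ρ ^ k)⁻¹ * (n : ℝ) ^ (k : ℝ) := by rw [div_pow, inv_div, Real.rpow_natCast]; field_simp
      _ ≤ _ := by
        gcongr
        · linarith
        · exact Nat.floor_le hr.le
  calc C * M * (a ^ (2 * k))⁻¹ ≤ C * M * ((ρ ^ k)⁻¹ * (n : ℝ) ^ r) := by gcongr
    _ = _ := by ring

set_option maxHeartbeats 1600000 in
/-- Local approximation using only values of `f` on the cap `B(x, δ_n)` with
`δ_n = √(16 r log n / n)`: constant depending only on `r`. -/
theorem local_smooth_approx_cap :
    ∀ r : ℝ, 0 < r → ∃ C : ℝ, 0 < C ∧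
      ∀ (d : ℕ) (x : Sph d) (δ : ℝ) (f : Sph d → ℝ) (L : ℝ) (n : ℕ)
        (ν : SignedMeasure (Sph d)) (c : ℝ),
        3 ≤ d → 0 < δ → Continuous f → 0 ≤ L →
        (∃ P, IsSphPoly d r P ∧
          ∀ y ∈ Metric.closedBall x δ, |f y - P y| ≤ L * dist x y ^ r) →
        ((d : ℝ) + r + 1) ^ 2 ≤ (n : ℝ) * d →
        Real.sqrt (16 * r * Real.log n / n) ≤ δ →
        IsQuadrature d ((2 * (d + 2) * n : ℕ) : ℝ) ν →
        IsMZ d ((2 * (d + 2) * n : ℕ) : ℝ) ν c →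
        |f x - sIntOn ν (Metric.closedBall x (Real.sqrt (16 * r * Real.log n / n)))
              (fun y => f y * Phi d n r (ip x y))| ≤
          C * (d : ℝ) ^ ((1 : ℝ)/6) * dimPi d (2 * (d + 2) * n) ^ (-(r / (d : ℝ))) *
            (supNorm f + L) * c := by
  intro r hr
  obtain ⟨Ck, hCk, hkey⟩ := key_est r hr
  obtain ⟨Cp, hCp, hgrow⟩ := P_growth r hr
  set A : ℝ := 2 ^ r + Cp * 2 ^ r * ((4 * r) ^ (r / 2))⁻¹ with hA
  have hA0 : 0 < A := by positivity
  refine ⟨A * Ck * 24 ^ r, by positivity, ?_⟩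
  intro d x δ f L n ν c hd hδ hf hL hPex h hδn hQ hMZ
  obtain ⟨P, hP, hfP⟩ := hPex
  obtain ⟨hdn, hnr, hnd⟩ := basic_n r hr d n hd h
  have hd' : (3 : ℝ) ≤ d := by exact_mod_cast hd
  have hn' : (4 : ℝ) ≤ n := by linarith
  have hn4 : 4 ≤ n := by exact_mod_cast hn'
  have hn0 : (0 : ℝ) < n := by linarith
  have hc0 : 0 ≤ c := isMZ_nonneg ν c _ (by
    have : 0 < 2 * (d + 2) * n := by positivity
    exact_mod_cast this) hMZ
  obtain ⟨hPc, hTc, hid⟩ := main_identity r hr d n hd h x ν hQ P hP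
  have hS0 : 0 ≤ supNorm f := (abs_nonneg _).trans (le_supNorm f hf x)
  have hfx : f x = P x := by
    have := hfP x (Metric.mem_closedBall_self hδ.le)
    rw [dist_self, Real.zero_rpow hr.ne', mul_zero] at this
    have := abs_nonpos_iff.1 this
    linarith
  set δn := Real.sqrt (16 * r * Real.log n / n) with hδn'
  have hdist : ∀ y : Sph d, dist x y = 2 * Real.sqrt ((1 - ip x y) / 2) := by
    intro y
    have h1 := dist_sq_u x y
    have h2 := (ip_mem x y).1
    rw [← Real.sqrt_sq (dist_nonneg (x := x) (y := y)), h1, Real.sqrt_mul (by norm_num)]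
    congr 1
    rw [show (4 : ℝ) = 2 ^ 2 by norm_num, Real.sqrt_sq (by norm_num)]
  have hdr : ∀ y : Sph d, dist x y ^ r = 2 ^ r * Real.sqrt ((1 - ip x y) / 2) ^ r := by
    intro y; rw [hdist, Real.mul_rpow (by norm_num) (Real.sqrt_nonneg _)]
  have hsq1 : ∀ y : Sph d, Real.sqrt ((1 - ip x y) / 2) ^ r ≤ 1 := by
    intro y
    exact Real.rpow_le_one (Real.sqrt_nonneg _) (Real.sqrt_le_one.2 (ip_mem x y).2) hr.le
  have hin : ∀ y ∈ Metric.closedBall x δn, |f y - P y| ≤ L * (2 ^ r * Real.sqrt ((1 - ip x y) / 2) ^ r) := by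
    intro y hy
    have := hfP y (Metric.closedBall_subset_closedBall hδn hy)
    rwa [hdr] at this
  have h2r : (1 : ℝ) ≤ 2 ^ r := Real.one_le_rpow (by norm_num) hr.le
  have hPin : ∀ y ∈ Metric.closedBall x δn, |P y| ≤ 2 ^ r * (supNorm f + L) := by
    intro y hy
    have h1 := hin y hy
    have h2 := le_supNorm f hf y
    have h3 : |P y| ≤ |f y| + |f y - P y| := by
      have := abs_sub (f y) (f y - P y)
      simpa using this
    have h4 : L * (2 ^ r * Real.sqrt ((1 - ip x y) / 2) ^ r) ≤ L * (2 ^ r * 1) := by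
      have := hsq1 y
      gcongr
    nlinarith
  have hPall := hgrow d n x P (2 ^ r * (supNorm f + L)) hd hn4 hP (by positivity) hPin
  have hV : ∀ y, ((1 + ip x y) / 2) = 1 - (1 - ip x y) / 2 := fun y => by ring
  have hΨc : Continuous fun y => Phi d n r (ip x y) := by
    have := ip_continuous x
    unfold Phi
    fun_prop
  have hUc : Continuous fun y => Real.sqrt ((1 - ip x y) / 2) ^ r := by
    have := ip_continuous x
    exact (Real.continuous_sqrt.comp (by fun_prop)).rpow_const fun _ => Or.inr hr.le
  have hb := split_bound ν (Metric.closedBall x δn) Metric.isClosed_closedBall.measurableSet f P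
    (fun y => Phi d n r (ip x y))
    (fun y => (A * (supNorm f + L)) * (Real.sqrt ((1 - ip x y) / 2) ^ r * |PhiTilde d n r (ip x y)|)) hf hPc hΨc
    (by fun_prop) ?_ ?_
  · rw [hid, ← hfx, integral_const_mul] at hb
    refine hb.trans ?_
    have hk := hkey d n x ν c hd h hMZ
    have hdim := dimPi_rpow r hr d n hd (by omega)
    have hd6 : (1 : ℝ) ≤ (d : ℝ) ^ ((1 : ℝ) / 6) := Real.one_le_rpow (by linarith) (by norm_num)
    have hD0 : 0 ≤ dimPi d (2 * (d + 2) * n) ^ (-(r / (d : ℝ))) :=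
      Real.rpow_nonneg (dimPi_bound d n hd (by omega)).1.le _
    set D := dimPi d (2 * (d + 2) * n) ^ (-(r / (d : ℝ)))
    calc A * (supNorm f + L) * ∫ y, Real.sqrt ((1 - ip x y) / 2) ^ r * |PhiTilde d n r (ip x y)| ∂ν.totalVariation
        ≤ A * (supNorm f + L) * (Ck * c * (24 ^ r * D)) := by
          refine mul_le_mul_of_nonneg_left (hk.trans ?_) (by positivity)
          gcongr
      _ = (A * Ck * 24 ^ r) * 1 * D * (supNorm f + L) * c := by ring
      _ ≤ (A * Ck * 24 ^ r) * (d : ℝ) ^ ((1 : ℝ) / 6) * D * (supNorm f + L) * c := by gcongr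
  · intro y hy
    have h1 := hin y hy
    have hu := ip_mem x y
    have h2 : ((1 + ip x y) / 2) ^ n ≤ 1 := by
      rw [hV]; exact pow_le_one₀ (by linarith [hu.2]) (by linarith [hu.1])
    have h3 : 0 ≤ ((1 + ip x y) / 2) ^ n := by
      rw [hV]; exact pow_nonneg (by linarith [hu.2]) n
    rw [abs_mul, Phi, abs_mul, abs_of_nonneg h3, abs_sub_comm]
    calc |f y - P y| * (|PhiTilde d n r (ip x y)| * ((1 + ip x y) / 2) ^ n)
        ≤ L * (2 ^ r * Real.sqrt ((1 - ip x y) / 2) ^ r) * (|PhiTilde d n r (ip x y)| * 1) := by gcongr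
      _ = (2 ^ r * L) * (Real.sqrt ((1 - ip x y) / 2) ^ r * |PhiTilde d n r (ip x y)|) := by ring
      _ ≤ _ := by
        have h5 : 2 ^ r ≤ A := by rw [hA]; exact le_add_of_nonneg_right (by positivity)
        refine mul_le_mul_of_nonneg_right ?_ (by positivity)
        exact mul_le_mul h5 (by linarith) hL hA0.le
  · intro y hy
    have hu := ip_mem x y
    have hd4 : 16 * r * Real.log n / n ≤ 4 * ((1 - ip x y) / 2) := by
      rw [← dist_sq_u]
      rw [Metric.mem_closedBall, not_le, dist_comm] at hy
      exact (Real.sqrt_le_left dist_nonneg).1 hy.le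
    obtain ⟨q1, q2⟩ := outside_decay r hr n _ hn' hu.2 n rfl hd4
    have h3 : 0 ≤ ((1 + ip x y) / 2) ^ n := by
      rw [hV]; exact pow_nonneg (by linarith [hu.2]) n
    rw [abs_mul, Phi, abs_mul, abs_of_nonneg h3]
    rw [← hV] at q1
    have hpw : (n : ℝ) ^ r * (n : ℝ) ^ (-(4 * r)) * (n : ℝ) ^ (r / 2) ≤ 1 := by
      rw [← Real.rpow_add hn0, ← Real.rpow_add hn0]
      exact Real.rpow_le_one_of_one_le_of_nonpos (by linarith) (by linarith)
    set W := Real.sqrt ((1 - ip x y) / 2) ^ r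
    have hW : 0 ≤ W := by positivity
    set T := |PhiTilde d n r (ip x y)|
    have hT : 0 ≤ T := abs_nonneg _
    set B := ((4 * r) ^ (r / 2))⁻¹ with hB
    have hB0 : 0 ≤ B := by positivity
    calc |P y| * (T * ((1 + ip x y) / 2) ^ n)
        ≤ (Cp * (2 ^ r * (supNorm f + L)) * (n : ℝ) ^ r) * (T * (n : ℝ) ^ (-(4 * r))) := by
          gcongr
          exact hPall y
      _ ≤ (Cp * (2 ^ r * (supNorm f + L)) * (n : ℝ) ^ r) * (T * (n : ℝ) ^ (-(4 * r))) * (W * ((n : ℝ) ^ (r / 2) * B)) :=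
          le_mul_of_one_le_right (by positivity) q2
      _ = (Cp * 2 ^ r * B * (supNorm f + L)) * (W * T) * ((n : ℝ) ^ r * (n : ℝ) ^ (-(4 * r)) * (n : ℝ) ^ (r / 2)) := by ring
      _ ≤ (Cp * 2 ^ r * B * (supNorm f + L)) * (W * T) * 1 := by gcongr
      _ ≤ _ := by
        rw [mul_one]
        refine mul_le_mul_of_nonneg_right ?_ (by positivity)
        refine mul_le_mul_of_nonneg_right ?_ (by positivity)
        rw [hA]
        exact le_add_of_nonneg_left (by positivity)

end
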